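/- arXiv:2204.04759 — 2 statements merged into one kernel-verified Lean document; each statement's English description precedes it below -/
import Mathlib

section
/- Let w ∈ F_k be a nontrivial word with canonical reduced form w = x_{k_r}^{ε_r}⋯x_{k_1}^{ε_1} such that k_1 ≠ k_r, and write w = Ω^d where d ≥ 1 and Ω is not a proper power. For each n, let σ_{1,n}, …, σ_{k,n} be independent random permutations of {1,…,n}, each with conjugation-invariant distribution, and assume that for every j ∈ {1,…,k}, every p ≥ 1 and all c_1,…,c_p ∈ ℕ* with c_1+⋯+c_p ≤ r_j := card{i : k_i = j}, one has limsup_{n→∞} E(∏_{i=1}^p #_{c_i}(σ_{j,n})) < ∞. Then E(#_1(w(σ_{1,n},…,σ_{k,n}))) converges, as n → ∞, to ψ(d), the number of positive divisors of d. -/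
/-!
The fixed points of `w(σ_1, …, σ_k)` are the closed trajectories `f : ℤ/r → {1, …, n}` that spell
the cyclic word `w` (`card_fixed_eq`). They are grouped by their equality pattern, the setoid
`s = ker f` on `ℤ/r`. A pattern turns the cyclic graph of `w` into a quotient graph with `v`
vertices and, for each generator `j`, `e_j` edges of color `j`; put `e = ∑ e_j`. The trajectories
with pattern `s` are the embeddings of this graph into the functional graph of `σ`; there are none
unless `s` is folded, that is, unless each letter acts on the quotient as a partial injection.

By independence and conjugation invariance, the expected number of trajectories with a folded
pattern `s` is `(n)_v * ∏_j (E_j / (n)_v)`, where `E_j` is the expected number of copies in `σ_j` of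
the partial injection of color `j` (`expect_ker`). An embedding is determined by one image for each
path, and one point on a cycle of `σ_j` of the right length for each closed cycle of color `j`.
Hence the moment hypothesis gives `E_j = O(n ^ (v - e_j))` (`expEmbs_bound`), and
`E_j ~ n ^ (v - e_j)` if color `j` has no closed cycle (`expEmbs_tendsto_one`). The contribution of
`s` is thus `O(n ^ (v - e))`.

Since `w` is cyclically reduced, all degrees of the quotient graph are at least two, so `v ≤ e` by
the handshake lemma (`card_le_nEdges`). Equality forces every degree to be two, hence two visits to
a vertex continue along the same edge, and `s` is congruence modulo a subgroup of the group of
periods of the cyclic word (`tight_iff`); the other possibility, a reflection, would make some letter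
cancel against itself or its neighbour (`no_flip`). Such a pattern has no monochromatic closed cycle
because `w` uses two generators (`fullCycles_eq_empty`), so its contribution tends to one, while the
other patterns contribute zero in the limit (`expect_tendsto`).

The limit is therefore the number of subgroups of the group of periods. For `w = Ω ^ d` with `Ω` not
a proper power this group is cyclic of order `d` (`card_periods`), and it has one subgroup for each
divisor of `d` (`card_subgroups`).
-/

open Filter

noncomputable section

/-- Length of the cycle of `σ` containing the point `x`. -/
def cycLen {n : ℕ} (σ : Equiv.Perm (Fin n)) (x : Fin n) : ℕ :=
  Function.minimalPeriod σ x

/-- `#_ℓ(σ)`: the number of cycles of length `ℓ` of `σ`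
(fixed points counting as cycles of length 1). -/
def cycCount {n : ℕ} (σ : Equiv.Perm (Fin n)) (ℓ : ℕ) : ℕ :=
  (Finset.univ.filter fun x => cycLen σ x = ℓ).card / ℓ

/-! ### Cycles of permutations, and an upper bound for embeddings of a partial injection -/

open Function in
theorem minimalPeriod_pos' {α : Type*} [Finite α] (σ : Equiv.Perm α) (x : α) :
    0 < minimalPeriod σ x :=
  minimalPeriod_pos_of_mem_periodicPts (σ.injective.mem_periodicPts x)

section
open scoped Classical

theorem card_sameCycle {α : Type*} [Fintype α] (σ : Equiv.Perm α) (x : α)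
    [DecidablePred (σ.SameCycle x)] :
    (Finset.univ.filter fun y => σ.SameCycle x y).card = Function.minimalPeriod σ x := by
  have h : (Finset.univ.filter fun y => σ.SameCycle x y)
      = (Finset.range (Function.minimalPeriod σ x)).image (fun i => σ^[i] x) := by
    ext y
    simp only [Finset.mem_filter, Finset.mem_univ, true_and, Finset.mem_image, Finset.mem_range]
    constructor
    · intro h
      obtain ⟨i, hi⟩ := h.exists_nat_pow_eq
      refine ⟨i % Function.minimalPeriod σ x, Nat.mod_lt _ (minimalPeriod_pos' σ x), ?_⟩
      rw [Function.iterate_mod_minimalPeriod_eq, Equiv.Perm.iterate_eq_pow, hi]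
    · rintro ⟨i, -, rfl⟩
      exact ⟨i, by simp [Equiv.Perm.iterate_eq_pow]⟩
  rw [h, Finset.card_image_of_injOn, Finset.card_range]
  intro i hi j hj hij
  exact Function.iterate_injOn_Iio_minimalPeriod (by simpa using hi) (by simpa using hj) hij

theorem minimalPeriod_sameCycle {α : Type*} [Finite α] {σ : Equiv.Perm α} {x y : α}
    (h : σ.SameCycle x y) : Function.minimalPeriod σ y = Function.minimalPeriod σ x := by
  obtain ⟨i, hi⟩ := h.exists_nat_pow_eq
  rw [← hi, ← Equiv.Perm.iterate_eq_pow,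
    Function.minimalPeriod_apply_iterate (σ.injective.mem_periodicPts x)]

/-- The points lying on cycles of length `ℓ` split into classes of size `ℓ`, so the truncating
division in `cycCount` is exact. -/
theorem card_cycLen_eq {n : ℕ} (σ : Equiv.Perm (Fin n)) (ℓ : ℕ) :
    (Finset.univ.filter fun x => cycLen σ x = ℓ).card = ℓ * cycCount σ ℓ := by
  have hdvd : ℓ ∣ (Finset.univ.filter fun x => cycLen σ x = ℓ).card := by
    rw [Finset.card_eq_sum_card_image (fun x => Finset.univ.filter fun y => σ.SameCycle x y)]
    apply Finset.dvd_sum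
    intro s hs
    simp only [Finset.mem_image, Finset.mem_filter, Finset.mem_univ, true_and] at hs
    obtain ⟨x, hx, rfl⟩ := hs
    have : ({a ∈ {x | cycLen σ x = ℓ} | (Finset.univ.filter fun y => σ.SameCycle a y)
        = Finset.univ.filter fun y => σ.SameCycle x y} : Finset (Fin n))
        = Finset.univ.filter fun y => σ.SameCycle x y := by
      ext a
      simp only [Finset.mem_filter, Finset.mem_univ, true_and]
      constructor
      · rintro ⟨-, h⟩
        have : a ∈ (Finset.univ.filter fun y => σ.SameCycle a y) := by
          simp [Equiv.Perm.SameCycle.refl]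
        rw [h] at this
        simpa using this
      · intro h
        refine ⟨(minimalPeriod_sameCycle h).trans hx, ?_⟩
        ext y
        simp only [Finset.mem_filter, Finset.mem_univ, true_and]
        exact ⟨fun h' => h.trans h', fun h' => h.symm.trans h'⟩
    rw [this, card_sameCycle]
    exact (show cycLen σ x = ℓ from hx) ▸ dvd_rfl
  unfold cycCount
  rw [Nat.mul_div_cancel' hdvd]

/-- The injective maps `f : V → Fin n` that carry the partial injection `π|_D` of `V` into `σ`. -/
def embs {V : Type*} [Fintype V] (π : Equiv.Perm V) (D : Finset V) {n : ℕ}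
    (σ : Equiv.Perm (Fin n)) : Finset (V → Fin n) :=
  Finset.univ.filter fun f => Function.Injective f ∧ ∀ a ∈ D, f (π a) = σ (f a)

/-- The cycles of `π` that lie entirely inside `D`. -/
def fullCycles {V : Type*} [Fintype V] (π : Equiv.Perm V) (D : Finset V) :
    Finset (Quotient (Equiv.Perm.SameCycle.setoid π)) :=
  Finset.univ.filter fun q => ∀ a, Quotient.mk _ a = q → a ∈ D

/-- Length of a cycle of `π`. -/
def qlen {V : Type*} (π : Equiv.Perm V)
    (q : Quotient (Equiv.Perm.SameCycle.setoid π)) : ℕ := Function.minimalPeriod π q.out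

/-- Distinct cycles inside `D` are disjoint; this makes the sum of their lengths admissible in the
moment hypothesis. -/
theorem sum_qlen_le {V : Type*} [Fintype V] (π : Equiv.Perm V) (D : Finset V) :
    ∑ q ∈ fullCycles π D, qlen π q ≤ D.card := by
  have : ∀ q ∈ fullCycles π D, qlen π q
      = (D.filter fun a => Quotient.mk (Equiv.Perm.SameCycle.setoid π) a = q).card := by
    intro q hq
    rw [qlen, ← card_sameCycle]
    congr 1
    ext a
    simp only [fullCycles, Finset.mem_filter, Finset.mem_univ, true_and] at hq ⊢
    have key : π.SameCycle q.out a ↔ Quotient.mk (Equiv.Perm.SameCycle.setoid π) a = q := by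
      constructor
      · intro h
        rw [← Quotient.out_eq q]
        exact Quotient.sound (Equiv.Perm.SameCycle.symm h)
      · rintro rfl
        exact Quotient.mk_out (s := Equiv.Perm.SameCycle.setoid π) a
    rw [key]
    exact ⟨fun h => ⟨hq a h, h⟩, fun h => h.2⟩
  rw [Finset.sum_congr rfl this]
  rw [← Finset.card_biUnion]
  · apply Finset.card_le_card
    intro a
    simp only [Finset.mem_biUnion, Finset.mem_filter]
    rintro ⟨q, -, h, -⟩
    exact h
  · intro q _ q' _ hne
    simp only [Function.onFun]
    rw [Finset.disjoint_left]
    intro a ha ha'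
    simp only [Finset.mem_filter] at ha ha'
    exact hne (ha.2.symm.trans ha'.2)

theorem equivariant_iterate {V : Type*} {π : Equiv.Perm V} {n : ℕ} {σ : Equiv.Perm (Fin n)}
    {f : V → Fin n} {x : V} (h : ∀ y, π.SameCycle x y → f (π y) = σ (f y)) (i : ℕ) :
    f (π^[i] x) = σ^[i] (f x) := by
  induction i with
  | zero => rfl
  | succ i ih =>
    rw [Function.iterate_succ_apply', Function.iterate_succ_apply', ← ih, h]
    exact ⟨i, by simp [Equiv.Perm.iterate_eq_pow]⟩

/-- Such an `f` is determined by its values at the successors of the points outside `D` (the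
starting points of the maximal paths), and at one point of each cycle inside `D`. -/
theorem card_embs_le {V : Type*} [Fintype V] (π : Equiv.Perm V) (D : Finset V) {n : ℕ}
    (σ : Equiv.Perm (Fin n)) :
    (embs π D σ).card ≤ n ^ Dᶜ.card * ∏ q ∈ fullCycles π D, (qlen π q * cycCount σ (qlen π q)) := by
  let T : Finset ((↥(Dᶜ) → Fin n) × (∀ _ : fullCycles π D, Fin n)) :=
    Finset.univ ×ˢ Fintype.piFinset fun q : fullCycles π D =>
      Finset.univ.filter fun x => cycLen σ x = qlen π q.1
  have hT : T.card = n ^ Dᶜ.card * ∏ q ∈ fullCycles π D, (qlen π q * cycCount σ (qlen π q)) := by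
    rw [Finset.card_product, Fintype.card_piFinset, Finset.card_univ, Fintype.card_fun,
      Fintype.card_coe, Fintype.card_fin]
    congr 1
    rw [← Finset.prod_coe_sort (fullCycles π D)]
    exact Finset.prod_congr rfl fun q _ => card_cycLen_eq σ (qlen π q.1)
  rw [← hT]
  have hD : ∀ q ∈ fullCycles π D, ∀ y, π.SameCycle q.out y → y ∈ D := by
    intro q hq y hy
    simp only [fullCycles, Finset.mem_filter, Finset.mem_univ, true_and] at hq
    apply hq
    rw [← Quotient.out_eq q]
    exact Quotient.sound (Equiv.Perm.SameCycle.symm hy)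
  apply Finset.card_le_card_of_injOn
    (fun f => (fun a => f (π a.1), fun q => f q.1.out))
  · intro f hf
    simp only [embs, Finset.coe_filter, Finset.mem_univ, true_and, Set.mem_ofPred_eq] at hf
    simp only [T, Finset.coe_product, Set.mem_prod, Finset.coe_univ, Set.mem_univ, true_and,
      Finset.mem_coe, Fintype.mem_piFinset, Finset.mem_filter, Finset.mem_univ]
    intro q
    have hit := equivariant_iterate (f := f) (σ := σ) (π := π) (x := q.1.out)
      fun y hy => hf.2 y (hD q.1 q.2 y hy)
    apply Nat.dvd_antisymm
    · apply Function.IsPeriodicPt.minimalPeriod_dvd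
      rw [Function.IsPeriodicPt, Function.IsFixedPt, ← hit]
      congr 1
      exact Function.iterate_minimalPeriod
    · apply Function.IsPeriodicPt.minimalPeriod_dvd
      rw [Function.IsPeriodicPt, Function.IsFixedPt]
      apply hf.1
      rw [hit]
      exact Function.iterate_minimalPeriod
  · intro f hf f' hf' hff
    simp only [embs, Finset.coe_filter, Finset.mem_univ, true_and, Set.mem_ofPred_eq] at hf hf'
    simp only [Prod.mk.injEq] at hff
    obtain ⟨h1, h2⟩ := hff
    -- Walking forward from a point outside `D`: whenever the walk leaves `D` again, the value after
    -- it is prescribed by the data.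
    have hpath : ∀ k : ℕ, ∀ a, a ∉ D → f (π^[k+1] a) = f' (π^[k+1] a) := by
      intro k a ha
      induction k with
      | zero => exact congrFun h1 ⟨a, by simpa using ha⟩
      | succ k ih =>
        rw [Function.iterate_succ_apply']
        by_cases hb : π^[k+1] a ∈ D
        · rw [hf.2 _ hb, hf'.2 _ hb, ih]
        · exact congrFun h1 ⟨π^[k+1] a, by simpa using hb⟩
    ext b : 1
    by_cases hq : (Quotient.mk (Equiv.Perm.SameCycle.setoid π) b) ∈ fullCycles π D
    · have hs : π.SameCycle (Quotient.mk (Equiv.Perm.SameCycle.setoid π) b).out b :=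
        Quotient.mk_out (s := Equiv.Perm.SameCycle.setoid π) b
      obtain ⟨i, hi⟩ := hs.exists_nat_pow_eq
      rw [← hi, ← Equiv.Perm.iterate_eq_pow,
        equivariant_iterate (f := f) (σ := σ) fun y hy => hf.2 y (hD _ hq y hy),
        equivariant_iterate (f := f') (σ := σ) fun y hy => hf'.2 y (hD _ hq y hy)]
      congr 1
      exact congrFun h2 ⟨_, hq⟩
    · simp only [fullCycles, Finset.mem_filter, Finset.mem_univ, true_and, not_forall] at hq
      obtain ⟨a, hab, ha⟩ := hq
      have hs : π.SameCycle a b := Quotient.exact hab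
      obtain ⟨i, h0, -, hi⟩ := hs.exists_pow_eq''
      obtain ⟨k, rfl⟩ : ∃ k, i = k + 1 := ⟨i - 1, by omega⟩
      rw [← hi, ← Equiv.Perm.iterate_eq_pow]
      exact hpath k a ha

end

/-! ### A lower bound for embeddings of a partial injection without closed cycles -/

section
open scoped Classical

/-- Double counting over the value of the coordinate `i`: if, whatever the other coordinates, at most
`B` values of the coordinate `i` satisfy `P`, then at most a fraction `B / n` of all maps does. -/
theorem card_filter_le_of_update {ι : Type*} [Fintype ι] [DecidableEq ι] {n : ℕ} (i : ι)
    (P : (ι → Fin n) → Prop) [DecidablePred P] (B : ℕ)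
    (hB : ∀ g : ι → Fin n, (Finset.univ.filter fun x => P (Function.update g i x)).card ≤ B) :
    n * (Finset.univ.filter P).card ≤ B * n ^ Fintype.card ι := by
  have h := Finset.card_mul_le_card_mul
    (s := (Finset.univ : Finset (Fin n)) ×ˢ (Finset.univ.filter P))
    (t := (Finset.univ : Finset (ι → Fin n))) (m := 1) (n := B)
    (fun a g => Function.update a.2 i a.1 = g) ?_ ?_
  · rw [mul_one, Finset.card_product, Finset.card_univ, Finset.card_univ, Fintype.card_fun,
      Fintype.card_fin, mul_comm _ B] at h
    exact h
  · rintro a -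
    rw [Nat.succ_le_iff, Finset.card_pos]
    exact ⟨Function.update a.2 i a.1, by simp [Finset.bipartiteAbove]⟩
  · rintro g -
    refine le_trans ?_ (hB g)
    apply Finset.card_le_card_of_injOn (fun a => a.2 i)
    · rintro ⟨x, g'⟩ ha
      simp only [Finset.bipartiteBelow, Finset.coe_filter, Finset.mem_product, Finset.mem_univ,
        true_and, Finset.mem_filter, Set.mem_ofPred_eq] at ha ⊢
      rw [← ha.2]
      simpa using ha.1
    · rintro ⟨x, g1⟩ h1 ⟨y, g2⟩ h2 h12
      simp only [Finset.bipartiteBelow, Finset.coe_filter, Finset.mem_product, Finset.mem_univ,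
        true_and, Finset.mem_filter, Set.mem_ofPred_eq] at h1 h2 h12
      have hx : x = g i := by rw [← h1.2]; simp
      have hy : y = g i := by rw [← h2.2]; simp
      refine Prod.ext (hx.trans hy.symm) ?_
      funext j
      by_cases hj : j = i
      · rw [hj]; exact h12
      · have a1 := congrFun h1.2 j
        have a2 := congrFun h2.2 j
        simp only [Function.update_of_ne hj] at a1 a2
        exact a1.trans a2.symm

/-- The number of points of `σ` on cycles of length at most `m`. -/
theorem card_short {n : ℕ} (σ : Equiv.Perm (Fin n)) (m : ℕ) :
    (Finset.univ.filter fun x => cycLen σ x ≤ m).card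
      = ∑ c ∈ Finset.Icc 1 m, c * cycCount σ c := by
  rw [Finset.card_eq_sum_card_fiberwise (f := cycLen σ) (t := Finset.Icc 1 m)]
  · refine Finset.sum_congr rfl fun c hc => ?_
    rw [← card_cycLen_eq]
    congr 1
    ext x
    simp only [Finset.mem_filter, Finset.mem_univ, true_and, Finset.mem_Icc] at hc ⊢
    omega
  · intro x hx
    simp only [Finset.coe_filter, Finset.mem_univ, true_and, Set.mem_ofPred_eq, Finset.coe_Icc,
      Set.mem_Icc] at hx ⊢
    exact ⟨minimalPeriod_pos' σ x, hx⟩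

/-- When no cycle of `π` lies inside `D`, every map `Dᶜ → Fin n` extends uniquely to a map
compatible with `σ`.  The extension fails to be injective only if two of its values collide;
for values on distinct paths this fixes one coordinate, and for values on the same path it puts a
coordinate on a cycle of `σ` of length at most `|D|`. -/
theorem le_card_embs {V : Type*} [Fintype V] (π : Equiv.Perm V) (D : Finset V)
    (hD : fullCycles π D = ∅) {n : ℕ} (σ : Equiv.Perm (Fin n)) :
    n * n ^ Dᶜ.card ≤ n * (embs π D σ).card + Fintype.card V ^ 2 *
      ((1 + ∑ c ∈ Finset.Icc 1 D.card, c * cycCount σ c) * n ^ Dᶜ.card) := by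
  have hex : ∀ b, ∃ k, π.symm^[k+1] b ∉ D := by
    intro b
    have hq : (Quotient.mk (Equiv.Perm.SameCycle.setoid π) b) ∉ fullCycles π D := by simp [hD]
    simp only [fullCycles, Finset.mem_filter, Finset.mem_univ, true_and, not_forall] at hq
    obtain ⟨a, hab, ha⟩ := hq
    have hs : π.SameCycle a b := Quotient.exact hab
    obtain ⟨i, h0, -, hi⟩ := hs.exists_pow_eq''
    obtain ⟨k, rfl⟩ : ∃ k, i = k + 1 := ⟨i - 1, by omega⟩
    refine ⟨k, ?_⟩
    rw [← hi, ← Equiv.Perm.iterate_eq_pow,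
      (Function.LeftInverse.iterate (π.symm_apply_apply) (k+1)) a]
    exact ha
  -- `h b + 1` is the least positive number of backward steps along `π` from `b` that leaves `D`;
  -- `h b` is the position of `b` on its path.
  obtain ⟨h, hspec, hmin⟩ : ∃ h : V → ℕ, (∀ b, π.symm^[h b + 1] b ∉ D) ∧
      ∀ b i, i < h b → π.symm^[i + 1] b ∈ D :=
    ⟨fun b => Nat.find (hex b), fun b => Nat.find_spec (hex b), fun b i hi => by
      simpa only [not_not] using Nat.find_min (hex b) hi⟩
  have huniq : ∀ b m, π.symm^[m + 1] b ∉ D → (∀ i < m, π.symm^[i + 1] b ∈ D) → h b = m := by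
    intro b m h1 h2
    rcases lt_trichotomy (h b) m with hlt | heq | hlt
    · exact absurd (h2 _ hlt) (hspec b)
    · exact heq
    · exact absurd (hmin b m hlt) h1
  -- `ρ b ∉ D` is the point just before the start of the path through `b`; it names this path.
  obtain ⟨ρ, hρdef⟩ : ∃ ρ : V → ↥(Dᶜ), ∀ b, (ρ b : V) = π.symm^[h b + 1] b :=
    ⟨fun b => ⟨π.symm^[h b + 1] b, by simpa using hspec b⟩, fun b => rfl⟩
  have hstep : ∀ a ∈ D, h (π a) = h a + 1 := by
    intro a ha
    have e : ∀ m, π.symm^[m + 1] (π a) = π.symm^[m] a := fun m => by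
      rw [Function.iterate_succ_apply, π.symm_apply_apply]
    refine huniq _ _ (by rw [e]; exact hspec a) ?_
    intro m hm
    rw [e]
    cases m with
    | zero => exact ha
    | succ m => exact hmin a m (by omega)
  have hρstep : ∀ a ∈ D, ρ (π a) = ρ a := by
    intro a ha
    apply Subtype.ext
    rw [hρdef, hρdef, hstep a ha, Function.iterate_succ_apply, π.symm_apply_apply]
  have hback : ∀ b, π^[h b + 1] (ρ b : V) = b := by
    intro b
    rw [hρdef]
    exact Function.LeftInverse.iterate (π.apply_symm_apply) (h b + 1) b
  have hle : ∀ b, h b ≤ D.card := by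
    intro b
    rw [← Finset.card_range (h b)]
    apply Finset.card_le_card_of_injOn (fun i => π.symm^[i+1] b)
    · intro i hi
      exact hmin b i (by simpa using hi)
    · have key : ∀ i j, i < j → j < h b → π.symm^[i+1] b ≠ π.symm^[j+1] b := by
        intro i j hij hj heq
        apply hspec b
        have e1 : π.symm^[h b + 1] b = π.symm^[h b - j] (π.symm^[j+1] b) := by
          rw [← Function.iterate_add_apply, show h b - j + (j + 1) = h b + 1 by omega]
        rw [e1, ← heq, ← Function.iterate_add_apply,
          show h b - j + (i + 1) = (h b - j + i) + 1 by omega]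
        exact hmin b (h b - j + i) (by omega)
      intro i hi j hj heq
      simp only [Finset.coe_range, Set.mem_Iio] at hi hj
      rcases lt_trichotomy i j with hlt | rfl | hlt
      · exact absurd heq (key i j hlt hj)
      · rfl
      · exact absurd heq.symm (key j i hlt hi)
  -- `g` prescribes the image of the first point of each path, and `T g` follows `σ` from there.
  obtain ⟨T, hT⟩ : ∃ T : (↥(Dᶜ) → Fin n) → V → Fin n, ∀ g b, T g b = σ^[h b] (g (ρ b)) :=
    ⟨fun g b => σ^[h b] (g (ρ b)), fun _ _ => rfl⟩
  have hTcomp : ∀ g, ∀ a ∈ D, T g (π a) = σ (T g a) := by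
    intro g a ha
    rw [hT, hT, hstep a ha, hρstep a ha, Function.iterate_succ_apply']
  have hTinj : Function.Injective T := by
    intro g g' hg
    funext a
    have ha : (a : V) ∉ D := Finset.mem_compl.1 a.2
    have h0 : h (π a) = 0 := huniq _ _ (by simpa using ha) (by simp)
    have hρ : ρ (π a) = a := by
      apply Subtype.ext
      rw [hρdef, h0]; simp
    have := congrFun hg (π a)
    simp only [hT] at this
    rw [h0, hρ] at this
    simpa using this
  set B := 1 + ∑ c ∈ Finset.Icc 1 D.card, c * cycCount σ c with hB
  -- For given `a ≠ b`, few `g` make the values of `T g` at `a` and `b` collide.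
  have hcoll : ∀ a b, a ≠ b →
      n * (Finset.univ.filter fun g => T g a = T g b).card ≤ B * n ^ Dᶜ.card := by
    intro a b hab
    suffices hs : ∀ g : ↥(Dᶜ) → Fin n, (Finset.univ.filter fun x =>
        T (Function.update g (ρ a) x) a = T (Function.update g (ρ a) x) b).card ≤ B by
      have := card_filter_le_of_update (ρ a) (fun g => T g a = T g b) B hs
      rwa [Fintype.card_coe] at this
    intro g
    -- On the same path, a collision gives `x` the period `|h b - h a| ≤ |D|` under `σ`.
    by_cases hρ : ρ b = ρ a
    · have hcase : ∀ a b, ρ b = ρ a → h a < h b → ∀ x : Fin n, σ^[h a] x = σ^[h b] x →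
          cycLen σ x ≤ D.card := by
        intro a b _ hlt x hx
        refine le_trans (Function.IsPeriodicPt.minimalPeriod_le (n := h b - h a) (by omega) ?_)
          (le_trans (Nat.sub_le _ _) (hle b))
        rw [Function.IsPeriodicPt, Function.IsFixedPt]
        apply σ.injective.iterate (h a)
        rw [← Function.iterate_add_apply, hx]
        congr 2; omega
      have hne : h a ≠ h b := by
        intro he
        apply hab
        rw [← hback a, ← hback b, hρ, he]
      refine le_trans (Finset.card_le_card (t := Finset.univ.filter
        fun x => cycLen σ x ≤ D.card) ?_) (by rw [card_short]; omega)
      intro x hx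
      simp only [hT, Finset.mem_filter, Finset.mem_univ, true_and, hρ,
        Function.update_self] at hx ⊢
      rcases lt_or_gt_of_ne hne with hlt | hlt
      · exact hcase a b hρ hlt x hx
      · exact hcase b a hρ.symm hlt x hx.symm
    · refine le_trans (Finset.card_le_one.2 ?_) (Nat.le_add_right 1 _)
      intro x hx y hy
      simp only [hT, Finset.mem_filter, Finset.mem_univ, true_and, Function.update_self,
        Function.update_of_ne hρ] at hx hy
      exact σ.injective.iterate (h a) (hx.trans hy.symm)
  have hcover : (Finset.univ : Finset (↥(Dᶜ) → Fin n)) ⊆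
      (Finset.univ.filter fun g => Function.Injective (T g)) ∪
      ((Finset.univ : Finset (V × V)).filter fun p => p.1 ≠ p.2).biUnion
        fun p => Finset.univ.filter fun g => T g p.1 = T g p.2 := by
    intro g _
    simp only [Finset.mem_union, Finset.mem_filter, Finset.mem_univ, true_and, Finset.mem_biUnion]
    by_cases hg : Function.Injective (T g)
    · exact Or.inl hg
    · right
      simp only [Function.Injective, not_forall] at hg
      obtain ⟨a, b, h1, h2⟩ := hg
      exact ⟨(a, b), h2, h1⟩
  have hgood : (Finset.univ.filter fun g => Function.Injective (T g)).card
      ≤ (embs π D σ).card := by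
    apply Finset.card_le_card_of_injOn T
    · intro g hg
      simp only [Finset.coe_filter, Finset.mem_univ, true_and, Set.mem_ofPred_eq] at hg
      simp only [embs, Finset.coe_filter, Finset.mem_univ, true_and, Set.mem_ofPred_eq]
      exact ⟨hg, hTcomp g⟩
    · exact hTinj.injOn
  calc n * n ^ Dᶜ.card = n * (Finset.univ : Finset (↥(Dᶜ) → Fin n)).card := by
        rw [Finset.card_univ, Fintype.card_fun, Fintype.card_coe, Fintype.card_fin]
    _ ≤ n * ((embs π D σ).card + ∑ p ∈ (Finset.univ : Finset (V × V)).filter fun p => p.1 ≠ p.2,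
          (Finset.univ.filter fun g => T g p.1 = T g p.2).card) := by
        gcongr
        refine (Finset.card_le_card hcover).trans ((Finset.card_union_le _ _).trans ?_)
        gcongr
        exact Finset.card_biUnion_le
    _ = n * (embs π D σ).card + ∑ p ∈ (Finset.univ : Finset (V × V)).filter fun p => p.1 ≠ p.2,
          n * (Finset.univ.filter fun g => T g p.1 = T g p.2).card := by
        rw [mul_add, Finset.mul_sum]
    _ ≤ n * (embs π D σ).card + ∑ p ∈ (Finset.univ : Finset (V × V)).filter fun p => p.1 ≠ p.2,
          B * n ^ Dᶜ.card := by
        refine Nat.add_le_add_left (Finset.sum_le_sum fun p hp => ?_) _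
        exact hcoll p.1 p.2 (by simpa using hp)
    _ ≤ _ := by
        rw [Finset.sum_const, smul_eq_mul]
        gcongr
        refine (Finset.card_filter_le _ _).trans ?_
        rw [Finset.card_univ, Fintype.card_prod, sq]

end

/-! ### Expected number of embeddings -/

section
open scoped Classical

/-- Expected number of copies of the partial injection `π|_D` in a permutation of law `p`. -/
def expEmbs {V : Type*} [Fintype V] (π : Equiv.Perm V) (D : Finset V) {n : ℕ}
    (p : Equiv.Perm (Fin n) → ℝ) : ℝ :=
  ∑ σ, p σ * ((embs π D σ).card : ℝ)

theorem expEmbs_nonneg {V : Type*} [Fintype V] (π : Equiv.Perm V) (D : Finset V) {n : ℕ}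
    {p : Equiv.Perm (Fin n) → ℝ} (hp : ∀ σ, 0 ≤ p σ) : 0 ≤ expEmbs π D p :=
  Finset.sum_nonneg fun σ _ => mul_nonneg (hp σ) (Nat.cast_nonneg _)

/-- The cycles lying inside `D` have total length at most `|D| ≤ r`, so the mean of the bound
`card_embs_le` is controlled by one of the moments assumed bounded. -/
theorem expEmbs_bound {V : Type*} [Fintype V] (π : Equiv.Perm V) (D : Finset V)
    (p : (n : ℕ) → Equiv.Perm (Fin n) → ℝ) (hpos : ∀ n σ, 0 ≤ p n σ) (r : ℕ) (hr : D.card ≤ r)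
    (hmom : ∀ (m : ℕ) (c : Fin m → ℕ), (∀ i, 1 ≤ c i) → (∑ i, c i) ≤ r →
      ∃ C : ℝ, ∀ᶠ n in atTop,
        (∑ σ : Equiv.Perm (Fin n), p n σ * ∏ i, (cycCount σ (c i) : ℝ)) ≤ C) :
    ∃ C : ℝ, ∀ᶠ n : ℕ in atTop, expEmbs π D (p n) ≤ C * (n : ℝ) ^ Dᶜ.card := by
  set Q := fullCycles π D
  let e : Fin Q.card ≃ Q := Q.equivFin.symm
  have hsum : ∑ i, qlen π (e i).1 = ∑ q ∈ Q, qlen π q := by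
    rw [e.sum_comp (fun q => qlen π q.1), ← Finset.sum_coe_sort Q]
  obtain ⟨C, hC⟩ := hmom Q.card (fun i => qlen π (e i).1) (fun i => minimalPeriod_pos' π _)
    (by rw [hsum]; exact (sum_qlen_le π D).trans hr)
  refine ⟨(∏ q ∈ Q, (qlen π q : ℝ)) * C, ?_⟩
  filter_upwards [hC] with n hn
  have h1 : ∀ σ : Equiv.Perm (Fin n), ((embs π D σ).card : ℝ) ≤ (n : ℝ) ^ Dᶜ.card *
      ((∏ q ∈ Q, (qlen π q : ℝ)) * ∏ i, (cycCount σ (qlen π (e i).1) : ℝ)) := by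
    intro σ
    have := card_embs_le π D σ
    rw [e.prod_comp (fun q => (cycCount σ (qlen π q.1) : ℝ)),
      Finset.prod_coe_sort Q (fun q => (cycCount σ (qlen π q) : ℝ)), ← Finset.prod_mul_distrib]
    exact_mod_cast this
  calc expEmbs π D (p n) ≤ ∑ σ, p n σ * ((n : ℝ) ^ Dᶜ.card *
      ((∏ q ∈ Q, (qlen π q : ℝ)) * ∏ i, (cycCount σ (qlen π (e i).1) : ℝ))) :=
        Finset.sum_le_sum fun σ _ => mul_le_mul_of_nonneg_left (h1 σ) (hpos n σ)
    _ = (n : ℝ) ^ Dᶜ.card * ((∏ q ∈ Q, (qlen π q : ℝ)) *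
          ∑ σ, p n σ * ∏ i, (cycCount σ (qlen π (e i).1) : ℝ)) := by
        rw [Finset.mul_sum, Finset.mul_sum]
        exact Finset.sum_congr rfl fun σ _ => by ring
    _ ≤ (n : ℝ) ^ Dᶜ.card * ((∏ q ∈ Q, (qlen π q : ℝ)) * C) := by
        refine mul_le_mul_of_nonneg_left (mul_le_mul_of_nonneg_left hn ?_) (by positivity)
        exact Finset.prod_nonneg fun q _ => Nat.cast_nonneg _
    _ = _ := by ring

/-- Without closed cycles, at most `n ^ |Dᶜ|` embeddings exist for every `σ`, and `le_card_embs` loses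
only a proportion `O(1 / n)` of them in mean, since the expected number of points of `σ` on short
cycles is bounded. -/
theorem expEmbs_tendsto_one {V : Type*} [Fintype V] (π : Equiv.Perm V) (D : Finset V)
    (hD : fullCycles π D = ∅)
    (p : (n : ℕ) → Equiv.Perm (Fin n) → ℝ) (hpos : ∀ n σ, 0 ≤ p n σ) (hsum : ∀ n, ∑ σ, p n σ = 1)
    (r : ℕ) (hr : D.card ≤ r)
    (hmom : ∀ (m : ℕ) (c : Fin m → ℕ), (∀ i, 1 ≤ c i) → (∑ i, c i) ≤ r →
      ∃ C : ℝ, ∀ᶠ n in atTop,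
        (∑ σ : Equiv.Perm (Fin n), p n σ * ∏ i, (cycCount σ (c i) : ℝ)) ≤ C) :
    Tendsto (fun n : ℕ => expEmbs π D (p n) / (n : ℝ) ^ Dᶜ.card) atTop (nhds 1) := by
  have h1 : ∀ c ∈ Finset.Icc 1 D.card, ∃ C : ℝ, ∀ᶠ n in atTop,
      (∑ σ : Equiv.Perm (Fin n), p n σ * (cycCount σ c : ℝ)) ≤ C := by
    intro c hc
    rw [Finset.mem_Icc] at hc
    obtain ⟨C, hC⟩ := hmom 1 (fun _ => c) (fun _ => hc.1) (by simp; omega)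
    exact ⟨C, by simpa using hC⟩
  choose! C hC using h1
  have hC' : ∀ᶠ n in atTop, ∀ c ∈ Finset.Icc 1 D.card,
      (∑ σ : Equiv.Perm (Fin n), p n σ * (cycCount σ c : ℝ)) ≤ C c := by
    rw [Filter.eventually_all_finset]
    exact hC
  set K : ℝ := (Fintype.card V : ℝ) ^ 2 * (1 + ∑ c ∈ Finset.Icc 1 D.card, c * C c) with hK
  have hlow : Tendsto (fun n : ℕ => 1 - K / n) atTop (nhds 1) := by
    simpa using tendsto_const_nhds.sub (tendsto_const_div_atTop_nhds_zero_nat K)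
  refine tendsto_of_tendsto_of_tendsto_of_le_of_le' hlow tendsto_const_nhds ?_ ?_
  · filter_upwards [hC', Filter.eventually_gt_atTop 0] with n hn hn0
    have hn0' : (0 : ℝ) < n := by exact_mod_cast hn0
    have hpt : ∀ σ : Equiv.Perm (Fin n), (n : ℝ) * (n : ℝ) ^ Dᶜ.card ≤
        n * ((embs π D σ).card : ℝ) + (Fintype.card V : ℝ) ^ 2 *
        ((1 + ∑ c ∈ Finset.Icc 1 D.card, (c : ℝ) * cycCount σ c) * (n : ℝ) ^ Dᶜ.card) := by
      intro σ
      exact_mod_cast le_card_embs π D hD σ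
    have h2 : ∑ σ, p n σ * ((n : ℝ) * (n : ℝ) ^ Dᶜ.card) ≤ ∑ σ, p n σ *
        (n * ((embs π D σ).card : ℝ) + (Fintype.card V : ℝ) ^ 2 *
        ((1 + ∑ c ∈ Finset.Icc 1 D.card, (c : ℝ) * cycCount σ c) * (n : ℝ) ^ Dᶜ.card)) :=
      Finset.sum_le_sum fun σ _ => mul_le_mul_of_nonneg_left (hpt σ) (hpos n σ)
    rw [← Finset.sum_mul, hsum, one_mul] at h2
    have h3 : ∑ σ, p n σ *
        (n * ((embs π D σ).card : ℝ) + (Fintype.card V : ℝ) ^ 2 *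
        ((1 + ∑ c ∈ Finset.Icc 1 D.card, (c : ℝ) * cycCount σ c) * (n : ℝ) ^ Dᶜ.card))
        = n * expEmbs π D (p n) + (Fintype.card V : ℝ) ^ 2 * (n : ℝ) ^ Dᶜ.card *
          (1 + ∑ c ∈ Finset.Icc 1 D.card, (c : ℝ) * ∑ σ, p n σ * cycCount σ c) := by
      have e1 : ∑ c ∈ Finset.Icc 1 D.card, (c : ℝ) * ∑ σ, p n σ * cycCount σ c
          = ∑ σ, p n σ * ∑ c ∈ Finset.Icc 1 D.card, (c : ℝ) * cycCount σ c := by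
        simp_rw [Finset.mul_sum]
        rw [Finset.sum_comm]
        exact Finset.sum_congr rfl fun σ _ => Finset.sum_congr rfl fun c _ => by ring
      rw [e1, ← hsum n, ← Finset.sum_add_distrib, expEmbs, Finset.mul_sum, Finset.mul_sum,
        ← Finset.sum_add_distrib, hsum n]
      exact Finset.sum_congr rfl fun σ _ => by ring
    rw [h3] at h2
    have h4 : (Fintype.card V : ℝ) ^ 2 * (n : ℝ) ^ Dᶜ.card *
          (1 + ∑ c ∈ Finset.Icc 1 D.card, (c : ℝ) * ∑ σ, p n σ * cycCount σ c)
        ≤ K * (n : ℝ) ^ Dᶜ.card := by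
      rw [hK, mul_right_comm]
      refine mul_le_mul_of_nonneg_right (mul_le_mul_of_nonneg_left ?_ (by positivity))
        (by positivity)
      gcongr with c hc
      exact hn c hc
    have h5 : (n : ℝ) * (n : ℝ) ^ Dᶜ.card ≤ n * expEmbs π D (p n) + K * (n : ℝ) ^ Dᶜ.card := by
      linarith
    have hq : (0 : ℝ) < (n : ℝ) ^ Dᶜ.card := by positivity
    rw [le_div_iff₀ hq, sub_mul, sub_le_iff_le_add, one_mul, ← mul_le_mul_iff_right₀ hn0']
    calc (n : ℝ) * (n : ℝ) ^ Dᶜ.card ≤ _ := h5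
      _ = _ := by field_simp
  · filter_upwards [Filter.eventually_gt_atTop 0] with n hn0
    have hn0' : (0 : ℝ) < n := by exact_mod_cast hn0
    rw [div_le_one (by positivity)]
    calc expEmbs π D (p n) ≤ ∑ σ, p n σ * (n : ℝ) ^ Dᶜ.card := by
          refine Finset.sum_le_sum fun σ _ => mul_le_mul_of_nonneg_left ?_ (hpos n σ)
          have := card_embs_le π D σ
          rw [hD, Finset.prod_empty, mul_one] at this
          exact_mod_cast this
      _ = _ := by rw [← Finset.sum_mul, hsum, one_mul]

end

/-! ### Quotients of the cyclic graph of a word -/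

section
open scoped Classical

/-- The inverse of a letter. -/
def linv {k : ℕ} (x : Fin k × Bool) : Fin k × Bool := (x.1, !x.2)

@[simp] theorem linv_linv {k : ℕ} (x : Fin k × Bool) : linv (linv x) = x := by simp [linv]

theorem linv_ne {k : ℕ} (x : Fin k × Bool) : x ≠ linv x := by
  intro h
  have := congrArg Prod.snd h
  simp [linv] at this

/-- Edges of the quotient by `s` of the cyclic graph spelling the word `l`: `Step l s x a b` means
that the letter `x` carries the vertex `a` to the vertex `b`. The letter `l i` carries `i + 1` to
`i`, and every edge may also be read backwards. -/
def Step {r k : ℕ} (l : ZMod r → Fin k × Bool) (s : Setoid (ZMod r)) (x : Fin k × Bool)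
    (a b : Quotient s) : Prop :=
  ∃ i, (l i = x ∧ (⟦i + 1⟧ : Quotient s) = a ∧ (⟦i⟧ : Quotient s) = b) ∨
    (l i = linv x ∧ (⟦i⟧ : Quotient s) = a ∧ (⟦i + 1⟧ : Quotient s) = b)

/-- Each letter acts on the quotient graph as a partial function (hence, reading edges backwards, as
a partial injection). -/
def Folded {r k : ℕ} (l : ZMod r → Fin k × Bool) (s : Setoid (ZMod r)) : Prop :=
  ∀ x a b c, Step l s x a b → Step l s x a c → b = c

/-- The vertices on which the letter `x` acts. -/
def half {r k : ℕ} [NeZero r] (l : ZMod r → Fin k × Bool) (s : Setoid (ZMod r)) (x : Fin k × Bool) :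
    Finset (Quotient s) := Finset.univ.filter fun a => ∃ b, Step l s x a b

/-- The number of edges of the quotient graph. -/
def nEdges {r k : ℕ} [NeZero r] (l : ZMod r → Fin k × Bool) (s : Setoid (ZMod r)) : ℕ :=
  ∑ j : Fin k, (half l s (j, true)).card

/-- The letters that act on the vertex `a`; its cardinality is the degree of `a`. -/
def labels {r k : ℕ} (l : ZMod r → Fin k × Bool) (s : Setoid (ZMod r)) (a : Quotient s) :
    Finset (Fin k × Bool) := Finset.univ.filter fun x => ∃ b, Step l s x a b

variable {r k : ℕ} {l : ZMod r → Fin k × Bool} {s : Setoid (ZMod r)}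

theorem Step.symm {x : Fin k × Bool} {a b : Quotient s} (h : Step l s x a b) :
    Step l s (linv x) b a := by
  obtain ⟨i, ⟨h1, h2, h3⟩ | ⟨h1, h2, h3⟩⟩ := h
  · exact ⟨i, Or.inr ⟨by simpa using h1, h3, h2⟩⟩
  · exact ⟨i, Or.inl ⟨h1, h3, h2⟩⟩

theorem step_next (l : ZMod r → Fin k × Bool) (s : Setoid (ZMod r)) (i : ZMod r) :
    Step l s (linv (l i)) ⟦i⟧ ⟦i + 1⟧ :=
  ⟨i, Or.inr ⟨by simp, rfl, rfl⟩⟩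

theorem step_prev (l : ZMod r → Fin k × Bool) (s : Setoid (ZMod r)) (i : ZMod r) :
    Step l s (l (i - 1)) ⟦i⟧ ⟦i - 1⟧ :=
  ⟨i - 1, Or.inl ⟨rfl, by simp, rfl⟩⟩

theorem mem_labels {x : Fin k × Bool} {a : Quotient s} :
    x ∈ labels l s a ↔ ∃ i, (⟦i⟧ : Quotient s) = a ∧ (x = l (i - 1) ∨ x = linv (l i)) := by
  simp only [labels, Finset.mem_filter, Finset.mem_univ, true_and]
  constructor
  · rintro ⟨b, i, ⟨h1, h2, h3⟩ | ⟨h1, h2, h3⟩⟩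
    · exact ⟨i + 1, h2, Or.inl (by simp [h1])⟩
    · exact ⟨i, h2, Or.inr (by simp [h1])⟩
  · rintro ⟨i, rfl, rfl | rfl⟩
    · exact ⟨_, step_prev l s i⟩
    · exact ⟨_, step_next l s i⟩

theorem pair_subset_labels (l : ZMod r → Fin k × Bool) (s : Setoid (ZMod r)) (i : ZMod r) :
    ({l (i - 1), linv (l i)} : Finset (Fin k × Bool)) ⊆ labels l s ⟦i⟧ := by
  intro x hx
  simp only [Finset.mem_insert, Finset.mem_singleton] at hx
  exact mem_labels.2 ⟨i, rfl, hx⟩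

/-- The word is cyclically reduced, so a walk never leaves a vertex along the edge by which it
arrived. -/
theorem card_pair (hred : ∀ i, l (i + 1) ≠ linv (l i)) (i : ZMod r) :
    ({l (i - 1), linv (l i)} : Finset (Fin k × Bool)).card = 2 := by
  apply Finset.card_pair
  intro h
  apply hred (i - 1)
  rw [h]; simp

theorem two_le_card_labels (hred : ∀ i, l (i + 1) ≠ linv (l i)) (a : Quotient s) :
    2 ≤ (labels l s a).card := by
  obtain ⟨i, rfl⟩ := Quotient.exists_rep a
  rw [← card_pair hred i]
  exact Finset.card_le_card (pair_subset_labels l s i)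

/-- The periods of the cyclic word `l`. -/
def periods (l : ZMod r → Fin k × Bool) : AddSubgroup (ZMod r) where
  carrier := {h | ∀ i, l (i + h) = l i}
  zero_mem' := by simp
  add_mem' := by
    intro a b ha hb i
    rw [← add_assoc, hb, ha]
  neg_mem' := by
    intro a ha i
    rw [← ha (i + -a)]
    simp

/-- Congruence modulo a subgroup. -/
def shiftSetoid (H : AddSubgroup (ZMod r)) : Setoid (ZMod r) where
  r i j := j - i ∈ H
  iseqv :=
    { refl := by simp
      symm := by
        intro i j h
        simpa using H.neg_mem h
      trans := by
        intro i j m h1 h2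
        simpa using H.add_mem h1 h2 }

theorem shiftSetoid_injective : Function.Injective (shiftSetoid (r := r)) := by
  intro H H' h
  ext x
  have : shiftSetoid H 0 x ↔ shiftSetoid H' 0 x := by rw [h]
  have hx : x - 0 ∈ H ↔ x - 0 ∈ H' := Iff.of_eq (propext this)
  simpa using hx

theorem folded_shift (hred : ∀ i, l (i + 1) ≠ linv (l i)) {H : AddSubgroup (ZMod r)}
    (hH : H ≤ periods l) : Folded l (shiftSetoid H) := by
  have hrel : ∀ i j : ZMod r, (⟦i⟧ : Quotient (shiftSetoid H)) = ⟦j⟧ ↔ j - i ∈ H := fun i j =>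
    Quotient.eq (r := shiftSetoid H)
  have hl : ∀ i j : ZMod r, j - i ∈ H → l j = l i := by
    intro i j h
    have := hH h i
    rwa [add_sub_cancel] at this
  rintro x a b b' ⟨i, ⟨h1, h2, h3⟩ | ⟨h1, h2, h3⟩⟩ ⟨i', ⟨h1', h2', h3'⟩ | ⟨h1', h2', h3'⟩⟩
  · rw [← h3, ← h3', hrel]
    rw [← h2, eq_comm, hrel] at h2'
    simpa using h2'
  · rw [← h2', hrel] at h2
    exact absurd (by rw [← hl _ _ h2, h1', h1]) (hred i)
  · rw [← h2, hrel] at h2'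
    exact absurd (by rw [← hl _ _ h2', h1', h1]) (hred i')
  · rw [← h3, ← h3', hrel]
    rw [← h2, eq_comm, hrel] at h2'
    simpa using h2'

variable [NeZero r]

/-- On a folded quotient the partial injection of each generator extends to a permutation of the
vertices. -/
theorem exists_perm (hf : Folded l s) : ∃ π : Fin k → Equiv.Perm (Quotient s),
    ∀ j a b, Step l s (j, true) a b → π j a = b := by
  have : ∀ j : Fin k, ∃ π : Equiv.Perm (Quotient s), ∀ a b, Step l s (j, true) a b → π a = b := by
    intro j
    let f : Quotient s → Quotient s := fun a =>
      if h : ∃ b, Step l s (j, true) a b then h.choose else a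
    have hfs : ∀ a b, Step l s (j, true) a b → f a = b := by
      intro a b hab
      have hex : ∃ b, Step l s (j, true) a b := ⟨b, hab⟩
      simp only [f, dif_pos hex]
      exact hf _ _ _ _ hex.choose_spec hab
    obtain ⟨g, hg⟩ := Set.MapsTo.exists_equiv_extend_of_card_eq (α := Quotient s)
      (t := (Finset.univ : Finset (Quotient s))) (s := {a | ∃ b, Step l s (j, true) a b})
      (f := f) (by simp) (fun a _ => by simp) (by
        rintro a ⟨b, hb⟩ a' ⟨b', hb'⟩ h
        rw [hfs a b hb, hfs a' b' hb'] at h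
        subst h
        exact hf _ _ _ _ hb.symm hb'.symm)
    refine ⟨g.trans (Equiv.subtypeUnivEquiv (by simp)), fun a b hab => ?_⟩
    exact (hg a ⟨b, hab⟩).trans (hfs a b hab)
  choose π hπ using this
  exact ⟨π, hπ⟩

/-- Handshake lemma. -/
theorem sum_card_labels (hf : Folded l s) : ∑ a, (labels l s a).card = 2 * nEdges l s := by
  obtain ⟨π, hπ⟩ := exists_perm hf
  have h1 : ∑ a, (labels l s a).card = ∑ x, (half l s x).card := by
    simp only [labels, half, Finset.card_filter]
    rw [Finset.sum_comm]
    congr! 3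
  have h2 : ∀ j, (half l s (j, false)).card = (half l s (j, true)).card := by
    intro j
    have : half l s (j, false) = (half l s (j, true)).image (π j) := by
      ext b
      simp only [half, Finset.mem_filter, Finset.mem_univ, true_and, Finset.mem_image]
      constructor
      · rintro ⟨a, ha⟩
        exact ⟨a, ⟨b, ha.symm⟩, hπ _ _ _ ha.symm⟩
      · rintro ⟨a, ⟨b', hb'⟩, rfl⟩
        refine ⟨a, ?_⟩
        rw [hπ _ _ _ hb']
        exact hb'.symm
    rw [this, Finset.card_image_of_injective _ (π j).injective]
  rw [h1, Fintype.sum_prod_type, nEdges, Finset.mul_sum]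
  refine Finset.sum_congr rfl fun j _ => ?_
  rw [Fintype.sum_bool, h2, two_mul]

/-- All degrees are at least two, so there are at least as many edges as vertices. -/
theorem card_le_nEdges (hred : ∀ i, l (i + 1) ≠ linv (l i)) (hf : Folded l s) :
    Fintype.card (Quotient s) ≤ nEdges l s := by
  have := sum_card_labels hf
  have h2 : ∑ _a : Quotient s, 2 ≤ ∑ a, (labels l s a).card :=
    Finset.sum_le_sum fun a _ => two_le_card_labels hred a
  rw [Finset.sum_const, Finset.card_univ, smul_eq_mul] at h2
  omega

/-- If there are as many edges as vertices, every vertex has degree exactly two. -/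
theorem labels_eq (hred : ∀ i, l (i + 1) ≠ linv (l i)) (hf : Folded l s)
    (he : Fintype.card (Quotient s) = nEdges l s) (i : ZMod r) :
    labels l s ⟦i⟧ = {l (i - 1), linv (l i)} := by
  have h1 := sum_card_labels hf
  have h2 : ∑ _a : Quotient s, 2 = ∑ a, (labels l s a).card := by
    rw [h1, Finset.sum_const, Finset.card_univ, smul_eq_mul, he, mul_comm]
  rw [Finset.sum_eq_sum_iff_of_le fun a _ => two_le_card_labels hred a] at h2
  refine (Finset.eq_of_subset_of_card_le (pair_subset_labels l s i) ?_).symm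
  rw [card_pair hred, ← h2 _ (Finset.mem_univ _)]

/-- Two visits to a vertex cannot traverse its two edges in opposite directions: the word would be
a cyclic shift of its own inverse, and the middle of the reflection yields a letter which either
is its own inverse or cancels against its neighbour. -/
theorem no_flip (hred : ∀ i, l (i + 1) ≠ linv (l i)) (hf : Folded l s)
    (he : Fintype.card (Quotient s) = nEdges l s) {i i' : ZMod r}
    (hii : (⟦i⟧ : Quotient s) = ⟦i'⟧) (hl : l i = linv (l (i' - 1))) : False := by
  have key : ∀ t : ℕ, (⟦i + t⟧ : Quotient s) = ⟦i' - t⟧ ∧ l (i + t) = linv (l (i' - t - 1)) := by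
    intro t
    induction t with
    | zero =>
      simp only [Nat.cast_zero, add_zero, sub_zero]
      exact ⟨hii, hl⟩
    | succ t ih =>
      obtain ⟨h1, h2⟩ := ih
      have e1 := step_next l s (i + t)
      have e2 := step_prev l s (i' - t)
      rw [h2, linv_linv, h1] at e1
      have h3 := hf _ _ _ _ e1 e2
      have h4 := labels_eq hred hf he (i + t + 1)
      rw [h3, labels_eq hred hf he (i' - t - 1)] at h4
      have h5 : linv (l (i + t + 1)) ∈
          ({l (i' - t - 1 - 1), linv (l (i' - t - 1))} : Finset (Fin k × Bool)) := by
        rw [h4]; simp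
      push_cast
      rw [← add_assoc, ← sub_sub]
      refine ⟨h3, ?_⟩
      simp only [Finset.mem_insert, Finset.mem_singleton] at h5
      rcases h5 with h5 | h5
      · rw [← h5, linv_linv]
      · exact absurd (by rw [← linv_linv (l (i + t + 1)), h5, h2]) (hred (i + t))
  -- Let the walks meet halfway: according to the parity of `i' - 1 - i` they meet on an edge, whose
  -- letter is then its own inverse, or at a vertex, where two consecutive letters cancel.
  have hm : (((i' - 1 - i).val : ℕ) : ZMod r) = i' - 1 - i := ZMod.natCast_zmod_val _
  rcases Nat.even_or_odd' (i' - 1 - i).val with ⟨t, ht | ht⟩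
  · rw [ht] at hm
    push_cast at hm
    have h := (key t).2
    have e : i' - t - 1 = i + t := by linear_combination -hm
    rw [e] at h
    exact linv_ne _ h
  · rw [ht] at hm
    push_cast at hm
    have h := (key t).2
    have e : i' - t - 1 = i + t + 1 := by linear_combination -hm
    rw [e] at h
    apply hred (i + t)
    rw [h, linv_linv]

/-- With all degrees equal to two, and reflections excluded, two visits to a vertex leave it along the
same edge. -/
theorem tight_shift (hred : ∀ i, l (i + 1) ≠ linv (l i)) (hf : Folded l s)
    (he : Fintype.card (Quotient s) = nEdges l s) {i i' : ZMod r} (hii : s i i') :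
    l i = l i' ∧ s (i + 1) (i' + 1) := by
  have hq : (⟦i⟧ : Quotient s) = ⟦i'⟧ := Quotient.sound hii
  have h4 := labels_eq hred hf he i
  rw [hq, labels_eq hred hf he i'] at h4
  have h5 : linv (l i) ∈ ({l (i' - 1), linv (l i')} : Finset (Fin k × Bool)) := by
    rw [h4]; simp
  simp only [Finset.mem_insert, Finset.mem_singleton] at h5
  rcases h5 with h5 | h5
  · exact (no_flip hred hf he hq (by rw [← h5, linv_linv])).elim
  · have hl : l i = l i' := by rw [← linv_linv (l i), h5, linv_linv]
    refine ⟨hl, ?_⟩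
    have e1 := step_next l s i
    have e2 := step_next l s i'
    rw [hl, hq] at e1
    exact Quotient.exact (hf _ _ _ _ e1 e2)

theorem card_shift (hred : ∀ i, l (i + 1) ≠ linv (l i)) {H : AddSubgroup (ZMod r)}
    (hH : H ≤ periods l) :
    Fintype.card (Quotient (shiftSetoid H)) = nEdges l (shiftSetoid H) := by
  have h1 := sum_card_labels (folded_shift hred hH)
  have h2 : ∀ a : Quotient (shiftSetoid H), (labels l (shiftSetoid H) a).card = 2 := by
    intro a
    obtain ⟨i, rfl⟩ := Quotient.exists_rep a
    rw [← card_pair hred i]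
    congr 1
    refine Finset.Subset.antisymm ?_ (pair_subset_labels _ _ i)
    intro x hx
    obtain ⟨i', hi, hx⟩ := mem_labels.1 hx
    have hi' : i - i' ∈ H := (Quotient.eq (r := shiftSetoid H)).1 hi
    have e1 := hH hi' i'
    have e2 := hH hi' (i' - 1)
    rw [show i' + (i - i') = i by ring] at e1
    rw [show i' - 1 + (i - i') = i - 1 by ring] at e2
    simpa [e1, e2] using hx
  simp only [h2, Finset.sum_const, Finset.card_univ, smul_eq_mul] at h1
  omega

/-- The patterns of leading order are exactly the congruences modulo a group of periods of the word. -/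
theorem tight_iff (hred : ∀ i, l (i + 1) ≠ linv (l i)) :
    (Folded l s ∧ Fintype.card (Quotient s) = nEdges l s) ↔
      ∃ H : AddSubgroup (ZMod r), H ≤ periods l ∧ shiftSetoid H = s := by
  constructor
  · rintro ⟨hf, he⟩
    have hsh : ∀ (t i i' : ZMod r), s i i' → s (i + t) (i' + t) := by
      intro t i i' h
      rw [← ZMod.natCast_zmod_val t]
      induction t.val with
      | zero => simpa using h
      | succ t ih =>
        push_cast
        rw [← add_assoc, ← add_assoc]
        exact (tight_shift hred hf he ih).2
    -- `s` is invariant under translation, so the class of `0` is a subgroup.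
    let H : AddSubgroup (ZMod r) :=
      { carrier := {h | s 0 h}
        zero_mem' := s.refl 0
        add_mem' := by
          intro a b ha hb
          have := hsh b 0 a ha
          rw [zero_add] at this
          exact s.trans hb this
        neg_mem' := by
          intro a ha
          have := hsh (-a) 0 a ha
          rw [zero_add, add_neg_cancel] at this
          exact s.symm this }
    refine ⟨H, ?_, ?_⟩
    · intro h hh i
      have := hsh i 0 h hh
      rw [zero_add, add_comm] at this
      exact (tight_shift hred hf he this).1.symm
    · ext i j
      change s 0 (j - i) ↔ s i j
      constructor
      · intro h
        have := hsh i _ _ h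
        simpa using this
      · intro h
        have := hsh (-i) _ _ h
        simpa [sub_eq_add_neg] using this
  · rintro ⟨H, hH, rfl⟩
    exact ⟨folded_shift hred hH, card_shift hred hH⟩

/-- A monochromatic cycle would be closed under the walk, since each of its vertices has no other
edges; the whole word would then be a power of one generator. -/
theorem fullCycles_eq_empty (hred : ∀ i, l (i + 1) ≠ linv (l i)) (hf : Folded l s)
    (he : Fintype.card (Quotient s) = nEdges l s) (hne : ∃ i i', (l i).1 ≠ (l i').1)
    {π : Fin k → Equiv.Perm (Quotient s)} (hπ : ∀ j a b, Step l s (j, true) a b → π j a = b)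
    (j : Fin k) : fullCycles (π j) (half l s (j, true)) = ∅ := by
  by_contra hcon
  obtain ⟨q, hq⟩ := Finset.nonempty_iff_ne_empty.2 hcon
  simp only [fullCycles, Finset.mem_filter, Finset.mem_univ, true_and] at hq
  obtain ⟨b, rfl⟩ := Quotient.exists_rep q
  have hq' : ∀ a, (π j).SameCycle b a → a ∈ half l s (j, true) := fun a ha =>
    hq a (Quotient.sound (Equiv.Perm.SameCycle.symm ha))
  have hstep : ∀ a, (π j).SameCycle b a → Step l s (j, true) a (π j a) := by
    intro a ha
    have := hq' a ha
    simp only [half, Finset.mem_filter, Finset.mem_univ, true_and] at this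
    obtain ⟨c, hc⟩ := this
    rwa [hπ _ _ _ hc]
  have hmain : ∀ i : ZMod r, (π j).SameCycle b ⟦i⟧ →
      (l i).1 = j ∧ (π j).SameCycle b ⟦i + 1⟧ := by
    intro i hi
    have h1 := hstep _ hi
    have hi' : (π j).SameCycle b ((π j).symm ⟦i⟧) :=
      Equiv.Perm.sameCycle_symm_apply_right.2 hi
    have h2 := (hstep _ hi').symm
    rw [Equiv.apply_symm_apply] at h2
    have h3 : ({(j, true), (j, false)} : Finset (Fin k × Bool)) ⊆ labels l s ⟦i⟧ := by
      intro x hx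
      simp only [Finset.mem_insert, Finset.mem_singleton] at hx
      simp only [labels, Finset.mem_filter, Finset.mem_univ, true_and]
      rcases hx with rfl | rfl
      · exact ⟨_, h1⟩
      · exact ⟨_, h2⟩
    have h4 := Finset.eq_of_subset_of_card_le h3 (by
      rw [labels_eq hred hf he, card_pair hred, Finset.card_pair (by simp)])
    have h5 : linv (l i) ∈ ({(j, true), (j, false)} : Finset (Fin k × Bool)) := by
      rw [h4, labels_eq hred hf he]; simp
    have h6 := step_next l s i
    simp only [Finset.mem_insert, Finset.mem_singleton] at h5
    rcases h5 with h5 | h5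
    · refine ⟨by simpa [linv] using congrArg Prod.fst h5, ?_⟩
      rw [h5] at h6
      rw [← hf _ _ _ _ h1 h6]
      exact Equiv.Perm.sameCycle_apply_right.2 hi
    · refine ⟨by simpa [linv] using congrArg Prod.fst h5, ?_⟩
      rw [h5] at h6
      rw [← hf _ _ _ _ h2 h6]
      exact hi'
  obtain ⟨i0, hi0⟩ := Quotient.exists_rep b
  have hall : ∀ t : ZMod r, (π j).SameCycle b ⟦i0 + t⟧ := by
    intro t
    rw [← ZMod.natCast_zmod_val t]
    induction t.val with
    | zero => simp [hi0, Equiv.Perm.SameCycle.refl]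
    | succ t ih =>
      push_cast
      rw [← add_assoc]
      exact (hmain _ ih).2
  have hcol : ∀ i, (l i).1 = j := by
    intro i
    have := hall (i - i0)
    rw [add_sub_cancel] at this
    exact (hmain i this).1
  obtain ⟨i, i', h⟩ := hne
  exact h ((hcol i).trans (hcol i').symm)

/-- Each edge of color `j` comes from an occurrence of the generator `j` in the word. -/
theorem card_half_le (j : Fin k) :
    (half l s (j, true)).card ≤ (Finset.univ.filter fun i => (l i).1 = j).card := by
  refine le_trans (Finset.card_le_card (t := (Finset.univ.filter fun i => (l i).1 = j).image
    fun i => if (l i).2 then (⟦i + 1⟧ : Quotient s) else ⟦i⟧) ?_) Finset.card_image_le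
  intro a ha
  simp only [half, Finset.mem_filter, Finset.mem_univ, true_and] at ha
  obtain ⟨b, i, ⟨h1, h2, h3⟩ | ⟨h1, h2, h3⟩⟩ := ha
  · refine Finset.mem_image.2 ⟨i, by simp [h1], by simp [h1, h2]⟩
  · refine Finset.mem_image.2 ⟨i, by simp [h1, linv], by simp [h1, h2, linv]⟩

/-- Subgroups of a cyclic group are determined by their order. -/
theorem eq_of_card_eq {H H' : AddSubgroup (ZMod r)} (h : Nat.card H = Nat.card H') : H = H' := by
  -- A subgroup of order `m` is the full set of solutions of `m • x = 0`, which has at most `m`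
  -- elements.
  have key : ∀ K : AddSubgroup (ZMod r),
      (K : Set (ZMod r)) = {x | Nat.card K • x = 0} := by
    intro K
    refine Set.eq_of_subset_of_ncard_le ?_ ?_ (Set.toFinite _)
    · intro x hx
      have : Nat.card K • (⟨x, hx⟩ : K) = 0 := card_nsmul_eq_zero'
      exact congrArg Subtype.val this
    · have := IsAddCyclic.card_nsmul_eq_zero_le (α := ZMod r) (n := Nat.card K) Nat.card_pos
      rw [← Set.ncard_coe_finset, Finset.coe_filter] at this
      simp only [Finset.mem_univ, true_and] at this
      rwa [← Nat.card_coe_set_eq (K : Set (ZMod r))]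
  apply SetLike.coe_injective
  rw [key H, key H', h]

/-- A cyclic group has one subgroup for each divisor of its order. -/
theorem card_subgroups (P : AddSubgroup (ZMod r)) :
    Nat.card {H : AddSubgroup (ZMod r) // H ≤ P} = (Nat.card P).divisors.card := by
  rw [← Fintype.card_coe, ← Nat.card_eq_fintype_card]
  refine Nat.card_congr (Equiv.ofBijective (fun H => ⟨Nat.card H.1, Nat.mem_divisors.2
    ⟨AddSubgroup.card_dvd_of_le H.2, Nat.card_pos.ne'⟩⟩) ⟨?_, ?_⟩)
  · intro H H' h
    exact Subtype.ext (eq_of_card_eq (congrArg Subtype.val h))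
  · rintro ⟨m, hm⟩
    have hm' := Nat.dvd_of_mem_divisors hm
    obtain ⟨g, hg⟩ := IsAddCyclic.exists_generator (α := P)
    have hg' : addOrderOf (g : ZMod r) = Nat.card P := by
      rw [AddSubgroup.addOrderOf_coe]
      exact addOrderOf_eq_card_of_forall_mem_zmultiples hg
    obtain ⟨t, ht⟩ := hm'
    have hpos : 0 < Nat.card P := Nat.card_pos
    have ht0 : t ≠ 0 := by rintro rfl; omega
    refine ⟨⟨AddSubgroup.zmultiples (t • (g : ZMod r)), ?_⟩, Subtype.ext ?_⟩
    · rw [AddSubgroup.zmultiples_le]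
      exact AddSubgroup.nsmul_mem _ g.2 _
    · change Nat.card (AddSubgroup.zmultiples (t • (g : ZMod r))) = m
      rw [Nat.card_zmultiples, addOrderOf_nsmul' _ ht0, hg', ht, Nat.gcd_mul_left_left,
        Nat.mul_div_cancel _ (Nat.pos_of_ne_zero ht0)]

end

/-! ### Words and closed trajectories -/

section
open scoped Classical

/-- The letters of a word, indexed cyclically. -/
def letter {α : Type*} (L : List α) [NeZero L.length] (i : ZMod L.length) : α :=
  L[i.val]'(ZMod.val_lt i)

theorem val_add_one_cases {r : ℕ} [NeZero r] (i : ZMod r) :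
    ((i + 1).val = i.val + 1 ∧ i.val + 1 < r) ∨ (i + 1 = 0 ∧ i.val + 1 = r) := by
  have h := ZMod.val_lt i
  have hi : ((i.val + 1 : ℕ) : ZMod r) = i + 1 := by
    push_cast; rw [ZMod.natCast_zmod_val]
  rcases Nat.lt_or_ge (i.val + 1) r with h1 | h1
  · left
    refine ⟨?_, h1⟩
    rw [← hi, ZMod.val_natCast, Nat.mod_eq_of_lt h1]
  · right
    have : i.val + 1 = r := by omega
    refine ⟨?_, this⟩
    rw [← hi, this, ZMod.natCast_self]

theorem letter_natCast {α : Type*} (L : List α) [NeZero L.length] (m : ℕ) (hm : m < L.length) :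
    letter L (m : ZMod L.length) = L[m] := by
  simp only [letter, ZMod.val_natCast, Nat.mod_eq_of_lt hm]

theorem letter_neg_one {α : Type*} (L : List α) [NeZero L.length] :
    L.getLast? = some (letter L (-1)) := by
  have h0 : L.length ≠ 0 := NeZero.ne _
  rcases val_add_one_cases (-1 : ZMod L.length) with ⟨h1, h2⟩ | ⟨h1, h2⟩
  · simp at h1
  · rw [List.getLast?_eq_getElem?, letter, List.getElem?_eq_getElem (by omega)]
    congr 2
    omega

theorem letter_zero {α : Type*} (L : List α) [NeZero L.length] :
    L.head? = some (letter L 0) := by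
  have h0 : 0 < L.length := Nat.pos_of_ne_zero (NeZero.ne _)
  rw [List.head?_eq_getElem?, letter, List.getElem?_eq_getElem h0]
  simp

/-- Reducedness forbids cancellation inside the word; the assumption on its two ends forbids it between
the last letter and the first. -/
theorem cyclically_reduced {k : ℕ} {w : FreeGroup (Fin k)} [NeZero w.toWord.length]
    (hends : ∀ a b : Fin k × Bool, w.toWord.head? = some a →
      w.toWord.getLast? = some b → a.1 ≠ b.1) (i : ZMod w.toWord.length) :
    letter w.toWord (i + 1) ≠ linv (letter w.toWord i) := by
  rcases val_add_one_cases i with ⟨h1, h2⟩ | ⟨h1, h2⟩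
  · have h := List.isChain_iff_getElem.1 (FreeGroup.isReduced_toWord (x := w)) i.val (by omega)
    intro h3
    simp only [letter, h1] at h3
    rw [h3] at h
    simp [linv] at h
  · have h3 : i = -1 := by linear_combination h1
    subst h3
    rw [h1]
    intro h
    apply hends _ _ (letter_zero _) (letter_neg_one _)
    rw [h, linv]

theorem card_letter_le {k : ℕ} (L : List (Fin k × Bool)) [NeZero L.length] (j : Fin k) :
    (Finset.univ.filter fun i => (letter L i).1 = j).card ≤ (L.map Prod.fst).count j := by
  obtain ⟨v, hv⟩ : ∃ v : List.Vector (Fin k) (L.map Prod.fst).length,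
      v.toList = L.map Prod.fst := ⟨⟨_, rfl⟩, rfl⟩
  rw [← hv, ← Fin.card_filter_univ_eq_vector_get_eq_count j v]
  refine Finset.card_le_card_of_injOn
    (fun i => ⟨i.val, by rw [List.length_map]; exact ZMod.val_lt i⟩) ?_ ?_
  · intro i hi
    simp only [Finset.coe_filter, Finset.mem_univ, true_and, Set.mem_ofPred_eq] at hi ⊢
    rw [← hi, List.Vector.get_eq_get_toList, letter]
    simp [hv]
  · intro i _ i' _ h
    exact ZMod.val_injective _ (by simpa using h)

/-- A fixed point of a word in permutations is the same thing as a closed trajectory. -/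
theorem card_fixed_eq {α β : Type*} [Fintype β] (L : List α) [NeZero L.length]
    (φ : α → Equiv.Perm β) :
    (Finset.univ.filter fun x => (L.map φ).prod x = x).card
      = (Finset.univ.filter fun f : ZMod L.length → β =>
          ∀ i, f i = φ (letter L i) (f (i + 1))).card := by
  have hP : ∀ m (hm : m < L.length), ((L.drop m).map φ).prod
      = φ L[m] * ((L.drop (m + 1)).map φ).prod := by
    intro m hm
    rw [List.drop_eq_getElem_cons hm, List.map_cons, List.prod_cons]
  have htraj : ∀ f : ZMod L.length → β, (∀ i, f i = φ (letter L i) (f (i + 1))) →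
      ∀ m ≤ L.length, f m = ((L.drop m).map φ).prod (f 0) := by
    intro f hf m hm
    induction hm using Nat.decreasingInduction with
    | self => simp
    | of_succ m hm' ih =>
      have hm : m < L.length := hm'
      rw [hP m hm, hf, letter_natCast L m hm, Equiv.Perm.mul_apply, ← ih]
      push_cast; rfl
  refine Finset.card_bij' (fun x _ => fun i => ((L.drop i.val).map φ).prod x) (fun f _ => f 0)
    ?_ ?_ ?_ ?_
  · intro x hx
    simp only [Finset.mem_filter, Finset.mem_univ, true_and] at hx ⊢
    intro i
    rw [hP i.val (ZMod.val_lt i), Equiv.Perm.mul_apply, letter]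
    rcases val_add_one_cases i with ⟨h1, h2⟩ | ⟨h1, h2⟩
    · rw [h1]
    · rw [h1, h2]
      simp [hx]
  · intro f hf
    simp only [Finset.mem_filter, Finset.mem_univ, true_and] at hf ⊢
    have := htraj f hf 0 (by omega)
    simpa using this.symm
  · intro x hx
    simp only [Finset.mem_filter, Finset.mem_univ, true_and] at hx ⊢
    simp [hx]
  · intro f hf
    simp only [Finset.mem_filter, Finset.mem_univ, true_and] at hf ⊢
    funext i
    have := htraj f hf i.val (ZMod.val_lt i).le
    rw [ZMod.natCast_zmod_val] at this
    exact this.symm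

/-- The permutation by which a letter acts. -/
def act {k n : ℕ} (σ : Fin k → Equiv.Perm (Fin n)) (x : Fin k × Bool) : Equiv.Perm (Fin n) :=
  cond x.2 (σ x.1) (σ x.1)⁻¹

theorem cycCount_one {k n : ℕ} (w : FreeGroup (Fin k)) [NeZero w.toWord.length]
    (σ : Fin k → Equiv.Perm (Fin n)) :
    cycCount ((FreeGroup.lift σ) w) 1 = (Finset.univ.filter fun f : ZMod w.toWord.length → Fin n =>
          ∀ i, f i = act σ (letter w.toWord i) (f (i + 1))).card := by
  have h1 : (FreeGroup.lift σ) w = (w.toWord.map (act σ)).prod := by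
    conv_lhs => rw [← FreeGroup.mk_toWord (x := w), FreeGroup.lift_mk]
    rfl
  have h2 := card_fixed_eq w.toWord (act σ)
  rw [← h1] at h2
  rw [cycCount, Nat.div_one]
  simp only [cycLen, Function.minimalPeriod_eq_one_iff_isFixedPt, Function.IsFixedPt]
  convert h2

end

/-! ### Periods of a power -/

section
open scoped Classical

/-- If `Ω` were not cyclically reduced, the reduced word of `Ω ^ d` would start with a letter and end
with its inverse, which is excluded by the assumption on the ends of `w`. -/
theorem toWord_eq_flatten {k : ℕ} {w Ω : FreeGroup (Fin k)} {d : ℕ} (hd : 1 ≤ d) (hwΩ : w = Ω ^ d)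
    (hends : ∀ a b : Fin k × Bool, w.toWord.head? = some a →
      w.toWord.getLast? = some b → a.1 ≠ b.1) :
    w.toWord = (List.replicate d Ω.toWord).flatten := by
  have h := FreeGroup.reduceCyclically.reduce_flatten_replicate
    (FreeGroup.isReduced_toWord (x := Ω)) d
  rw [← FreeGroup.toWord_pow, ← hwΩ, if_neg (by omega)] at h
  have h0 := FreeGroup.reduceCyclically.conj_conjugator_reduceCyclically Ω.toWord
  cases hC : FreeGroup.reduceCyclically.conjugator Ω.toWord with
  | nil =>
    rw [hC] at h h0
    simp only [FreeGroup.invRev_empty, List.append_nil, List.nil_append] at h h0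
    rw [h, h0]
  | cons c C =>
    rw [hC] at h
    have hlast : w.toWord.getLast? = some (c.1, !c.2) := by
      rw [h, FreeGroup.invRev_cons, ← List.append_assoc]
      exact List.getLast?_concat
    exact (hends c _ (by rw [h]; simp) hlast rfl).elim

/-- The letters of a repeated word, read off modulo the length of its pattern. -/
theorem getElem?_flatten_replicate {α : Type*} (M : List α) (d t : ℕ) (ht : t < d * M.length) :
    (List.replicate d M).flatten[t]? = M[t % M.length]? := by
  induction d generalizing t with
  | zero => omega
  | succ d ih =>
    rw [List.replicate_succ, List.flatten_cons]
    rcases Nat.lt_or_ge t M.length with h | h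
    · rw [List.getElem?_append_left h, Nat.mod_eq_of_lt h]
    · rw [Nat.succ_mul] at ht
      rw [List.getElem?_append_right h, ih _ (by omega), Nat.mod_eq_sub_mod h]

/-- The group of periods of the cyclic word of `Ω ^ d` has order exactly `d` when `Ω` is not a proper
power: a larger group would exhibit `Ω` as a power of one of its prefixes. -/
theorem card_periods {k : ℕ} {w Ω : FreeGroup (Fin k)} {d : ℕ} (hd : 1 ≤ d)
    [NeZero w.toWord.length] (hwΩ : w = Ω ^ d)
    (hΩ : ¬ ∃ (Ω' : FreeGroup (Fin k)) (e : ℕ), 2 ≤ e ∧ Ω = Ω' ^ e)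
    (hends : ∀ a b : Fin k × Bool, w.toWord.head? = some a →
      w.toWord.getLast? = some b → a.1 ≠ b.1) :
    Nat.card (periods (letter w.toWord)) = d := by
  have hL := toWord_eq_flatten hd hwΩ hends
  generalize hLw : w.toWord = L at *
  obtain ⟨M, hM⟩ : ∃ M, M = Ω.toWord := ⟨_, rfl⟩
  rw [← hM] at hL
  have hr : L.length = d * M.length := by rw [hL]; simp
  have hr0 : L.length ≠ 0 := NeZero.ne _
  have hm0 : 0 < M.length := by
    rcases Nat.eq_zero_or_pos M.length with h | h
    · rw [h] at hr; omega
    · exact h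
  have hlet : ∀ i : ZMod L.length, some (letter L i) = M[i.val % M.length]? := by
    intro i
    have hi := ZMod.val_lt i
    rw [← getElem?_flatten_replicate M d _ (by omega), ← hL, letter, List.getElem?_eq_getElem]
  have hmem : (M.length : ZMod L.length) ∈ periods (letter L) := by
    intro i
    apply Option.some_injective
    rw [hlet, hlet, ZMod.val_add, ZMod.val_natCast, Nat.add_mod_mod,
      Nat.mod_mod_of_dvd _ ⟨d, by rw [hr, mul_comm]⟩, Nat.add_mod_right]
  have hord : ∀ u v, 0 < u → L.length = v * u → addOrderOf (u : ZMod L.length) = v := by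
    intro u v hu h
    rw [ZMod.addOrderOf_coe _ hr0, h, Nat.gcd_mul_left_left, Nat.mul_div_cancel _ hu]
  have hdvd : d ∣ Nat.card (periods (letter L)) := by
    rw [← hord _ d hm0 hr, ← Nat.card_zmultiples]
    exact AddSubgroup.card_dvd_of_le (by rwa [AddSubgroup.zmultiples_le])
  -- The group of periods has order `d * t`, with `d * t` dividing `d * |M|`; it is then generated by
  -- `u = |M| / t`, and `M` is the `t`-fold repetition of its prefix of length `u`.
  obtain ⟨t, ht⟩ := hdvd
  have htm : t ∣ M.length := by
    have h1 := AddSubgroup.card_addSubgroup_dvd_card (periods (letter L))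
    rw [Nat.card_zmod, ht, hr] at h1
    exact Nat.dvd_of_mul_dvd_mul_left (by omega) h1
  obtain ⟨u, hu⟩ := htm
  have hu0 : 0 < u := by
    rcases Nat.eq_zero_or_pos u with h | h
    · rw [h] at hu; omega
    · exact h
  have humem : (u : ZMod L.length) ∈ periods (letter L) := by
    have : AddSubgroup.zmultiples (u : ZMod L.length) = periods (letter L) := by
      apply eq_of_card_eq
      rw [ht, Nat.card_zmultiples, hord u (d * t) hu0 (by rw [hr, hu, mul_assoc])]
    rw [← this]
    exact AddSubgroup.mem_zmultiples _
  have hMt : M = (List.replicate t (M.take u)).flatten := by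
    have hul : u ≤ M.length := by
      rw [hu]
      exact Nat.le_mul_of_pos_left _ (Nat.pos_of_ne_zero (by rintro rfl; omega))
    have hlen : (M.take u).length = u := by simp [hul]
    apply List.ext_getElem?
    intro i
    rcases Nat.lt_or_ge i M.length with hi | hi
    · rw [getElem?_flatten_replicate _ _ _ (by rw [hlen, ← hu]; exact hi), hlen,
        List.getElem?_take_of_lt (Nat.mod_lt _ hu0)]
      have hML : M.length ≤ L.length := by rw [hr]; exact Nat.le_mul_of_pos_left _ hd
      have h1 : ∀ i', i' < M.length → M[i']? = some (letter L (i' : ZMod L.length)) := by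
        intro i' hi'
        rw [hlet, ZMod.val_natCast, Nat.mod_eq_of_lt (lt_of_lt_of_le hi' hML), Nat.mod_eq_of_lt hi']
      rw [h1 i hi, h1 _ (lt_of_le_of_lt (Nat.mod_le _ _) hi)]
      congr 1
      have h2 := (periods (letter L)).nsmul_mem humem (i / u) ((i % u : ℕ) : ZMod L.length)
      rw [← h2]
      congr 1
      conv_lhs => rw [← Nat.mod_add_div i u]
      push_cast
      rw [nsmul_eq_mul, mul_comm]
    · rw [List.getElem?_eq_none hi, List.getElem?_eq_none]
      rw [List.length_flatten, List.map_replicate, List.sum_replicate, hlen, smul_eq_mul, ← hu]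
      exact hi
  have hpow : Ω = (FreeGroup.mk (M.take u)) ^ t := by
    rw [FreeGroup.pow_mk, ← hMt, hM, FreeGroup.mk_toWord]
  have ht2 : ¬ 2 ≤ t := fun h => hΩ ⟨_, t, h, hpow⟩
  have ht0 : t ≠ 0 := by rintro rfl; omega
  have : t = 1 := by omega
  rw [ht, this, mul_one]

end

/-! ### Expected number of trajectories with a given equality pattern -/

section
open scoped Classical

variable {r k n : ℕ} {l : ZMod r → Fin k × Bool} {s : Setoid (ZMod r)}

/-- The closed trajectories spelling the cyclic word `l` in the permutations `σ`. -/
def trajs [NeZero r] (l : ZMod r → Fin k × Bool) (σ : Fin k → Equiv.Perm (Fin n)) :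
    Finset (ZMod r → Fin n) :=
  Finset.univ.filter fun f => ∀ i, f i = act σ (l i) (f (i + 1))

theorem act_linv (σ : Fin k → Equiv.Perm (Fin n)) (x : Fin k × Bool) :
    act σ (linv x) = (act σ x)⁻¹ := by
  obtain ⟨j, b⟩ := x
  cases b <;> simp [act, linv]

/-- A trajectory that factors through the quotient by `s` carries every edge of the quotient graph to
the action of its letter. -/
theorem step_act {σ : Fin k → Equiv.Perm (Fin n)} {g : Quotient s → Fin n}
    (hg : ∀ i, g (Quotient.mk s i) = act σ (l i) (g (Quotient.mk s (i + 1))))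
    {x : Fin k × Bool} {a b : Quotient s} (h : Step l s x a b) : g b = act σ x (g a) := by
  obtain ⟨i, ⟨rfl, rfl, rfl⟩ | ⟨h1, rfl, rfl⟩⟩ := h
  · exact hg i
  · have := hg i
    rw [h1, act_linv, Equiv.Perm.eq_inv_iff_eq] at this
    exact this.symm

/-- The equality pattern of an actual trajectory is folded, because letters act injectively. -/
theorem folded_ker {σ : Fin k → Equiv.Perm (Fin n)} {f : ZMod r → Fin n}
    (hf : ∀ i, f i = act σ (l i) (f (i + 1))) : Folded l (Setoid.ker f) := by
  intro x a b b' h1 h2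
  have hg : ∀ i, Setoid.kerLift f (Quotient.mk _ i) =
      act σ (l i) (Setoid.kerLift f (Quotient.mk _ (i + 1))) := hf
  apply Setoid.kerLift_injective f
  rw [step_act hg h1, step_act hg h2]

/-- A map on the vertices spells the word exactly when it carries the partial injection of each
generator into the corresponding permutation. -/
theorem traj_iff [NeZero r] {π : Fin k → Equiv.Perm (Quotient s)}
    (hπ : ∀ j a b, Step l s (j, true) a b → π j a = b) (σ : Fin k → Equiv.Perm (Fin n))
    (g : Quotient s → Fin n) :
    (∀ i, g (Quotient.mk s i) = act σ (l i) (g (Quotient.mk s (i + 1)))) ↔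
      ∀ j, ∀ a ∈ half l s (j, true), g (π j a) = σ j (g a) := by
  constructor
  · intro hg j a ha
    simp only [half, Finset.mem_filter, Finset.mem_univ, true_and] at ha
    obtain ⟨b, hb⟩ := ha
    rw [hπ _ _ _ hb]
    exact step_act hg hb
  · intro h i
    have e := step_next l s i
    rcases hl : l i with ⟨j, b⟩
    rw [hl] at e
    cases b with
    | true =>
      have e' := e.symm
      rw [linv_linv] at e'
      have h1 := h j _ (by simp only [half, Finset.mem_filter, Finset.mem_univ, true_and]
                           exact ⟨_, e'⟩)
      rw [hπ _ _ _ e'] at h1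
      exact h1
    | false =>
      have h1 := h j ⟦i⟧ (by simp only [half, Finset.mem_filter, Finset.mem_univ, true_and]
                             exact ⟨_, e⟩)
      rw [hπ _ _ _ e] at h1
      rw [h1]
      simp [act]

/-- Trajectories with equality pattern `s` are the embeddings of the quotient graph. -/
theorem card_trajs_ker [NeZero r] {π : Fin k → Equiv.Perm (Quotient s)}
    (hπ : ∀ j a b, Step l s (j, true) a b → π j a = b) (σ : Fin k → Equiv.Perm (Fin n)) :
    ((trajs l σ).filter fun f => Setoid.ker f = s).card
      = (Finset.univ.filter fun g : Quotient s → Fin n => Function.Injective g ∧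
          ∀ j, ∀ a ∈ half l s (j, true), g (π j a) = σ j (g a)).card := by
  symm
  refine Finset.card_bij (fun g _ => fun i => g (Quotient.mk s i)) ?_ ?_ ?_
  · intro g hg
    simp only [trajs, Finset.mem_filter, Finset.mem_univ, true_and] at hg ⊢
    refine ⟨(traj_iff hπ σ g).2 hg.2, ?_⟩
    ext i j
    rw [Setoid.ker_def, hg.1.eq_iff]
    exact Quotient.eq
  · intro g _ g' _ h
    funext q
    obtain ⟨i, rfl⟩ := Quotient.exists_rep q
    exact congrFun h i
  · intro f hf
    simp only [trajs, Finset.mem_filter, Finset.mem_univ, true_and] at hf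
    obtain ⟨hf, rfl⟩ := hf
    refine ⟨Setoid.kerLift f, ?_, rfl⟩
    simp only [Finset.mem_filter, Finset.mem_univ, true_and]
    exact ⟨Setoid.kerLift_injective f, (traj_iff hπ σ _).1 hf⟩

theorem exists_perm_comp {V : Type*} {g g' : V → Fin n} (hg : Function.Injective g)
    (hg' : Function.Injective g') : ∃ τ : Equiv.Perm (Fin n), ∀ a, τ (g a) = g' a := by
  let e := (Equiv.ofInjective g hg).symm.trans (Equiv.ofInjective g' hg')
  refine ⟨Equiv.extendSubtype (p := (· ∈ Set.range g)) (q := (· ∈ Set.range g')) e, fun a => ?_⟩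
  rw [Equiv.extendSubtype_apply_of_mem _ _ ⟨a, rfl⟩]
  have : (Equiv.ofInjective g hg).symm ⟨g a, ⟨a, rfl⟩⟩ = a := by
    rw [Equiv.symm_apply_eq]; rfl
  simp only [e, Equiv.trans_apply]
  rw [this]; rfl

/-- Conjugation invariance: each injective placement of the vertices is respected with the same
probability. -/
theorem prob_eq {V : Type*} [Fintype V] (π : Equiv.Perm V) (D : Finset V)
    {p : Equiv.Perm (Fin n) → ℝ} (hconj : ∀ τ σ : Equiv.Perm (Fin n), p (τ⁻¹ * σ * τ) = p σ)
    {g : V → Fin n} (hg : Function.Injective g) :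
    (n.descFactorial (Fintype.card V) : ℝ) *
      (∑ σ, p σ * if ∀ a ∈ D, g (π a) = σ (g a) then 1 else 0) = expEmbs π D p := by
  have hN : (Finset.univ.filter fun g : V → Fin n => Function.Injective g).card
      = n.descFactorial (Fintype.card V) := by
    rw [← Fintype.card_fin n, ← Fintype.card_embedding_eq, Fintype.card_fin,
      ← Fintype.card_subtype]
    exact Fintype.card_congr (Equiv.subtypeInjectiveEquivEmbedding V (Fin n))
  have hinv : ∀ g' : V → Fin n, Function.Injective g' →
      (∑ σ, p σ * if ∀ a ∈ D, g' (π a) = σ (g' a) then (1 : ℝ) else 0)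
        = ∑ σ, p σ * if ∀ a ∈ D, g (π a) = σ (g a) then 1 else 0 := by
    intro g' hg'
    obtain ⟨τ, hτ⟩ := exists_perm_comp hg hg'
    rw [← Equiv.sum_comp (MulAut.conj τ⁻¹).toEquiv
      (fun σ => p σ * if ∀ a ∈ D, g (π a) = σ (g a) then (1 : ℝ) else 0)]
    refine Finset.sum_congr rfl fun σ _ => ?_
    have h1 : (MulAut.conj τ⁻¹).toEquiv σ = τ⁻¹ * σ * τ := by simp
    rw [h1, hconj]
    congr 1
    refine if_congr (forall₂_congr fun a _ => ?_) rfl rfl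
    rw [Equiv.Perm.mul_apply, Equiv.Perm.mul_apply, Equiv.Perm.eq_inv_iff_eq, hτ, hτ]
  have hcard : ∀ σ : Equiv.Perm (Fin n), ((embs π D σ).card : ℝ)
      = ∑ g ∈ Finset.univ.filter (fun g : V → Fin n => Function.Injective g),
          if ∀ a ∈ D, g (π a) = σ (g a) then (1 : ℝ) else 0 := by
    intro σ
    rw [embs, ← Finset.filter_filter, Finset.card_filter]
    push_cast
    rfl
  rw [expEmbs]
  simp only [hcard, Finset.mul_sum]
  rw [Finset.sum_comm, ← hN, ← Finset.mul_sum, ← nsmul_eq_mul]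
  symm
  apply Finset.sum_eq_card_nsmul
  intro g' hg'
  simp only [Finset.mem_filter, Finset.mem_univ, true_and] at hg'
  rw [← hinv g' hg']

/-- Expected number of trajectories with a given folded equality pattern. -/
theorem expect_ker [NeZero r] {π : Fin k → Equiv.Perm (Quotient s)}
    (hπ : ∀ j a b, Step l s (j, true) a b → π j a = b) {p : Fin k → Equiv.Perm (Fin n) → ℝ}
    (hconj : ∀ j (τ σ : Equiv.Perm (Fin n)), p j (τ⁻¹ * σ * τ) = p j σ) :
    ∑ σ : Fin k → Equiv.Perm (Fin n), (∏ j, p j (σ j)) *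
        (((trajs l σ).filter fun f => Setoid.ker f = s).card : ℝ)
      = (n.descFactorial (Fintype.card (Quotient s)) : ℝ) *
        ∏ j, (expEmbs (π j) (half l s (j, true)) (p j) /
          (n.descFactorial (Fintype.card (Quotient s)) : ℝ)) := by
  have hN : (Finset.univ.filter fun g : Quotient s → Fin n => Function.Injective g).card
      = n.descFactorial (Fintype.card (Quotient s)) := by
    rw [← Fintype.card_fin n, ← Fintype.card_embedding_eq, Fintype.card_fin,
      ← Fintype.card_subtype]
    exact Fintype.card_congr (Equiv.subtypeInjectiveEquivEmbedding _ (Fin n))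
  have h1 : ∀ σ : Fin k → Equiv.Perm (Fin n), (∏ j, p j (σ j)) *
        (((trajs l σ).filter fun f => Setoid.ker f = s).card : ℝ)
      = ∑ g ∈ Finset.univ.filter (fun g : Quotient s → Fin n => Function.Injective g),
          ∏ j, (p j (σ j) *
            if ∀ a ∈ half l s (j, true), g (π j a) = σ j (g a) then (1 : ℝ) else 0) := by
    intro σ
    rw [card_trajs_ker hπ, ← Finset.filter_filter, Finset.card_filter]
    push_cast
    rw [Finset.mul_sum]
    refine Finset.sum_congr rfl fun g _ => ?_
    rw [Finset.prod_mul_distrib]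
    congr 1
    rw [Finset.prod_ite_zero]
    simp
  simp only [h1]
  rw [Finset.sum_comm]
  have h2 : ∀ g ∈ Finset.univ.filter (fun g : Quotient s → Fin n => Function.Injective g),
      (∑ σ : Fin k → Equiv.Perm (Fin n), ∏ j, (p j (σ j) *
            if ∀ a ∈ half l s (j, true), g (π j a) = σ j (g a) then (1 : ℝ) else 0))
        = ∏ j, (expEmbs (π j) (half l s (j, true)) (p j) /
          (n.descFactorial (Fintype.card (Quotient s)) : ℝ)) := by
    intro g hg
    have hN0 : (n.descFactorial (Fintype.card (Quotient s)) : ℝ) ≠ 0 := by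
      rw [← hN]
      exact_mod_cast (Finset.card_pos.2 ⟨g, hg⟩).ne'
    simp only [Finset.mem_filter, Finset.mem_univ, true_and] at hg
    have h3 := Finset.prod_univ_sum (fun _ : Fin k => (Finset.univ : Finset (Equiv.Perm (Fin n))))
      (fun j τ => p j τ *
            if ∀ a ∈ half l s (j, true), g (π j a) = τ (g a) then (1 : ℝ) else 0)
    rw [Fintype.piFinset_univ] at h3
    rw [← h3]
    refine Finset.prod_congr rfl fun j _ => ?_
    have h4 := prob_eq (π j) (half l s (j, true)) (hconj j) hg
    rw [eq_div_iff hN0, mul_comm]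
    convert h4
  rw [Finset.sum_congr rfl h2, Finset.sum_const, hN, nsmul_eq_mul]

end

/-! ### Passage to the limit -/

section
open scoped Classical

theorem descFactorial_div_tendsto (v : ℕ) :
    Tendsto (fun n : ℕ => (n.descFactorial v : ℝ) / (n : ℝ) ^ v) atTop (nhds 1) := by
  refine (Asymptotics.isEquivalent_iff_tendsto_one ?_).1 (isEquivalent_descFactorial v)
  filter_upwards [eventually_gt_atTop 0] with n hn
  positivity

variable {r k : ℕ} {l : ZMod r → Fin k × Bool} {s : Setoid (ZMod r)} [NeZero r]

/-- The expected number of trajectories with equality pattern `s`, in terms of quantities having a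
limit, and of the factor `n ^ (v - e)` where `v` and `e` count vertices and edges. -/
theorem expect_rescale (π : Fin k → Equiv.Perm (Quotient s))
    (p : (n : ℕ) → Fin k → Equiv.Perm (Fin n) → ℝ) (v : ℕ) (hv : v = Fintype.card (Quotient s)) :
    ∀ᶠ n : ℕ in atTop,
      (n.descFactorial v : ℝ) *
        ∏ j, (expEmbs (π j) (half l s (j, true)) (p n j) / (n.descFactorial v : ℝ))
      = ((n.descFactorial v : ℝ) / (n : ℝ) ^ v) * ((n : ℝ) ^ v / (n : ℝ) ^ nEdges l s) *
        ∏ j, ((expEmbs (π j) (half l s (j, true)) (p n j) / (n : ℝ) ^ (half l s (j, true))ᶜ.card) *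
          ((n.descFactorial v : ℝ) / (n : ℝ) ^ v)⁻¹) := by
  filter_upwards [eventually_gt_atTop 0, eventually_ge_atTop v] with n hn hnv
  have hn' : (n : ℝ) ≠ 0 := by positivity
  have hN : (n.descFactorial v : ℝ) ≠ 0 := by
    have := Nat.descFactorial_pos.2 hnv
    positivity
  have h1 : (n : ℝ) ^ nEdges l s = ∏ j : Fin k, (n : ℝ) ^ (half l s (j, true)).card := by
    rw [nEdges, Finset.prod_pow_eq_pow_sum]
  have h2 : ∀ j, expEmbs (π j) (half l s (j, true)) (p n j) / (n.descFactorial v : ℝ)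
      = ((n : ℝ) ^ (half l s (j, true)).card)⁻¹ *
        ((expEmbs (π j) (half l s (j, true)) (p n j) / (n : ℝ) ^ (half l s (j, true))ᶜ.card) *
          ((n.descFactorial v : ℝ) / (n : ℝ) ^ v)⁻¹) := by
    intro j
    have h3 : (n : ℝ) ^ v = (n : ℝ) ^ (half l s (j, true)).card *
        (n : ℝ) ^ (half l s (j, true))ᶜ.card := by
      rw [← pow_add, Finset.card_add_card_compl, hv]
    rw [h3]
    field_simp
  simp only [h2]
  rw [Finset.prod_mul_distrib, Finset.prod_inv_distrib, ← h1]
  have h4 : (n.descFactorial v : ℝ) / (n : ℝ) ^ v * ((n : ℝ) ^ v / (n : ℝ) ^ nEdges l s)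
      = n.descFactorial v * ((n : ℝ) ^ nEdges l s)⁻¹ := by
    field_simp
  rw [h4, mul_assoc]

/-- The expected number of trajectories with pattern `s` tends to one when `s` is folded with as many
edges as vertices, and to zero otherwise. -/
theorem expect_tendsto (hred : ∀ i, l (i + 1) ≠ linv (l i)) (hne : ∃ i i', (l i).1 ≠ (l i').1)
    (p : (n : ℕ) → Fin k → Equiv.Perm (Fin n) → ℝ)
    (hpos : ∀ n j σ, 0 ≤ p n j σ) (hsum : ∀ n j, ∑ σ, p n j σ = 1)
    (hconj : ∀ n (j : Fin k) (τ σ : Equiv.Perm (Fin n)), p n j (τ⁻¹ * σ * τ) = p n j σ)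
    (ρ : Fin k → ℕ) (hρ : ∀ j, (Finset.univ.filter fun i => (l i).1 = j).card ≤ ρ j)
    (hmom : ∀ j : Fin k, ∀ (m : ℕ) (c : Fin m → ℕ), (∀ i, 1 ≤ c i) →
      (∑ i, c i) ≤ ρ j →
      ∃ C : ℝ, ∀ᶠ n in atTop,
        (∑ σ : Equiv.Perm (Fin n), p n j σ * ∏ i, (cycCount σ (c i) : ℝ)) ≤ C) :
    Tendsto (fun n => ∑ σ : Fin k → Equiv.Perm (Fin n), (∏ j, p n j (σ j)) *
        (((trajs l σ).filter fun f => Setoid.ker f = s).card : ℝ)) atTop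
      (nhds (if Folded l s ∧ Fintype.card (Quotient s) = nEdges l s then 1 else 0)) := by
  by_cases hf : Folded l s
  swap
  · rw [if_neg (by tauto)]
    refine tendsto_const_nhds.congr fun n => ?_
    symm
    refine Finset.sum_eq_zero fun σ _ => ?_
    rw [Finset.filter_eq_empty_iff.2, Finset.card_empty, Nat.cast_zero, mul_zero]
    rintro f hf' rfl
    simp only [trajs, Finset.mem_filter, Finset.mem_univ, true_and] at hf'
    exact hf (folded_ker hf')
  obtain ⟨π, hπ⟩ := exists_perm hf
  obtain ⟨v, hv⟩ : ∃ v, v = Fintype.card (Quotient s) := ⟨_, rfl⟩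
  have hE := fun n => expect_ker hπ (hconj n)
  simp only [← hv] at hE ⊢
  simp only [hE]
  refine Tendsto.congr' ((expect_rescale π p v hv).mono fun n hn => hn.symm) ?_
  have hN := descFactorial_div_tendsto v
  have hNi := hN.inv₀ one_ne_zero
  rw [inv_one] at hNi
  have hle := card_le_nEdges hred hf
  rw [← hv] at hle
  have hr : ∀ j, (half l s (j, true)).card ≤ ρ j := fun j => (card_half_le j).trans (hρ j)
  rcases hle.eq_or_lt with he | he
  · rw [if_pos ⟨hf, he⟩]
    have h1 : Tendsto (fun n : ℕ => (n : ℝ) ^ v / (n : ℝ) ^ nEdges l s) atTop (nhds 1) := by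
      refine tendsto_const_nhds.congr' ?_
      filter_upwards [eventually_gt_atTop 0] with n hn
      rw [he, div_self (by positivity)]
    have h2 : Tendsto (fun n : ℕ => ∏ j, ((expEmbs (π j) (half l s (j, true)) (p n j) /
        (n : ℝ) ^ (half l s (j, true))ᶜ.card) * ((n.descFactorial v : ℝ) / (n : ℝ) ^ v)⁻¹))
        atTop (nhds (∏ _j : Fin k, (1 * 1))) := by
      refine tendsto_finsetProd _ fun j _ => Tendsto.mul ?_ hNi
      have h3 := expEmbs_tendsto_one (π j) _
        (fullCycles_eq_empty hred hf (by rw [← hv, he]) hne hπ j) (fun n => p n j)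
        (fun n => hpos n j) (fun n => hsum n j) (ρ j) (hr j) (hmom j)
      convert h3
    simpa using (hN.mul h1).mul h2
  · rw [if_neg (fun h => he.ne h.2)]
    have h1 : Tendsto (fun n : ℕ => (n : ℝ) ^ v / (n : ℝ) ^ nEdges l s) atTop (nhds 0) :=
      (tendsto_pow_div_pow_atTop_zero he).comp tendsto_natCast_atTop_atTop
    have hC : ∀ j, ∃ C : ℝ, ∀ᶠ n : ℕ in atTop, expEmbs (π j) (half l s (j, true)) (p n j)
        ≤ C * (n : ℝ) ^ (half l s (j, true))ᶜ.card := by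
      intro j
      have h3 := expEmbs_bound (π j) (half l s (j, true)) (fun n => p n j) (fun n => hpos n j)
        (ρ j) (hr j) (hmom j)
      convert h3
    choose C hC using hC
    have h2 : Tendsto (fun n : ℕ => ∏ j : Fin k, (C j * ((n.descFactorial v : ℝ) /
        (n : ℝ) ^ v)⁻¹)) atTop (nhds (∏ j, (C j * 1))) :=
      tendsto_finsetProd _ fun j _ => tendsto_const_nhds.mul hNi
    have h3 := (hN.mul h1).mul h2
    rw [mul_zero, zero_mul] at h3
    have hnn : ∀ (n : ℕ) j, 0 ≤ (expEmbs (π j) (half l s (j, true)) (p n j) /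
        (n : ℝ) ^ (half l s (j, true))ᶜ.card) * ((n.descFactorial v : ℝ) / (n : ℝ) ^ v)⁻¹ := by
      intro n j
      have := expEmbs_nonneg (π j) (half l s (j, true)) (hpos n j)
      positivity
    refine tendsto_of_tendsto_of_tendsto_of_le_of_le' tendsto_const_nhds h3 ?_ ?_
    · refine Eventually.of_forall fun n => mul_nonneg (by positivity) ?_
      exact Finset.prod_nonneg fun j _ => hnn n j
    · filter_upwards [eventually_all.2 hC, eventually_gt_atTop 0] with n hn hn0
      refine mul_le_mul_of_nonneg_left ?_ (by positivity)
      refine Finset.prod_le_prod (fun j _ => hnn n j) fun j _ => ?_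
      refine mul_le_mul_of_nonneg_right ?_ (by positivity)
      rw [div_le_iff₀ (by positivity)]
      exact hn j

instance finite_setoid {α : Type*} [Finite α] : Finite (Setoid α) :=
  Finite.of_injective (fun s : Setoid α => fun a b => s a b) fun _ _ h =>
    Setoid.ext fun a b => Iff.of_eq (congrFun (congrFun h a) b)

/-- The patterns that survive in the limit correspond to the subgroups of the group of periods. -/
theorem card_tight (hred : ∀ i, l (i + 1) ≠ linv (l i)) [Fintype (Setoid (ZMod r))] :
    (Finset.univ.filter fun s : Setoid (ZMod r) =>
      Folded l s ∧ Fintype.card (Quotient s) = nEdges l s).card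
      = (Nat.card (periods l)).divisors.card := by
  rw [← card_subgroups, ← Fintype.card_subtype, ← Nat.card_eq_fintype_card]
  symm
  refine Nat.card_congr (Equiv.ofBijective
    (fun H => ⟨shiftSetoid H.1, (tight_iff hred).2 ⟨H.1, H.2, rfl⟩⟩) ⟨?_, ?_⟩)
  · intro H H' h
    exact Subtype.ext (shiftSetoid_injective (congrArg Subtype.val h))
  · rintro ⟨s, hs⟩
    obtain ⟨H, hH, rfl⟩ := (tight_iff hred).1 hs
    exact ⟨⟨H, hH⟩, rfl⟩

end

/-- Let `w ∈ F_k` be nontrivial with reduced form whose first and last letters use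
different generators, `w = Ω ^ d` with `Ω` not a proper power.  If `σ_{1,n}, …, σ_{k,n}`
are independent conjugation-invariant random permutations whose joint moments of
`#_{c_i}` with `∑ c_i ≤ r_j` have finite limsup, then
`E(#_1(w(σ_{1,n},…,σ_{k,n}))) → ψ(d)`, the number of divisors of `d`. -/
theorem word_fixed_point_expectation
    {k : ℕ} (w Ω : FreeGroup (Fin k)) (d : ℕ) (hd : 1 ≤ d)
    (hw : w ≠ 1) (hwΩ : w = Ω ^ d)
    (hΩ : ¬ ∃ (Ω' : FreeGroup (Fin k)) (e : ℕ), 2 ≤ e ∧ Ω = Ω' ^ e)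
    (hends : ∀ a b : Fin k × Bool, w.toWord.head? = some a →
      w.toWord.getLast? = some b → a.1 ≠ b.1)
    -- the distribution of `σ_{j,n}` is `p n j`
    (p : (n : ℕ) → Fin k → Equiv.Perm (Fin n) → ℝ)
    (hpos : ∀ n j σ, 0 ≤ p n j σ)
    (hsum : ∀ n j, ∑ σ, p n j σ = 1)
    -- conjugation invariance
    (hconj : ∀ n (j : Fin k) (τ σ : Equiv.Perm (Fin n)), p n j (τ⁻¹ * σ * τ) = p n j σ)
    -- finite limsup of the joint moments of small cycle counts, for
    -- `c_1 + ⋯ + c_p ≤ r_j = card {i : k_i = j}`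
    (hmom : ∀ j : Fin k, ∀ (m : ℕ) (c : Fin m → ℕ), (∀ i, 1 ≤ c i) →
      (∑ i, c i) ≤ (w.toWord.map Prod.fst).count j →
      ∃ C : ℝ, ∀ᶠ n in atTop,
        (∑ σ : Equiv.Perm (Fin n), p n j σ * ∏ i, (cycCount σ (c i) : ℝ)) ≤ C) :
    -- the expectation of `#_1 (w(σ_{1,n},…,σ_{k,n}))` (the permutations being
    -- independent, the joint law is the product law) converges to `ψ(d)`
    Tendsto (fun n => ∑ σ : Fin k → Equiv.Perm (Fin n),
        (∏ j, p n j (σ j)) * (cycCount ((FreeGroup.lift σ) w) 1 : ℝ))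
      atTop (nhds (d.divisors.card : ℝ)) := by
  classical
  have : NeZero w.toWord.length := ⟨by
    rw [Ne, List.length_eq_zero_iff, FreeGroup.toWord_eq_nil_iff]
    exact hw⟩
  have hred := cyclically_reduced hends
  have hne : ∃ i i', (letter w.toWord i).1 ≠ (letter w.toWord i').1 :=
    ⟨0, -1, hends _ _ (letter_zero _) (letter_neg_one _)⟩
  let : Fintype (Setoid (ZMod w.toWord.length)) := Fintype.ofFinite _
  have hlim := tendsto_finsetSum Finset.univ fun (s : Setoid (ZMod w.toWord.length)) _ =>
    expect_tendsto (s := s) hred hne p hpos hsum hconj _ (card_letter_le w.toWord) hmom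
  rw [← Finset.sum_filter, Finset.sum_const, nsmul_eq_mul, mul_one, card_tight hred,
    card_periods hd hwΩ hΩ hends] at hlim
  refine hlim.congr fun n => ?_
  rw [Finset.sum_comm]
  refine Finset.sum_congr rfl fun σ _ => ?_
  rw [← Finset.mul_sum, cycCount_one]
  congr 1
  rw [← Nat.cast_sum]
  congr 1
  exact (Finset.card_eq_sum_card_fiberwise (f := fun f => Setoid.ker f)
    (s := trajs (letter w.toWord) σ) (t := Finset.univ) fun _ _ => Finset.mem_univ _).symm
end
end

section
/- Let w ∈ F_k be a word that is not a proper power, with canonical reduced form w = x_{k_r}^{ε_r}⋯x_{k_1}^{ε_1} ≠ 1 satisfying k_1 ≠ k_r. For each n, let σ_{1,n}, …, σ_{k,n} be independent random permutations of {1,…,n}, each with conjugation-invariant distribution, such that for every j ∈ {1,…,k}, every p ≥ 1 and all c_1,…,c_p ∈ ℕ* with c_1+⋯+c_p ≤ r_j := card{i : k_i = j}, one has limsup_{n→∞} E(∏_{i=1}^p #_{c_i}(σ_{j,n})) < ∞. Then E(#_1(w(σ_{1,n},…,σ_{k,n}))) → 1 as n → ∞. -/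
/-!
Write `w = l_0 l_1 ⋯ l_{r-1}` in reduced form, indexed cyclically by `ZMod r`. A fixed point of
`w(σ)` is the same thing as a closed walk `f : ZMod r → Fin n` with `l_i(σ) (f (i + 1)) = f i` for
all `i` (`card_fixed_list_prod`). By independence the expectation is therefore the sum, over all
maps `f : ZMod r → Fin n`, of `∏ j, P(σ_j sends s to t for every j-labelled edge s → t of f)`
(`expectation_eq`). The injective and the non-injective walks are treated separately.

*Upper bound for one generator.* If `S` has at most `r_j` points and `σ₀` is a fixed permutation,
then `n ^ |S| * P(σ_j = σ₀ on S)` is bounded (`pr_perm_le`). When `S` is a union of cycles of `σ₀`,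
conjugation invariance makes all copies of the pattern `σ₀|_S` equally likely, and the number of
copies contained in `σ_j` is at most a constant times a product of cycle counts `#_c(σ_j)` whose
lengths `c` add up to at most `r_j`; its expectation is bounded by hypothesis (`pr_invariant_le`).
Otherwise some `a ∈ S` has `σ₀ a ∉ S`. By symmetry every point outside the pattern is equally
likely to be the image of `a`, so removing `a` costs a factor of at most `2 / n` (`pr_peel`).

*Non-injective walks.* The edges and vertices visited by `f` form a connected labelled graph.
As `w` is cyclically reduced, the walk never backtracks, so every vertex has degree at least `2` and
there are at least as many edges as vertices. Equality would make the graph a cycle; a vertex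
visited at two different times would then force either a period of the cyclic word, making `w` a
proper power, or a reversal of direction, which is impossible in a reduced word. Hence there are
strictly more edges than vertices (`card_vertices_lt_card_edges`). As there are `O(n ^ v)` walks
with `v` vertices, each of probability `O(n ^ (-v - 1))`, their total contribution is `O(1 / n)`.

*Injective walks.* The walk is a simple cycle and, since the first and last letters of `w` use
different generators, no generator labels all of it. So the edges with a given label `j` form
disjoint paths, and removing them one at a time with `pr_peel` shows that
`n ^ r_j * P(σ_j contains these paths) → 1` uniformly (`pr_acyclic`). There are
`n (n - 1) ⋯ (n - r + 1) ∼ n ^ r` injective walks, each of probability `∼ n ^ (-r)`, so their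
contribution tends to `1`.
-/

open Filter

noncomputable section

/-! ### Closed walks labelled by a cyclic word -/

/-- The formal inverse of a letter; `(j, true)` stands for `x_j` and `(j, false)` for `x_j⁻¹`, as in
`FreeGroup`. -/
def invL {κ : Type*} (l : κ × Bool) : κ × Bool := (l.1, !l.2)

lemma invL_invL {κ : Type*} (l : κ × Bool) : invL (invL l) = l := by
  simp [invL]

lemma invL_ne {κ : Type*} (l : κ × Bool) : invL l ≠ l := by
  obtain ⟨a, b⟩ := l
  cases b <;> simp [invL]

/-- The source of the `i`-th edge of the closed walk `f` labelled by the cyclic word `L`. Since words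
act by composition, the `i`-th letter sends `f (i + 1)` to `f i`; for a letter `x_j` the edge of `σ_j`
runs from `f (i + 1)` to `f i`, for a letter `x_j⁻¹` it runs from `f i` to `f (i + 1)`. -/
def wsrc {r : ℕ} {κ V : Type*} (L : ZMod r → κ × Bool) (f : ZMod r → V) (i : ZMod r) : V :=
  if (L i).2 then f (i + 1) else f i

/-- The target of the `i`-th edge of the closed walk `f` labelled by `L`; see `wsrc`. -/
def wtgt {r : ℕ} {κ V : Type*} (L : ZMod r → κ × Bool) (f : ZMod r → V) (i : ZMod r) : V :=
  if (L i).2 then f i else f (i + 1)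

/-- The next vertex of a walk is determined by the current vertex and the current letter. -/
lemma walk_next {r : ℕ} {κ V : Type*} (L : ZMod r → κ × Bool) (f : ZMod r → V)
    (σ : κ → Equiv.Perm V) (hσ : ∀ i, σ (L i).1 (wsrc L f i) = wtgt L f i)
    {i i' : ZMod r} (hf : f i = f i') (hL : L i = L i') : f (i + 1) = f (i' + 1) := by
  have h1 := hσ i
  have h2 := hσ i'
  unfold wsrc wtgt at h1 h2
  rw [hL] at h1
  cases h : (L i').2
  · simp [h] at h1 h2
    rw [← h1, ← h2, hf]
  · simp [h] at h1 h2
    apply (σ (L i').1).injective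
    rw [h1, h2, hf]

/-- If the letter at time `i` undoes the letter before time `i'`, at the same vertex, then the two
walks traverse that edge in opposite directions. -/
lemma walk_turn {r : ℕ} {κ V : Type*} (L : ZMod r → κ × Bool) (f : ZMod r → V)
    (σ : κ → Equiv.Perm V) (hσ : ∀ i, σ (L i).1 (wsrc L f i) = wtgt L f i)
    {i i' : ZMod r} (hf : f i = f i') (hL : L i = invL (L (i' - 1))) :
    f (i + 1) = f (i' - 1) := by
  have h1 := hσ i
  have h2 := hσ (i' - 1)
  unfold wsrc wtgt at h1 h2
  rw [hL] at h1
  simp only [invL, sub_add_cancel] at h1 h2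
  cases h : (L (i' - 1)).2
  · simp [h] at h1 h2
    apply (σ (L (i' - 1)).1).injective
    rw [h1, h2, hf]
  · simp [h] at h1 h2
    rw [← h1, ← h2, hf]

/-- A non-injective closed walk in a family of permutations, labelled by a cyclically reduced, primitive word
visits strictly more edges than vertices. The edges are counted as pairs (label, source), since a
permutation has exactly one edge leaving each point. -/
theorem card_vertices_lt_card_edges {r : ℕ} [NeZero r] {κ V : Type*} [DecidableEq κ]
    [DecidableEq V] (L : ZMod r → κ × Bool) (f : ZMod r → V) (σ : κ → Equiv.Perm V)
    (hred : ∀ i, L (i + 1) ≠ invL (L i))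
    (hprim : ∀ d : ZMod r, d ≠ 0 → ∃ i, L (i + d) ≠ L i)
    (hσ : ∀ i, σ (L i).1 (wsrc L f i) = wtgt L f i) (hf : ¬ Function.Injective f) :
    (Finset.univ.image f).card + 1 ≤
      (Finset.univ.image fun i => ((L i).1, wsrc L f i)).card := by
  by_contra hlt
  set E := Finset.univ.image fun i => ((L i).1, wsrc L f i) with hE
  set W := Finset.univ.image f with hW
  have hEW : E.card ≤ W.card := by omega
  -- `D` is the set of darts: pairs (letter, vertex at which it is read), both directions of each edge
  set D : Finset ((κ × Bool) × V) := Finset.univ.image (fun i => (L i, f i)) ∪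
    Finset.univ.image (fun i => (invL (L i), f (i + 1))) with hD
  have hDout : ∀ i, (L i, f i) ∈ D := fun i =>
    Finset.mem_union_left _ (Finset.mem_image_of_mem _ (Finset.mem_univ i))
  have hDin : ∀ i, (invL (L i), f (i + 1)) ∈ D := fun i =>
    Finset.mem_union_right _ (Finset.mem_image_of_mem (fun i => (invL (L i), f (i + 1)))
      (Finset.mem_univ i))
  have hDsub : D ⊆ E.image (fun e => ((e.1, false), e.2)) ∪
      E.image (fun e => ((e.1, true), σ e.1 e.2)) := by
    intro d hd
    simp only [hD, Finset.mem_union, Finset.mem_image, Finset.mem_univ, true_and] at hd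
    simp only [hE, Finset.mem_union, Finset.mem_image, Finset.mem_univ, true_and,
      exists_exists_eq_and]
    rcases hd with ⟨i, rfl⟩ | ⟨i, rfl⟩
    · cases h : (L i).2
      · left
        refine ⟨i, ?_⟩
        simp [wsrc, h, Prod.ext_iff]
      · right
        refine ⟨i, ?_⟩
        rw [hσ i]
        simp [wtgt, h, Prod.ext_iff]
    · cases h : (L i).2
      · right
        refine ⟨i, ?_⟩
        rw [hσ i]
        simp [wtgt, h, invL]
      · left
        refine ⟨i, ?_⟩
        simp [wsrc, h, invL]
  have hDcard : D.card ≤ 2 * W.card := by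
    have h1 := Finset.card_le_card hDsub
    have h2 := Finset.card_union_le (E.image (fun e => ((e.1, false), e.2)))
      (E.image (fun e => ((e.1, true), σ e.1 e.2)))
    have h3 := Finset.card_image_le (s := E) (f := fun e => ((e.1, false), e.2))
    have h4 := Finset.card_image_le (s := E) (f := fun e => ((e.1, true), σ e.1 e.2))
    omega
  -- the two darts at the vertex `f i` seen at time `i`
  have hpair : ∀ i, ({(L i, f i), (invL (L (i - 1)), f i)} : Finset _) ⊆
      D.filter fun d => d.2 = f i := by
    intro i d hd
    simp only [Finset.mem_insert, Finset.mem_singleton] at hd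
    rw [Finset.mem_filter]
    rcases hd with rfl | rfl
    · exact ⟨hDout i, rfl⟩
    · have := hDin (i - 1)
      rw [sub_add_cancel] at this
      exact ⟨this, rfl⟩
  have hpc : ∀ i, ({(L i, f i), (invL (L (i - 1)), f i)} : Finset ((κ × Bool) × V)).card = 2 := by
    intro i
    apply Finset.card_pair
    intro h
    have := hred (i - 1)
    rw [sub_add_cancel] at this
    exact this (Prod.ext_iff.1 h).1
  have hfib : ∀ x ∈ W, 2 ≤ (D.filter fun d => d.2 = x).card := by
    intro x hx
    obtain ⟨i, -, rfl⟩ := Finset.mem_image.1 hx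
    rw [← hpc i]
    exact Finset.card_le_card (hpair i)
  have hmaps : ∀ d ∈ D, d.2 ∈ W := by
    intro d hd
    simp only [hD, Finset.mem_union, Finset.mem_image, Finset.mem_univ, true_and] at hd
    rcases hd with ⟨i, rfl⟩ | ⟨i, rfl⟩
    · exact Finset.mem_image_of_mem _ (Finset.mem_univ _)
    · exact Finset.mem_image_of_mem _ (Finset.mem_univ _)
  have hsum := Finset.card_eq_sum_card_fiberwise hmaps
  -- equality in the double count, so every vertex carries exactly two darts
  have heq : ∀ x ∈ W, 2 = (D.filter fun d => d.2 = x).card := by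
    apply (Finset.sum_eq_sum_iff_of_le hfib).1
    apply le_antisymm (Finset.sum_le_sum hfib)
    rw [← hsum]
    simpa [mul_comm] using hDcard
  have hfibeq : ∀ i, ({(L i, f i), (invL (L (i - 1)), f i)} : Finset _) =
      D.filter fun d => d.2 = f i := by
    intro i
    apply Finset.eq_of_subset_of_card_le (hpair i)
    rw [hpc, ← heq _ (Finset.mem_image_of_mem _ (Finset.mem_univ _))]
  -- hence a revisited vertex is left by the same edge as before, or by the edge of the earlier arrival
  have hcases : ∀ i i', f i = f i' → L i = L i' ∨ L i = invL (L (i' - 1)) := by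
    intro i i' h
    have h1 : (L i, f i) ∈ ({(L i', f i'), (invL (L (i' - 1)), f i')} : Finset _) := by
      rw [hfibeq i', Finset.mem_filter]
      exact ⟨hDout i, h⟩
    simpa [h] using h1
  obtain ⟨i, i', hff, hne⟩ : ∃ i i', f i = f i' ∧ i ≠ i' := by
    simpa [Function.Injective] using hf
  rcases hcases i i' hff with hL | hL
  -- same direction: the letters have period `i' - i`
  · have key : ∀ t : ℕ, f (i + t) = f (i' + t) ∧ L (i + t) = L (i' + t) := by
      intro t
      induction t with
      | zero => simpa using ⟨hff, hL⟩
      | succ t ih =>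
        have h1 := walk_next L f σ hσ ih.1 ih.2
        push_cast
        rw [← add_assoc, ← add_assoc]
        refine ⟨h1, (hcases _ _ h1).resolve_right ?_⟩
        rw [add_sub_cancel_right, ← ih.2]
        exact hred _
    obtain ⟨m, hm⟩ := hprim (i' - i) (sub_ne_zero.2 hne.symm)
    apply hm
    have := (key (m - i).val).2
    rw [ZMod.natCast_zmod_val, add_sub_cancel] at this
    rw [this]
    congr 1
    ring
  -- opposite directions: the two passages meet halfway, at a backtracking vertex if `i' - i` is even
  -- and inside an edge, whose letter would be its own inverse, if it is odd
  · have key : ∀ t : ℕ, f (i + t) = f (i' - t) ∧ L (i + t) = invL (L (i' - t - 1)) := by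
      intro t
      induction t with
      | zero => simpa using ⟨hff, hL⟩
      | succ t ih =>
        have h1 := walk_turn L f σ hσ ih.1 ih.2
        push_cast
        rw [← add_assoc, ← sub_sub]
        refine ⟨h1, (hcases _ _ h1).resolve_left ?_⟩
        intro h
        apply hred (i + t)
        rw [h, ih.2, invL_invL]
    have hd := ZMod.natCast_zmod_val (i' - i)
    rcases Nat.even_or_odd' (i' - i).val with ⟨t, ht | ht⟩
    · have h1 := (key t).2
      rw [ht] at hd
      push_cast at hd
      have h2 : i' - t - 1 = i + t - 1 := by linear_combination -hd
      rw [h2] at h1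
      apply hred (i + t - 1)
      rw [sub_add_cancel]
      exact h1
    · have h1 := (key t).2
      rw [ht] at hd
      push_cast at hd
      have h2 : i' - t - 1 = i + t := by linear_combination -hd
      rw [h2] at h1
      exact invL_ne _ h1.symm

/-- Along an injective walk labelled by a cyclically reduced word, edges with the same label have
distinct sources. -/
lemma wsrc_inj {r : ℕ} {κ V : Type*} (L : ZMod r → κ × Bool) (f : ZMod r → V)
    (hf : Function.Injective f) (hred : ∀ i, L (i + 1) ≠ invL (L i)) {i i' : ZMod r}
    (hj : (L i).1 = (L i').1) (h : wsrc L f i = wsrc L f i') : i = i' := by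
  unfold wsrc at h
  cases h1 : (L i).2 <;> cases h2 : (L i').2 <;> simp [h1, h2, hf.eq_iff] at h
  · exact h
  · subst h
    exact absurd (by simp [invL, Prod.ext_iff, h1, h2, hj]) (hred i')
  · subst h
    exact absurd (by simp [invL, Prod.ext_iff, h1, h2, hj]) (hred i)
  · exact h

lemma wtgt_inj {r : ℕ} {κ V : Type*} (L : ZMod r → κ × Bool) (f : ZMod r → V)
    (hf : Function.Injective f) (hred : ∀ i, L (i + 1) ≠ invL (L i)) {i i' : ZMod r}
    (hj : (L i).1 = (L i').1) (h : wtgt L f i = wtgt L f i') : i = i' := by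
  unfold wtgt at h
  cases h1 : (L i).2 <;> cases h2 : (L i').2 <;> simp [h1, h2, hf.eq_iff] at h
  · exact h
  · subst h
    exact absurd (by simp [invL, Prod.ext_iff, h1, h2, hj]) (hred i)
  · subst h
    exact absurd (by simp [invL, Prod.ext_iff, h1, h2, hj]) (hred i')
  · exact h

/-- On an injective walk not entirely labelled by `j`, the `j`-labelled edges contain no directed
cycle: any nonempty set `J` of them has an edge whose target is not the source of an edge of `J`.
Otherwise, following the edges of `J` in their common direction would exhaust the whole walk. -/
lemma walk_acyclic {r : ℕ} [NeZero r] {κ V : Type*} (L : ZMod r → κ × Bool) (f : ZMod r → V)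
    (hf : Function.Injective f) (j : κ) (hj : ∃ i, (L i).1 ≠ j) (J : Finset (ZMod r))
    (hJ : J.Nonempty) (hJj : ∀ i ∈ J, (L i).1 = j) :
    ∃ a ∈ J, ∀ b ∈ J, wtgt L f a ≠ wsrc L f b := by
  by_contra! hcon
  obtain ⟨i₀, hi₀⟩ := hj
  obtain ⟨a, ha⟩ := hJ
  apply hi₀
  cases hd : (L a).2
  · have key : ∀ t : ℕ, a + t ∈ J ∧ (L (a + t)).2 = false := by
      intro t
      induction t with
      | zero => simpa using ⟨ha, hd⟩
      | succ t ih =>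
        obtain ⟨b, hb, hab⟩ := hcon _ ih.1
        unfold wtgt wsrc at hab
        cases hb2 : (L b).2
        · simp [ih.2, hb2, hf.eq_iff] at hab
          push_cast
          rw [← add_assoc, hab]
          exact ⟨hb, hb2⟩
        · simp [ih.2, hb2, hf.eq_iff] at hab
          rw [← hab, ih.2] at hb2
          simp at hb2
    have := (key (i₀ - a).val).1
    rw [ZMod.natCast_zmod_val, add_sub_cancel] at this
    exact hJj _ this
  · have key : ∀ t : ℕ, a - t ∈ J ∧ (L (a - t)).2 = true := by
      intro t
      induction t with
      | zero => simpa using ⟨ha, hd⟩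
      | succ t ih =>
        obtain ⟨b, hb, hab⟩ := hcon _ ih.1
        unfold wtgt wsrc at hab
        cases hb2 : (L b).2
        · simp [ih.2, hb2, hf.eq_iff] at hab
          rw [← hab, ih.2] at hb2
          simp at hb2
        · simp [ih.2, hb2, hf.eq_iff] at hab
          push_cast
          rw [← sub_sub, hab, add_sub_cancel_right]
          exact ⟨hb, hb2⟩
    have := (key (a - i₀).val).1
    rw [ZMod.natCast_zmod_val, sub_sub_cancel] at this
    exact hJj _ this

/-! ### The cyclic word of an element of the free group -/

/-- A nonempty list, read as a cyclic word. -/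
def cyc {α : Type*} (l : List α) [NeZero l.length] (i : ZMod l.length) : α :=
  l[i.val]'(ZMod.val_lt i)

lemma cyc_natCast {α : Type*} (l : List α) [NeZero l.length] {m : ℕ} (hm : m < l.length) :
    cyc l (m : ZMod l.length) = l[m] := by
  simp only [cyc, ZMod.val_natCast_of_lt hm]

lemma map_cyc {α : Type*} (l : List α) [NeZero l.length] :
    (List.range l.length).map (fun m : ℕ => cyc l (m : ZMod l.length)) = l := by
  apply List.ext_getElem
  · simp
  · intro i h1 h2
    simp [cyc_natCast l h2]

/-- A word of length `g * q` whose letters have period `g` represents a `q`-th power. -/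
lemma mk_map_range_periodic {κ : Type*} (M : ℕ → κ × Bool) (g : ℕ) (hM : ∀ m, M (m + g) = M m)
    (q : ℕ) : FreeGroup.mk ((List.range (g * q)).map M) =
      FreeGroup.mk ((List.range g).map M) ^ q := by
  have hM' : ∀ q m, M (g * q + m) = M m := by
    intro q
    induction q with
    | zero => simp
    | succ q ih =>
      intro m
      rw [mul_add, mul_one, add_right_comm, hM, ih]
  induction q with
  | zero => simp [FreeGroup.one_eq_mk]
  | succ q ih =>
    rw [mul_add, mul_one, List.range_add, List.map_append, ← FreeGroup.mul_mk, ih, pow_succ]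
    congr 2
    rw [List.map_map]
    apply List.map_congr_left
    intro m _
    exact hM' q m

/-- The cyclic reduced word of an element that is not a proper power has no nontrivial period. A
period `d` and the length `r` give the period `gcd d r`, a proper divisor of `r`. -/
lemma cyc_primitive {κ : Type*} [DecidableEq κ] (w : FreeGroup κ) [NeZero w.toWord.length]
    (hpow : ¬ ∃ (u : FreeGroup κ) (e : ℕ), 2 ≤ e ∧ w = u ^ e)
    (d : ZMod w.toWord.length) (hd : d ≠ 0) : ∃ i, cyc w.toWord (i + d) ≠ cyc w.toWord i := by
  by_contra! hcon
  set M : ℤ → κ × Bool := fun m => cyc w.toWord (m : ZMod w.toWord.length) with hM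
  have h1 : Function.Periodic M d.val := by
    intro m
    simp only [hM]
    push_cast
    rw [ZMod.natCast_zmod_val]
    exact hcon _
  have h2 : Function.Periodic M w.toWord.length := by
    intro m
    simp [hM]
  have hg : Function.Periodic M (Int.gcd d.val w.toWord.length) := by
    rw [Int.gcd_eq_gcd_ab]
    have e1 := h1.int_mul (Int.gcdA d.val w.toWord.length)
    have e2 := h2.int_mul (Int.gcdB d.val w.toWord.length)
    intro m
    have := e2 (m + Int.gcdA d.val w.toWord.length * d.val)
    simp only [Int.cast_id] at e1 e2 this
    rw [e1] at this
    rw [← this]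
    congr 1
    ring
  rw [Int.gcd_natCast_natCast] at hg
  set g := Nat.gcd d.val w.toWord.length with hgdef
  have hdpos : 0 < d.val := Nat.pos_of_ne_zero (by simpa [ZMod.val_eq_zero] using hd)
  have hglt : g < w.toWord.length := lt_of_le_of_lt (Nat.gcd_le_left _ hdpos) (ZMod.val_lt d)
  obtain ⟨q, hq⟩ : g ∣ w.toWord.length := Nat.gcd_dvd_right _ _
  apply hpow
  refine ⟨FreeGroup.mk ((List.range g).map fun m : ℕ => M m), q, ?_, ?_⟩
  · by_contra hlt
    have : q ≤ 1 := by omega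
    have : g * q ≤ g * 1 := Nat.mul_le_mul_left _ this
    omega
  · rw [← mk_map_range_periodic (fun m : ℕ => M m), ← hq]
    · conv_lhs => rw [← FreeGroup.mk_toWord (x := w), ← map_cyc w.toWord]
      simp [hM]
    · intro m
      have := hg m
      push_cast
      exact this

/-- The reduced word of `w` is cyclically reduced when its end letters use different generators. -/
lemma cyc_reduced {κ : Type*} [DecidableEq κ] (w : FreeGroup κ) [NeZero w.toWord.length]
    (hends : ∀ a b : κ × Bool, w.toWord.head? = some a →
      w.toWord.getLast? = some b → a.1 ≠ b.1) (i : ZMod w.toWord.length) :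
    cyc w.toWord (i + 1) ≠ invL (cyc w.toWord i) := by
  have hred : FreeGroup.IsReduced w.toWord := FreeGroup.isReduced_toWord
  have hlen : 0 < w.toWord.length := Nat.pos_of_ne_zero (NeZero.ne _)
  obtain ⟨m, hm, rfl⟩ : ∃ m : ℕ, m < w.toWord.length ∧ (m : ZMod w.toWord.length) = i :=
    ⟨i.val, ZMod.val_lt i, ZMod.natCast_zmod_val i⟩
  rw [cyc_natCast _ hm]
  intro h
  by_cases h1 : m + 1 < w.toWord.length
  · have h2 : cyc w.toWord ((m : ZMod w.toWord.length) + 1) = w.toWord[m + 1] := by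
      rw [← Nat.cast_one, ← Nat.cast_add, cyc_natCast _ h1]
    rw [h2] at h
    have := List.isChain_iff_getElem.1 hred m h1
    rw [h] at this
    simp [invL] at this
  · have h2 : cyc w.toWord ((m : ZMod w.toWord.length) + 1) = w.toWord[0] := by
      have : m + 1 = w.toWord.length := by omega
      rw [← Nat.cast_one, ← Nat.cast_add, this, ZMod.natCast_self, ← Nat.cast_zero,
        cyc_natCast _ hlen]
    rw [h2] at h
    apply hends w.toWord[0] w.toWord[m]
    · simp [List.head?_eq_getElem?]
    · rw [List.getLast?_eq_getElem?]
      have : w.toWord.length - 1 = m := by omega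
      simp [this]
    · rw [h]
      rfl

lemma cyc_not_all {κ : Type*} [DecidableEq κ] (w : FreeGroup κ) [NeZero w.toWord.length]
    (hends : ∀ a b : κ × Bool, w.toWord.head? = some a →
      w.toWord.getLast? = some b → a.1 ≠ b.1) (j : κ) :
    ∃ i : ZMod w.toWord.length, (cyc w.toWord i).1 ≠ j := by
  have hlen : 0 < w.toWord.length := Nat.pos_of_ne_zero (NeZero.ne _)
  by_contra! hcon
  have h1 := hcon ((0 : ℕ) : ZMod _)
  have h2 := hcon ((w.toWord.length - 1 : ℕ) : ZMod _)
  rw [cyc_natCast _ hlen] at h1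
  rw [cyc_natCast _ (by omega)] at h2
  apply hends w.toWord[0] (w.toWord[w.toWord.length - 1])
  · simp [List.head?_eq_getElem?]
  · rw [List.getLast?_eq_getElem?]
    simp [hlen]
  · rw [h1, h2]

lemma count_eq_card_cyc {κ : Type*} [DecidableEq κ] (l : List (κ × Bool)) [NeZero l.length]
    (j : κ) : (l.map Prod.fst).count j =
      (Finset.univ.filter fun i : ZMod l.length => (cyc l i).1 = j).card := by
  have h1 : (l.map Prod.fst).count j =
      ((Finset.range l.length).filter fun m : ℕ => (cyc l (m : ZMod l.length)).1 = j).card := by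
    conv_lhs => rw [← map_cyc l]
    rw [List.map_map, List.count, List.countP_map, List.countP_eq_length_filter]
    rw [← List.toFinset_card_of_nodup (List.nodup_range.filter _)]
    congr 1
    ext m
    simp
  rw [h1]
  symm
  refine Finset.card_bij' (fun i _ => i.val) (fun m _ => (m : ZMod l.length)) ?_ ?_ ?_ ?_
  · intro i hi
    simpa [ZMod.val_lt] using hi
  · intro m hm
    simp at hm
    simpa using hm.2
  · intro i _
    simp
  · intro m hm
    simp at hm
    exact ZMod.val_natCast_of_lt hm.1

/-- The fixed points of `A 0 * A 1 * ⋯ * A (r - 1)` correspond to the closed walks `f` with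
`A i (f (i + 1)) = f i` for all `i`; the fixed point attached to `f` is `f 0`. -/
lemma card_fixed_list_prod {V : Type*} [Fintype V] [DecidableEq V] (r : ℕ) [NeZero r]
    (A : ZMod r → Equiv.Perm V) :
    (Finset.univ.filter fun x => ((List.range r).map fun m : ℕ => A m).prod x = x).card =
      (Finset.univ.filter fun f : ZMod r → V => ∀ i, A i (f (i + 1)) = f i).card := by
  set Q : ℕ → Equiv.Perm V := fun t => ((List.range t).map fun m : ℕ => A m).prod with hQ
  have hQs : ∀ t, Q (t + 1) = Q t * A t := by
    intro t
    simp [hQ, List.range_succ]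
  have hQ0 : Q 0 = 1 := by simp [hQ]
  have hwalk : ∀ f : ZMod r → V, (∀ i, A i (f (i + 1)) = f i) → ∀ t : ℕ, Q t (f t) = f 0 := by
    intro f hf t
    induction t with
    | zero => simp [hQ0]
    | succ t ih =>
      rw [hQs, Equiv.Perm.mul_apply]
      push_cast
      rw [hf, ih]
  symm
  refine Finset.card_bij' (fun f _ => f 0) (fun x _ i => (Q i.val)⁻¹ x) ?_ ?_ ?_ ?_
  · intro f hf
    simp only [Finset.mem_filter, Finset.mem_univ, true_and] at hf ⊢
    have := hwalk f hf r
    rw [ZMod.natCast_self] at this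
    exact this
  · intro x hx
    simp only [Finset.mem_filter, Finset.mem_univ, true_and] at hx ⊢
    have hstep : ∀ t : ℕ, A t ((Q (t + 1))⁻¹ x) = (Q t)⁻¹ x := by
      intro t
      rw [hQs, mul_inv_rev, Equiv.Perm.mul_apply]
      simp
    intro i
    have hs := hstep i.val
    rw [ZMod.natCast_zmod_val] at hs
    rw [← hs]
    congr 1
    by_cases hlt : i.val + 1 < r
    · have : (i + 1).val = i.val + 1 := by
        rw [← ZMod.val_natCast_of_lt hlt]
        simp
      rw [this]
    · have h1 : i.val + 1 = r := by
        have := ZMod.val_lt i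
        omega
      have h2 : i + 1 = 0 := by
        have := congrArg (Nat.cast : ℕ → ZMod r) h1
        simpa using this
      rw [h2, h1, ZMod.val_zero, hQ0, inv_one, Equiv.Perm.one_apply]
      rw [Equiv.Perm.eq_inv_iff_eq]
      exact hx
  · intro f hf
    simp only [Finset.mem_filter, Finset.mem_univ, true_and] at hf
    funext i
    rw [Equiv.Perm.inv_eq_iff_eq]
    have := hwalk f hf i.val
    rw [ZMod.natCast_zmod_val] at this
    exact this.symm
  · intro x _
    simp [ZMod.val_zero, hQ0]

/-! ### Probabilities of patterns and the peeling identity -/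

/-- Congruence for `if` along an equivalence, with arbitrary decidability instances on both sides. -/
lemma ite_iff_congr {P Q : Prop} {dP : Decidable P} {dQ : Decidable Q} (h : P ↔ Q) (a b : ℝ) :
    @ite ℝ P dP a b = @ite ℝ Q dQ a b := by
  by_cases hP : P
  · rw [if_pos hP, if_pos (h.1 hP)]
  · rw [if_neg hP, if_neg fun hQ => hP (h.2 hQ)]

/-- The probability, for the weight `μ` on permutations, that `σ (s i) = t i` for all `i ∈ I`. -/
def pr {n : ℕ} {ι : Type*} (μ : Equiv.Perm (Fin n) → ℝ) (I : Finset ι) (s t : ι → Fin n) : ℝ :=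
  ∑ σ : Equiv.Perm (Fin n), if ∀ i ∈ I, σ (s i) = t i then μ σ else 0

lemma pr_nonneg {n : ℕ} {ι : Type*} {μ : Equiv.Perm (Fin n) → ℝ} (hμ : ∀ σ, 0 ≤ μ σ)
    (I : Finset ι) (s t : ι → Fin n) : 0 ≤ pr μ I s t :=
  Finset.sum_nonneg fun σ _ => by split_ifs <;> simp [hμ]

lemma pr_congr {n : ℕ} {ι : Type*} (μ : Equiv.Perm (Fin n) → ℝ) (I : Finset ι)
    {s t s' t' : ι → Fin n} (hs : ∀ i ∈ I, s i = s' i) (ht : ∀ i ∈ I, t i = t' i) :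
    pr μ I s t = pr μ I s' t' := by
  refine Finset.sum_congr rfl fun σ _ => ite_iff_congr ?_ _ _
  exact forall₂_congr fun i hi => by rw [hs i hi, ht i hi]

/-- Relabelling the points by `τ` does not change the probability, for a conjugation-invariant weight. -/
lemma pr_conj {n : ℕ} {ι : Type*} {μ : Equiv.Perm (Fin n) → ℝ}
    (hc : ∀ τ σ, μ (τ⁻¹ * σ * τ) = μ σ) (I : Finset ι) (s t : ι → Fin n)
    (τ : Equiv.Perm (Fin n)) :
    pr μ I (fun i => τ (s i)) (fun i => τ (t i)) = pr μ I s t := by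
  unfold pr
  conv_rhs => rw [← Equiv.sum_comp (MulAut.conj τ⁻¹).toEquiv]
  refine Finset.sum_congr rfl fun σ _ => ?_
  have : (MulAut.conj τ⁻¹).toEquiv σ = τ⁻¹ * σ * τ := by simp
  rw [this, hc]
  refine ite_iff_congr (forall₂_congr fun i _ => ?_) _ _
  rw [Equiv.Perm.mul_apply, Equiv.Perm.mul_apply, Equiv.Perm.inv_eq_iff_eq]

/-- If the event is possible, it can be rewritten as agreement with a fixed permutation. -/
lemma pr_eq_of_mem {n : ℕ} {ι : Type*} [DecidableEq ι] (μ : Equiv.Perm (Fin n) → ℝ)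
    (I : Finset ι) (s t : ι → Fin n) (σ₀ : Equiv.Perm (Fin n)) (h : ∀ i ∈ I, σ₀ (s i) = t i) :
    pr μ I s t = pr μ (I.image s) id σ₀ := by
  refine Finset.sum_congr rfl fun σ _ => ite_iff_congr ?_ _ _
  rw [Finset.forall_mem_image]
  exact forall₂_congr fun i hi => by rw [← h i hi, id]

lemma exists_of_pr_ne_zero {n : ℕ} {ι : Type*} {μ : Equiv.Perm (Fin n) → ℝ} {I : Finset ι}
    {s t : ι → Fin n} (h : pr μ I s t ≠ 0) : ∃ σ₀ : Equiv.Perm (Fin n), ∀ i ∈ I, σ₀ (s i) = t i := by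
  by_contra! hcon
  apply h
  refine Finset.sum_eq_zero fun σ _ => if_neg ?_
  obtain ⟨i, hi, hne⟩ := hcon σ
  exact fun h' => hne (h' i hi)

/-- Total probability: the point `s a` is sent to exactly one `y`. -/
lemma sum_pr_update {n : ℕ} {ι : Type*} [DecidableEq ι] (μ : Equiv.Perm (Fin n) → ℝ)
    (I : Finset ι) (s t : ι → Fin n) {a : ι} (ha : a ∉ I) :
    ∑ y, pr μ (insert a I) s (Function.update t a y) = pr μ I s t := by
  unfold pr
  rw [Finset.sum_comm]
  refine Finset.sum_congr rfl fun σ _ => ?_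
  have : ∀ y, (∀ i ∈ insert a I, σ (s i) = Function.update t a y i) ↔
      (σ (s a) = y ∧ ∀ i ∈ I, σ (s i) = t i) := by
    intro y
    rw [Finset.forall_mem_insert, Function.update_self]
    refine and_congr Iff.rfl (forall₂_congr fun i hi => ?_)
    rw [Function.update_of_ne (fun h => ha (by rwa [← h]))]
  simp only [this, ite_and]
  simp

/-- Peeling off an edge `a` with a fresh endpoint. Here `V` is the set of all points of the pattern
other than `t a`. By conjugation with transpositions, each of the `n - |V|` points outside `V` is as
likely as `t a` to be the image of `s a`. -/
lemma pr_peel {n : ℕ} {ι : Type*} [DecidableEq ι] {μ : Equiv.Perm (Fin n) → ℝ}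
    (hc : ∀ τ σ, μ (τ⁻¹ * σ * τ) = μ σ)
    (I : Finset ι) (s t : ι → Fin n) {a : ι} (ha : a ∉ I) (V : Finset (Fin n))
    (hV : V = insert (s a) (I.image s ∪ I.image t)) (hta : t a ∉ V) :
    ((n : ℝ) - V.card) * pr μ (insert a I) s t +
      ∑ y ∈ V, pr μ (insert a I) s (Function.update t a y) = pr μ I s t := by
  rw [← sum_pr_update μ I s t ha, ← Finset.sum_compl_add_sum V]
  congr 1
  have h1 : ∀ y ∈ Vᶜ, pr μ (insert a I) s (Function.update t a y) = pr μ (insert a I) s t := by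
    intro y hy
    rw [Finset.mem_compl] at hy
    rw [← pr_conj hc (insert a I) s t (Equiv.swap (t a) y)]
    have hfix : ∀ z ∈ V, Equiv.swap (t a) y z = z := fun z hz =>
      Equiv.swap_apply_of_ne_of_ne (fun h => hta (h ▸ hz)) (fun h => hy (h ▸ hz))
    have hsV : ∀ i ∈ insert a I, s i ∈ V := by
      intro i hi
      rw [hV]
      rcases Finset.mem_insert.1 hi with rfl | hi
      · simp
      · exact Finset.mem_insert_of_mem (Finset.mem_union_left _ (Finset.mem_image_of_mem _ hi))
    apply pr_congr
    · intro i hi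
      exact (hfix _ (hsV i hi)).symm
    · intro i hi
      rcases Finset.mem_insert.1 hi with rfl | hi
      · simp
      · rw [Function.update_of_ne (fun h => ha (by rwa [← h])), hfix]
        rw [hV]
        exact Finset.mem_insert_of_mem (Finset.mem_union_right _ (Finset.mem_image_of_mem _ hi))
  rw [Finset.sum_congr rfl h1, Finset.sum_const, nsmul_eq_mul, Finset.card_compl,
    Fintype.card_fin, Nat.cast_sub (by simpa using Finset.card_le_univ V)]

/-! ### Upper bounds from moments of cycle counts -/

lemma minimalPeriod_perm_pos {V : Type*} [Finite V] (σ : Equiv.Perm V) (x : V) :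
    0 < Function.minimalPeriod σ x := by
  apply Function.minimalPeriod_pos_of_mem_periodicPts
  exact σ.injective.mem_periodicPts x

/-- A `σ`-stable finite set has a set `R` of orbit representatives, whose cycle lengths add up to at
most the size of the set. -/
lemma exists_cycle_reps {V : Type*} [Finite V] [DecidableEq V] (σ : Equiv.Perm V) :
    ∀ (e : ℕ) (S : Finset V), S.card = e → (∀ x ∈ S, σ x ∈ S) →
      ∃ R ⊆ S, ∑ x ∈ R, Function.minimalPeriod σ x ≤ S.card ∧
        ∀ y ∈ S, ∃ x ∈ R, ∃ m : ℕ, σ^[m] x = y := by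
  intro e
  induction e using Nat.strong_induction_on with
  | _ e ih =>
  intro S hSe hS
  rcases S.eq_empty_or_nonempty with rfl | ⟨x, hx⟩
  · exact ⟨∅, by simp⟩
  set c := Function.minimalPeriod σ x with hcdef
  have hc : 0 < c := minimalPeriod_perm_pos σ x
  set O : Finset V := (Finset.range c).image fun m => σ^[m] x with hO
  have hOc : O.card = c := by
    rw [hO, Finset.card_image_of_injOn, Finset.card_range]
    intro m hm m' hm' h
    simp only [Finset.coe_range, Set.mem_Iio] at hm hm'
    exact (Function.iterate_eq_iterate_iff_of_lt_minimalPeriod hm hm').1 h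
  have hit : ∀ m, σ^[m] x ∈ S := by
    intro m
    induction m with
    | zero => exact hx
    | succ m ihm =>
      rw [Function.iterate_succ_apply']
      exact hS _ ihm
  have hOS : O ⊆ S := by
    intro y hy
    obtain ⟨m, -, rfl⟩ := Finset.mem_image.1 hy
    exact hit m
  have hxO : ∀ m < c, σ^[m] x ∈ O := fun m hm =>
    Finset.mem_image.2 ⟨m, Finset.mem_range.2 hm, rfl⟩
  have hinv : ∀ y ∈ S \ O, σ y ∈ S \ O := by
    intro y hy
    rw [Finset.mem_sdiff] at hy ⊢
    refine ⟨hS _ hy.1, fun h => hy.2 ?_⟩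
    obtain ⟨m, hm, h⟩ := Finset.mem_image.1 h
    rw [Finset.mem_range] at hm
    rcases m with _ | m
    · have h1 : σ^[(c - 1) + 1] x = σ y := by
        rw [Nat.sub_add_cancel hc, hcdef, Function.iterate_minimalPeriod]
        exact h
      rw [Function.iterate_succ_apply'] at h1
      rw [← σ.injective h1]
      exact hxO _ (by omega)
    · rw [Function.iterate_succ_apply'] at h
      rw [← σ.injective h]
      exact hxO _ (by omega)
  have hcard := Finset.card_sdiff_add_card_eq_card hOS
  obtain ⟨R, hRS, hRc, hR⟩ := ih (S \ O).card (by omega) (S \ O) rfl hinv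
  have hxR : x ∉ R := fun h => (Finset.mem_sdiff.1 (hRS h)).2 (hxO 0 hc)
  refine ⟨insert x R, ?_, ?_, ?_⟩
  · intro y hy
    rcases Finset.mem_insert.1 hy with rfl | hy
    · exact hx
    · exact (Finset.mem_sdiff.1 (hRS hy)).1
  · rw [Finset.sum_insert hxR]
    omega
  · intro y hy
    by_cases hyO : y ∈ O
    · obtain ⟨m, -, rfl⟩ := Finset.mem_image.1 hyO
      exact ⟨x, Finset.mem_insert_self _ _, m, rfl⟩
    · obtain ⟨z, hz, m, hm⟩ := hR y (Finset.mem_sdiff.2 ⟨hy, hyO⟩)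
      exact ⟨z, Finset.mem_insert_of_mem hz, m, hm⟩

/-- There are at most `2 ^ l * #_l(σ)` points on cycles of length `l`. The true count is
`l * #_l(σ)`; the weaker bound avoids proving that the division in `cycCount` is exact, and its
product over a family of cycles depends only on the sum of the lengths. -/
lemma card_cycLen_le {n : ℕ} (σ : Equiv.Perm (Fin n)) {l : ℕ} (hl : 1 ≤ l) :
    (Finset.univ.filter fun x => cycLen σ x = l).card ≤ 2 ^ l * cycCount σ l := by
  unfold cycCount
  set N := (Finset.univ.filter fun x => cycLen σ x = l) with hN
  rcases N.eq_empty_or_nonempty with h | ⟨x, hx⟩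
  · simp [h]
  have hxl : Function.minimalPeriod σ x = l := (Finset.mem_filter.1 hx).2
  have hle : l ≤ N.card := by
    have hsub : (Finset.range l).image (fun m => σ^[m] x) ⊆ N := by
      intro y hy
      obtain ⟨m, -, rfl⟩ := Finset.mem_image.1 hy
      refine Finset.mem_filter.2 ⟨Finset.mem_univ _, ?_⟩
      change Function.minimalPeriod σ (σ^[m] x) = l
      rw [Function.minimalPeriod_apply_iterate, hxl]
      exact σ.injective.mem_periodicPts x
    have := Finset.card_le_card hsub
    rw [Finset.card_image_of_injOn, Finset.card_range] at this
    · exact this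
    · intro m hm m' hm' h
      simp only [Finset.coe_range, Set.mem_Iio] at hm hm'
      rw [← hxl] at hm hm'
      exact (Function.iterate_eq_iterate_iff_of_lt_minimalPeriod hm hm').1 h
  have h1 : 1 ≤ N.card / l := Nat.div_pos hle hl
  have h2 : N.card < l * (N.card / l + 1) := by
    have := Nat.lt_mul_div_succ N.card hl
    exact this
  have h3 : 2 * l ≤ 2 ^ l := by
    obtain ⟨m, rfl⟩ := Nat.exists_eq_add_of_le' hl
    have := Nat.lt_two_pow_self (n := m)
    rw [pow_succ]
    omega
  calc N.card ≤ l * (N.card / l + 1) := h2.le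
    _ ≤ l * (2 * (N.card / l)) := by gcongr; omega
    _ = 2 * l * (N.card / l) := by ring
    _ ≤ 2 ^ l * (N.card / l) := by gcongr

/-- All joint moments of cycle counts with total cycle length at most `R` are bounded by `K`. -/
def MomentBound {n : ℕ} (μ : Equiv.Perm (Fin n) → ℝ) (R : ℕ) (K : ℝ) : Prop :=
  ∀ (m : ℕ) (c : Fin m → ℕ), (∀ i, 1 ≤ c i) → ∑ i, c i ≤ R →
    ∑ σ : Equiv.Perm (Fin n), μ σ * ∏ i, (cycCount σ (c i) : ℝ) ≤ K

/-- `MomentBound` for cycle lengths indexed by a finite set. -/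
lemma MomentBound.finset {n : ℕ} {μ : Equiv.Perm (Fin n) → ℝ} {R : ℕ} {K : ℝ}
    (h : MomentBound μ R K) {α : Type*} (A : Finset α) (c : α → ℕ) (hc : ∀ x ∈ A, 1 ≤ c x)
    (hA : ∑ x ∈ A, c x ≤ R) :
    ∑ σ : Equiv.Perm (Fin n), μ σ * ∏ x ∈ A, (cycCount σ (c x) : ℝ) ≤ K := by
  have key := h A.card (fun i => c (A.equivFin.symm i)) (fun i => hc _ (A.equivFin.symm i).2) (by
    rw [Equiv.sum_comp A.equivFin.symm (fun x : A => c x), Finset.sum_coe_sort A c]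
    exact hA)
  have : ∀ σ : Equiv.Perm (Fin n), ∏ i, (cycCount σ (c (A.equivFin.symm i)) : ℝ) =
      ∏ x ∈ A, (cycCount σ (c x) : ℝ) := by
    intro σ
    rw [Equiv.prod_comp A.equivFin.symm (fun x : A => (cycCount σ (c x) : ℝ)),
      Finset.prod_coe_sort A (fun x => (cycCount σ (c x) : ℝ))]
  simpa only [this] using key

lemma exists_perm_extend {V : Type*} [Finite V] (S : Finset V) (y : S ↪ V) :
    ∃ τ : Equiv.Perm V, ∀ x : S, τ x = y x := by
  classical
  have := Fintype.ofFinite V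
  refine ⟨(Equiv.ofInjective y y.injective).extendSubtype (q := fun v => v ∈ Set.range y), ?_⟩
  intro x
  rw [Equiv.extendSubtype_apply_of_mem _ _ x.2]
  rfl

/-- Upper bound for the probability of containing a union of cycles. All
`n (n - 1) ⋯ (n - |S| + 1)` copies of the pattern `σ₀|_S` are equally likely, and the expected
number of copies is controlled by the moments of cycle counts. -/
lemma pr_invariant_le {n : ℕ} {μ : Equiv.Perm (Fin n) → ℝ} (hμ : ∀ σ, 0 ≤ μ σ)
    (hc : ∀ τ σ, μ (τ⁻¹ * σ * τ) = μ σ) {R : ℕ} {K : ℝ} (hK : MomentBound μ R K)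
    (hn : 4 * R ≤ n) (S : Finset (Fin n)) (σ₀ : Equiv.Perm (Fin n)) (hSR : S.card ≤ R)
    (hS : ∀ x ∈ S, σ₀ x ∈ S) :
    (n : ℝ) ^ S.card * pr μ S id σ₀ ≤ 2 ^ S.card * (2 ^ R * K) := by
  obtain ⟨A, hAS, hAc, hA⟩ := exists_cycle_reps σ₀ _ S rfl hS
  set c : Fin n → ℕ := Function.minimalPeriod σ₀ with hcdef
  have hc1 : ∀ x, 1 ≤ c x := fun x => minimalPeriod_perm_pos σ₀ x
  choose τ hτ using exists_perm_extend (V := Fin n) S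
  -- the copies of the pattern contained in `σ`; such a copy is determined by where it sends the
  -- cycle representatives, each of which goes to a point on a cycle of `σ` of the same length
  set T : Equiv.Perm (Fin n) → Finset (S ↪ Fin n) := fun σ =>
    Finset.univ.filter fun y => ∀ x ∈ S, σ (τ y x) = τ y (σ₀ x) with hT
  have hcount : ∀ σ, ((T σ).card : ℝ) ≤ 2 ^ R * ∏ x ∈ A, (cycCount σ (c x) : ℝ) := by
    intro σ
    have hit : ∀ y ∈ T σ, ∀ x ∈ S, ∀ m : ℕ, σ^[m] (τ y x) = τ y (σ₀^[m] x) := by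
      intro y hy x hx m
      have hy' := (Finset.mem_filter.1 hy).2
      have hmem : ∀ m, σ₀^[m] x ∈ S := by
        intro m
        induction m with
        | zero => exact hx
        | succ m ih =>
          rw [Function.iterate_succ_apply']
          exact hS _ ih
      induction m with
      | zero => rfl
      | succ m ih =>
        rw [Function.iterate_succ_apply', Function.iterate_succ_apply', ih, hy' _ (hmem m)]
    have h1 : (T σ).card ≤ (A.pi fun x => Finset.univ.filter fun z => cycLen σ z = c x).card := by
      apply Finset.card_le_card_of_injOn (fun y x _ => τ y x)
      · intro y hy
        rw [Finset.mem_coe, Finset.mem_pi]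
        intro x hx
        refine Finset.mem_filter.2 ⟨Finset.mem_univ _, ?_⟩
        change Function.minimalPeriod σ (τ y x) = Function.minimalPeriod σ₀ x
        rw [Function.minimalPeriod_eq_minimalPeriod_iff]
        intro m
        rw [Function.IsPeriodicPt, Function.IsPeriodicPt, Function.IsFixedPt, Function.IsFixedPt,
          hit y hy x (hAS hx), (τ y).injective.eq_iff]
      · intro y hy y' hy' h
        ext1 x
        obtain ⟨z, hz, m, hm⟩ := hA x x.2
        have hzz : τ y z = τ y' z := congrFun (congrFun h z) hz
        rw [← hτ y x, ← hτ y' x, ← hm, ← hit y hy z (hAS hz), ← hit y' hy' z (hAS hz), hzz]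
    rw [Finset.card_pi] at h1
    have h2 : ∏ x ∈ A, (Finset.univ.filter fun z => cycLen σ z = c x).card ≤
        2 ^ R * ∏ x ∈ A, cycCount σ (c x) := by
      calc ∏ x ∈ A, (Finset.univ.filter fun z => cycLen σ z = c x).card
          ≤ ∏ x ∈ A, (2 ^ c x * cycCount σ (c x)) :=
            Finset.prod_le_prod' fun x _ => card_cycLen_le σ (hc1 x)
        _ = 2 ^ (∑ x ∈ A, c x) * ∏ x ∈ A, cycCount σ (c x) := by
            rw [Finset.prod_mul_distrib, Finset.prod_pow_eq_pow_sum]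
        _ ≤ _ := by
            gcongr
            · norm_num
            · omega
    exact_mod_cast h1.trans h2
  have hsum : (n.descFactorial S.card : ℝ) * pr μ S id σ₀ = ∑ σ, μ σ * (T σ).card := by
    have h1 : ∀ y : S ↪ Fin n, pr μ S (τ y) (fun x => τ y (σ₀ x)) = pr μ S id σ₀ :=
      fun y => pr_conj hc S id σ₀ (τ y)
    have h2 : ∑ y : S ↪ Fin n, pr μ S (τ y) (fun x => τ y (σ₀ x)) =
        (n.descFactorial S.card : ℝ) * pr μ S id σ₀ := by
      simp only [h1, Finset.sum_const, nsmul_eq_mul, Finset.card_univ,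
        Fintype.card_embedding_eq, Fintype.card_fin, Fintype.card_coe]
    rw [← h2]
    unfold pr
    rw [Finset.sum_comm]
    refine Finset.sum_congr rfl fun σ _ => ?_
    simp only [hT, Finset.card_filter]
    push_cast
    rw [Finset.mul_sum]
    refine Finset.sum_congr rfl fun y _ => ?_
    rw [mul_ite, mul_one, mul_zero]
    exact ite_iff_congr Iff.rfl _ _
  have hdf : (n : ℝ) ^ S.card ≤ 2 ^ S.card * (n.descFactorial S.card : ℝ) := by
    have h1 := Nat.pow_sub_le_descFactorial n S.card
    have h2 : n ^ S.card ≤ 2 ^ S.card * (n + 1 - S.card) ^ S.card := by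
      rw [← mul_pow]
      apply Nat.pow_le_pow_left
      omega
    exact_mod_cast h2.trans (Nat.mul_le_mul_left _ h1)
  have hle : (n.descFactorial S.card : ℝ) * pr μ S id σ₀ ≤ 2 ^ R * K := by
    rw [hsum]
    calc ∑ σ, μ σ * (T σ).card ≤ ∑ σ, 2 ^ R * (μ σ * ∏ x ∈ A, (cycCount σ (c x) : ℝ)) := by
          refine Finset.sum_le_sum fun σ _ => ?_
          have := mul_le_mul_of_nonneg_left (hcount σ) (hμ σ)
          linarith
      _ = 2 ^ R * ∑ σ, μ σ * ∏ x ∈ A, (cycCount σ (c x) : ℝ) := by rw [Finset.mul_sum]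
      _ ≤ 2 ^ R * K := by
          gcongr
          exact hK.finset A c (fun x _ => hc1 x) (hAc.trans hSR)
  calc (n : ℝ) ^ S.card * pr μ S id σ₀
      ≤ 2 ^ S.card * (n.descFactorial S.card : ℝ) * pr μ S id σ₀ := by
        gcongr
        exact pr_nonneg hμ _ _ _
    _ = 2 ^ S.card * ((n.descFactorial S.card : ℝ) * pr μ S id σ₀) := by ring
    _ ≤ _ := by gcongr

/-- Upper bound for the probability of agreeing with `σ₀` on `S`, for arbitrary `S`. Path edges are
peeled off until a union of cycles remains, where `pr_invariant_le` applies; each peeling costs a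
factor `2 / n`. -/
lemma pr_perm_le {n : ℕ} {μ : Equiv.Perm (Fin n) → ℝ} (hμ : ∀ σ, 0 ≤ μ σ)
    (hc : ∀ τ σ, μ (τ⁻¹ * σ * τ) = μ σ) {R : ℕ} {K : ℝ} (hK : MomentBound μ R K)
    (hn : 4 * R ≤ n) (σ₀ : Equiv.Perm (Fin n)) :
    ∀ (e : ℕ) (S : Finset (Fin n)), S.card = e → e ≤ R →
      (n : ℝ) ^ S.card * pr μ S id σ₀ ≤ 2 ^ S.card * (2 ^ R * K) := by
  intro e
  induction e with
  | zero =>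
    intro S hSe _
    rw [Finset.card_eq_zero] at hSe
    exact pr_invariant_le hμ hc hK hn S σ₀ (by simp [hSe]) (by simp [hSe])
  | succ e ih =>
    intro S hSe heR
    by_cases hS : ∀ x ∈ S, σ₀ x ∈ S
    · exact pr_invariant_le hμ hc hK hn S σ₀ (by omega) hS
    push Not at hS
    obtain ⟨a, ha, hσa⟩ := hS
    set I := S.erase a with hI
    have haI : a ∉ I := Finset.notMem_erase a S
    have hins : insert a I = S := Finset.insert_erase ha
    have hIc : I.card = e := by
      rw [hI, Finset.card_erase_of_mem ha]
      omega
    set V := insert (id a) (I.image id ∪ I.image σ₀) with hV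
    have hVa : σ₀ a ∉ V := by
      simp only [hV, id, Finset.mem_insert, Finset.mem_union, Finset.mem_image, not_or, not_exists,
        not_and]
      refine ⟨fun h => hσa (by rwa [h]), ?_, ?_⟩
      · rintro x hx rfl
        exact hσa (Finset.mem_of_mem_erase hx)
      · intro x hx h
        rw [σ₀.injective h] at hx
        exact haI hx
    have hVc : V.card ≤ 2 * R := by
      have h1 := Finset.card_insert_le (id a) (I.image id ∪ I.image σ₀)
      rw [← hV] at h1
      have h2 := Finset.card_union_le (I.image id) (I.image σ₀)
      have h3 := Finset.card_image_le (s := I) (f := id)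
      have h4 := Finset.card_image_le (s := I) (f := σ₀)
      omega
    have hpeel := pr_peel hc I id σ₀ haI V hV hVa
    rw [hins] at hpeel
    have hnn : 0 ≤ ∑ y ∈ V, pr μ S id (Function.update σ₀ a y) :=
      Finset.sum_nonneg fun y _ => pr_nonneg hμ _ _ _
    have hp := pr_nonneg hμ S id σ₀
    have hVn : (V.card : ℝ) * 2 ≤ n := by
      have : V.card * 2 ≤ n := by omega
      exact_mod_cast this
    have hstep : (n : ℝ) * pr μ S id σ₀ ≤ 2 * pr μ I id σ₀ := by nlinarith
    have hi := ih I hIc (by omega)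
    rw [hIc] at hi
    rw [hSe]
    calc (n : ℝ) ^ (e + 1) * pr μ S id σ₀ = n ^ e * (n * pr μ S id σ₀) := by ring
      _ ≤ n ^ e * (2 * pr μ I id σ₀) := by gcongr
      _ = 2 * (n ^ e * pr μ I id σ₀) := by ring
      _ ≤ 2 * (2 ^ e * (2 ^ R * K)) := by gcongr
      _ = _ := by ring

/-! ### Asymptotics for patterns without cycles -/

/-- The bound of `pr_perm_le`, restated for patterns indexed by a finite set of edges. -/
lemma pr_le {n : ℕ} {ι : Type*} [DecidableEq ι] {μ : Equiv.Perm (Fin n) → ℝ}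
    {R : ℕ} {B : ℝ} (hB0 : 0 ≤ B)
    (hB : ∀ (S : Finset (Fin n)) (σ₀ : Equiv.Perm (Fin n)), S.card ≤ R →
      (n : ℝ) ^ S.card * pr μ S id σ₀ ≤ B) (I : Finset ι) (s t : ι → Fin n)
    (hs : Set.InjOn s I) (hI : I.card ≤ R) : (n : ℝ) ^ I.card * pr μ I s t ≤ B := by
  by_cases h : pr μ I s t = 0
  · simpa [h] using hB0
  · obtain ⟨σ₀, hσ₀⟩ := exists_of_pr_ne_zero h
    rw [pr_eq_of_mem μ I s t σ₀ hσ₀, ← Finset.card_image_of_injOn hs]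
    exact hB _ _ (Finset.card_image_le.trans hI)

/-- For a pattern without directed cycles, the probability is `n ^ (-e) (1 + O(1 / n))` with `e` the
number of edges. Each peeling step changes `n ^ e * pr μ I s t` by `O(1 / n)`, since the patterns in
which the freed endpoint falls back on the other points have bounded normalized probability. -/
lemma pr_acyclic {n : ℕ} (hn : 0 < n) {ι : Type*} [DecidableEq ι]
    {μ : Equiv.Perm (Fin n) → ℝ} (hμ : ∀ σ, 0 ≤ μ σ) (hsum : ∑ σ, μ σ = 1)
    (hc : ∀ τ σ, μ (τ⁻¹ * σ * τ) = μ σ) {R : ℕ} {B : ℝ} (hB0 : 0 ≤ B)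
    (hB : ∀ (S : Finset (Fin n)) (σ₀ : Equiv.Perm (Fin n)), S.card ≤ R →
      (n : ℝ) ^ S.card * pr μ S id σ₀ ≤ B) (s t : ι → Fin n) :
    ∀ (e : ℕ) (I : Finset ι), I.card = e → e ≤ R → Set.InjOn s I → Set.InjOn t I →
      (∀ J ⊆ I, J.Nonempty → ∃ a ∈ J, ∀ b ∈ J, t a ≠ s b) →
      |(n : ℝ) ^ e * pr μ I s t - 1| ≤ e * (2 * R * B / n) := by
  have hn' : (0 : ℝ) < n := by exact_mod_cast hn
  intro e
  induction e with
  | zero =>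
    intro I hI _ _ _ _
    rw [Finset.card_eq_zero] at hI
    subst hI
    simp [pr, hsum]
  | succ e ih =>
    intro I' hI' heR hs ht hac
    obtain ⟨a, ha, hab⟩ := hac I' subset_rfl (Finset.card_pos.1 (by omega))
    set I := I'.erase a with hI
    have haI : a ∉ I := Finset.notMem_erase a I'
    have hins : insert a I = I' := Finset.insert_erase ha
    have hII : I ⊆ I' := Finset.erase_subset _ _
    have hIc : I.card = e := by
      rw [hI, Finset.card_erase_of_mem ha]
      omega
    set V := insert (s a) (I.image s ∪ I.image t) with hV
    have hVa : t a ∉ V := by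
      simp only [hV, Finset.mem_insert, Finset.mem_union, Finset.mem_image, not_or, not_exists,
        not_and]
      refine ⟨hab a ha, fun x hx h => hab x (hII hx) h.symm, fun x hx h => ?_⟩
      rw [ht (hII hx) ha h] at hx
      exact haI hx
    have hVc : V.card ≤ 2 * R := by
      have h1 := Finset.card_insert_le (s a) (I.image s ∪ I.image t)
      rw [← hV] at h1
      have h2 := Finset.card_union_le (I.image s) (I.image t)
      have h3 := Finset.card_image_le (s := I) (f := s)
      have h4 := Finset.card_image_le (s := I) (f := t)
      omega
    have hVc' : (V.card : ℝ) ≤ 2 * R := by exact_mod_cast hVc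
    have hpeel := pr_peel hc I s t haI V hV hVa
    rw [hins] at hpeel
    have hbd : ∀ t' : ι → Fin n, (n : ℝ) ^ (e + 1) * pr μ I' s t' ≤ B := by
      intro t'
      rw [← hI']
      exact pr_le hB0 hB I' s t' hs (by omega)
    have hq0 : 0 ≤ (n : ℝ) ^ (e + 1) * ∑ y ∈ V, pr μ I' s (Function.update t a y) :=
      mul_nonneg (by positivity) (Finset.sum_nonneg fun y _ => pr_nonneg hμ _ _ _)
    have hq1 : (n : ℝ) ^ (e + 1) * ∑ y ∈ V, pr μ I' s (Function.update t a y) ≤ V.card * B := by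
      rw [Finset.mul_sum]
      calc _ ≤ ∑ y ∈ V, B := Finset.sum_le_sum fun y _ => hbd _
        _ = _ := by simp
    have hp0 : 0 ≤ (n : ℝ) ^ (e + 1) * pr μ I' s t :=
      mul_nonneg (by positivity) (pr_nonneg hμ _ _ _)
    have hp1 := hbd t
    set P := pr μ I' s t with hP
    set Q := ∑ y ∈ V, pr μ I' s (Function.update t a y) with hQ
    have hdiff : (n : ℝ) ^ (e + 1) * P - n ^ e * pr μ I s t =
        (V.card * (n ^ (e + 1) * P) - n ^ (e + 1) * Q) / n := by
      rw [← hpeel]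
      field_simp
      ring
    have hnum : |(V.card : ℝ) * (n ^ (e + 1) * P) - n ^ (e + 1) * Q| ≤ 2 * R * B := by
      have h1 : (V.card : ℝ) * B ≤ 2 * R * B := by gcongr
      have h2 : (V.card : ℝ) * (n ^ (e + 1) * P) ≤ V.card * B := by gcongr
      have h3 : 0 ≤ (V.card : ℝ) * (n ^ (e + 1) * P) := mul_nonneg (by positivity) hp0
      rw [abs_le]
      constructor <;> linarith
    have hd : |(n : ℝ) ^ (e + 1) * P - n ^ e * pr μ I s t| ≤ 2 * R * B / n := by
      rw [hdiff, abs_div, abs_of_pos hn']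
      gcongr
    have hi := ih I hIc (by omega) (hs.mono hII) (ht.mono hII)
      fun J hJ hJn => hac J (hJ.trans hII) hJn
    have := abs_add_le ((n : ℝ) ^ (e + 1) * P - n ^ e * pr μ I s t) (n ^ e * pr μ I s t - 1)
    rw [sub_add_sub_cancel] at this
    push_cast
    linarith

/-! ### Summation over closed walks -/

/-- The positions at which the cyclic word `L` uses the generator `j`. -/
def posn {r k : ℕ} [NeZero r] (L : ZMod r → Fin k × Bool) (j : Fin k) : Finset (ZMod r) :=
  Finset.univ.filter fun i => (L i).1 = j

lemma mem_posn {r k : ℕ} [NeZero r] (L : ZMod r → Fin k × Bool) (j : Fin k) (i : ZMod r) :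
    i ∈ posn L j ↔ (L i).1 = j := by
  simp [posn]

lemma sum_card_posn {r k : ℕ} [NeZero r] (L : ZMod r → Fin k × Bool) :
    ∑ j, (posn L j).card = r := by
  have := Finset.card_eq_sum_card_fiberwise (s := (Finset.univ : Finset (ZMod r)))
    (t := Finset.univ) (f := fun i => (L i).1) (fun _ _ => Finset.mem_univ _)
  rw [Finset.card_univ, ZMod.card] at this
  exact this.symm

/-- The probability that the closed walk `f` labelled by `L` is followed by independent random
permutations with weights `q j`. -/
def walkPr {r k n : ℕ} [NeZero r] (q : Fin k → Equiv.Perm (Fin n) → ℝ) (L : ZMod r → Fin k × Bool)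
    (f : ZMod r → Fin n) : ℝ :=
  ∏ j, pr (q j) (posn L j) (wsrc L f) (wtgt L f)

lemma walkPr_nonneg {r k n : ℕ} [NeZero r] {q : Fin k → Equiv.Perm (Fin n) → ℝ}
    (hq : ∀ j σ, 0 ≤ q j σ) (L : ZMod r → Fin k × Bool) (f : ZMod r → Fin n) :
    0 ≤ walkPr q L f :=
  Finset.prod_nonneg fun j _ => pr_nonneg (hq j) _ _ _

lemma walkPr_eq_sum {r k n : ℕ} [NeZero r] (q : Fin k → Equiv.Perm (Fin n) → ℝ)
    (L : ZMod r → Fin k × Bool) (f : ZMod r → Fin n) :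
    walkPr q L f = ∑ σ : Fin k → Equiv.Perm (Fin n),
      if ∀ i, (cond (L i).2 (σ (L i).1) (σ (L i).1)⁻¹) (f (i + 1)) = f i
        then ∏ j, q j (σ j) else 0 := by
  unfold walkPr pr
  rw [Finset.prod_univ_sum, Fintype.piFinset_univ]
  refine Finset.sum_congr rfl fun σ _ => ?_
  have h : ∀ i, ((cond (L i).2 (σ (L i).1) (σ (L i).1)⁻¹) (f (i + 1)) = f i ↔
      σ (L i).1 (wsrc L f i) = wtgt L f i) := by
    intro i
    unfold wsrc wtgt
    cases (L i).2
    · simp only [cond_false, Bool.false_eq_true, if_false]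
      rw [Equiv.Perm.inv_eq_iff_eq, eq_comm]
    · simp
  have hiff : (∀ j, ∀ i ∈ posn L j, σ j (wsrc L f i) = wtgt L f i) ↔
      ∀ i, (cond (L i).2 (σ (L i).1) (σ (L i).1)⁻¹) (f (i + 1)) = f i := by
    simp only [h, mem_posn]
    constructor
    · intro H i
      exact H _ i rfl
    · rintro H j i rfl
      exact H i
  by_cases H : ∀ j, ∀ i ∈ posn L j, σ j (wsrc L f i) = wtgt L f i
  · rw [if_pos (hiff.1 H)]
    exact Finset.prod_congr rfl fun j _ => if_pos (H j)
  · rw [if_neg (fun H' => H (hiff.2 H'))]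
    obtain ⟨j, hj⟩ := not_forall.1 H
    exact Finset.prod_eq_zero (Finset.mem_univ j) (if_neg hj)

lemma cycCount_one_s1 {n : ℕ} (τ : Equiv.Perm (Fin n)) :
    cycCount τ 1 = (Finset.univ.filter fun x => τ x = x).card := by
  unfold cycCount cycLen
  rw [Nat.div_one]
  congr 1
  ext x
  simp only [Finset.mem_filter, Finset.mem_univ, true_and]
  exact Function.minimalPeriod_eq_one_iff_isFixedPt

/-- The expected number of fixed points of `w(σ)` is the sum over all closed walks of their
probabilities. -/
lemma expectation_eq {k n : ℕ} (w : FreeGroup (Fin k)) [NeZero w.toWord.length]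
    (q : Fin k → Equiv.Perm (Fin n) → ℝ) :
    ∑ σ : Fin k → Equiv.Perm (Fin n),
        (∏ j, q j (σ j)) * (cycCount ((FreeGroup.lift σ) w) 1 : ℝ) =
      ∑ f, walkPr q (cyc w.toWord) f := by
  simp only [walkPr_eq_sum]
  rw [Finset.sum_comm]
  refine Finset.sum_congr rfl fun σ _ => ?_
  have h1 : FreeGroup.lift σ w = ((List.range w.toWord.length).map fun m : ℕ =>
      cond (cyc w.toWord m).2 (σ (cyc w.toWord m).1) (σ (cyc w.toWord m).1)⁻¹).prod := by
    conv_lhs => rw [← FreeGroup.mk_toWord (x := w), FreeGroup.lift_mk, ← map_cyc w.toWord,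
      List.map_map]
    rfl
  rw [cycCount_one_s1, h1, card_fixed_list_prod w.toWord.length
    (fun i => cond (cyc w.toWord i).2 (σ (cyc w.toWord i).1) (σ (cyc w.toWord i).1)⁻¹),
    Finset.card_filter]
  push_cast
  rw [Finset.mul_sum]
  refine Finset.sum_congr rfl fun f _ => ?_
  rw [mul_ite, mul_one, mul_zero]

/-- A non-injective walk visiting `v` vertices has probability `O(n ^ (-v - 1))`, because it uses at
least `v + 1` edges. -/
lemma walkPr_noninjective_le {r k n : ℕ} [NeZero r] (hn : 0 < n)
    {q : Fin k → Equiv.Perm (Fin n) → ℝ} (hq : ∀ j σ, 0 ≤ q j σ) (L : ZMod r → Fin k × Bool)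
    (hred : ∀ i, L (i + 1) ≠ invL (L i))
    (hprim : ∀ d : ZMod r, d ≠ 0 → ∃ i, L (i + d) ≠ L i) {B : ℝ} (hB0 : 0 ≤ B)
    (hB : ∀ j (S : Finset (Fin n)) (σ₀ : Equiv.Perm (Fin n)), S.card ≤ (posn L j).card →
      (n : ℝ) ^ S.card * pr (q j) S id σ₀ ≤ B)
    (f : ZMod r → Fin n) (hf : ¬ Function.Injective f) :
    walkPr q L f ≤ B ^ k / n * ((n : ℝ) ^ (Finset.univ.image f).card)⁻¹ := by
  have hn' : (0 : ℝ) < n := by exact_mod_cast hn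
  by_cases h0 : walkPr q L f = 0
  · rw [h0]
    positivity
  have hne : ∀ j, pr (q j) (posn L j) (wsrc L f) (wtgt L f) ≠ 0 := fun j =>
    Finset.prod_ne_zero_iff.1 h0 j (Finset.mem_univ j)
  choose σ hσ using fun j => exists_of_pr_ne_zero (hne j)
  have hcard := card_vertices_lt_card_edges L f σ hred hprim
    (fun i => hσ _ i ((mem_posn L _ i).2 rfl)) hf
  have hE : (Finset.univ.image fun i => ((L i).1, wsrc L f i)).card ≤
      ∑ j, ((posn L j).image (wsrc L f)).card := by
    rw [Finset.card_eq_sum_card_fiberwise (t := Finset.univ) (f := Prod.fst)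
      (fun _ _ => Finset.mem_univ _)]
    refine Finset.sum_le_sum fun j _ => ?_
    refine le_trans (Finset.card_le_card ?_)
      (Finset.card_image_le (s := (posn L j).image (wsrc L f)) (f := fun x => (j, x)))
    intro e he
    obtain ⟨he', rfl⟩ := Finset.mem_filter.1 he
    obtain ⟨i, -, rfl⟩ := Finset.mem_image.1 he'
    exact Finset.mem_image_of_mem _ (Finset.mem_image_of_mem _ ((mem_posn L _ i).2 rfl))
  have hpow : (n : ℝ) ^ ((Finset.univ.image f).card + 1) * walkPr q L f ≤ B ^ k := by
    calc (n : ℝ) ^ ((Finset.univ.image f).card + 1) * walkPr q L f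
        ≤ (n : ℝ) ^ (∑ j, ((posn L j).image (wsrc L f)).card) * walkPr q L f := by
          refine mul_le_mul_of_nonneg_right ?_ (walkPr_nonneg hq L f)
          exact pow_le_pow_right₀ (by exact_mod_cast hn) (hcard.trans hE)
      _ = ∏ j, ((n : ℝ) ^ ((posn L j).image (wsrc L f)).card *
            pr (q j) (posn L j) (wsrc L f) (wtgt L f)) := by
          rw [Finset.prod_mul_distrib, Finset.prod_pow_eq_pow_sum]
          rfl
      _ ≤ ∏ j : Fin k, B := by
          refine Finset.prod_le_prod (fun j _ => mul_nonneg (by positivity) (pr_nonneg (hq j) _ _ _))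
            fun j _ => ?_
          rw [pr_eq_of_mem (q j) (posn L j) _ _ (σ j) (hσ j)]
          exact hB j _ _ Finset.card_image_le
      _ = B ^ k := by simp
  rw [← div_eq_mul_inv, div_div, le_div_iff₀ (by positivity)]
  calc _ = (n : ℝ) ^ ((Finset.univ.image f).card + 1) * walkPr q L f := by ring
    _ ≤ _ := hpow

/-- Weighting each map by `n ^ (-v)`, where `v` is the size of its image, gives a total bounded
independently of `n`. -/
lemma sum_inv_card_image_le {r n : ℕ} [NeZero r] (hn : 0 < n) :
    ∑ f : ZMod r → Fin n, ((n : ℝ) ^ (Finset.univ.image f).card)⁻¹ ≤ (r + 1) * r ^ r := by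
  have hn' : (0 : ℝ) < n := by exact_mod_cast hn
  have hmaps : ∀ f ∈ (Finset.univ : Finset (ZMod r → Fin n)),
      (Finset.univ.image f).card ∈ Finset.range (r + 1) := by
    intro f _
    have := Finset.card_image_le (s := (Finset.univ : Finset (ZMod r))) (f := f)
    rw [Finset.card_univ, ZMod.card] at this
    rw [Finset.mem_range]
    omega
  rw [← Finset.sum_fiberwise_of_maps_to hmaps]
  have hv : ∀ v ∈ Finset.range (r + 1),
      ∑ f : ZMod r → Fin n with (Finset.univ.image f).card = v,
        ((n : ℝ) ^ (Finset.univ.image f).card)⁻¹ ≤ (r : ℝ) ^ r := by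
    intro v hv
    have hvr : v ≤ r := by
      rw [Finset.mem_range] at hv
      omega
    have h1 : (Finset.univ.filter fun f : ZMod r → Fin n => (Finset.univ.image f).card = v).card ≤
        n ^ v * r ^ r := by
      calc _ ≤ ((Finset.powersetCard v (Finset.univ : Finset (Fin n))).biUnion fun T =>
            Fintype.piFinset fun _ : ZMod r => T).card := by
            apply Finset.card_le_card
            intro f hf
            rw [Finset.mem_biUnion]
            refine ⟨Finset.univ.image f, ?_, ?_⟩
            · rw [Finset.mem_powersetCard]
              exact ⟨Finset.subset_univ _, (Finset.mem_filter.1 hf).2⟩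
            · rw [Fintype.mem_piFinset]
              exact fun i => Finset.mem_image_of_mem f (Finset.mem_univ i)
        _ ≤ ∑ T ∈ Finset.powersetCard v (Finset.univ : Finset (Fin n)),
            (Fintype.piFinset fun _ : ZMod r => T).card := Finset.card_biUnion_le
        _ = ∑ T ∈ Finset.powersetCard v (Finset.univ : Finset (Fin n)), v ^ r := by
            refine Finset.sum_congr rfl fun T hT => ?_
            rw [Fintype.card_piFinset, Finset.prod_const, (Finset.mem_powersetCard.1 hT).2,
              Finset.card_univ, ZMod.card]
        _ = n.choose v * v ^ r := by simp
        _ ≤ n ^ v * r ^ r := Nat.mul_le_mul (Nat.choose_le_pow n v) (Nat.pow_le_pow_left hvr r)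
    calc _ = ∑ f : ZMod r → Fin n with (Finset.univ.image f).card = v, ((n : ℝ) ^ v)⁻¹ :=
          Finset.sum_congr rfl fun f hf => by rw [(Finset.mem_filter.1 hf).2]
      _ = (Finset.univ.filter fun f : ZMod r → Fin n => (Finset.univ.image f).card = v).card *
          ((n : ℝ) ^ v)⁻¹ := by rw [Finset.sum_const, nsmul_eq_mul]
      _ ≤ ((n : ℝ) ^ v * (r : ℝ) ^ r) * ((n : ℝ) ^ v)⁻¹ := by
          gcongr
          exact_mod_cast h1
      _ = (r : ℝ) ^ r := by field_simp
  refine (Finset.sum_le_sum hv).trans ?_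
  simp

/-- An injective walk has probability `n ^ (-r) (1 + O(1 / n))`. -/
lemma walkPr_injective {r k n : ℕ} [NeZero r] (hn : 0 < n)
    {q : Fin k → Equiv.Perm (Fin n) → ℝ} (hq : ∀ j σ, 0 ≤ q j σ) (hsum : ∀ j, ∑ σ, q j σ = 1)
    (hc : ∀ j τ σ, q j (τ⁻¹ * σ * τ) = q j σ) (L : ZMod r → Fin k × Bool)
    (hred : ∀ i, L (i + 1) ≠ invL (L i)) (hall : ∀ j, ∃ i, (L i).1 ≠ j)
    {B : ℝ} (hB0 : 0 ≤ B)
    (hB : ∀ j (S : Finset (Fin n)) (σ₀ : Equiv.Perm (Fin n)), S.card ≤ (posn L j).card →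
      (n : ℝ) ^ S.card * pr (q j) S id σ₀ ≤ B) {δ : ℝ} (hδ : δ = r * (2 * r * B / n))
    (hδ1 : δ ≤ 1) (f : ZMod r → Fin n) (hf : Function.Injective f) :
    (1 - δ) ^ k ≤ (n : ℝ) ^ r * walkPr q L f ∧ (n : ℝ) ^ r * walkPr q L f ≤ (1 + δ) ^ k := by
  have hfac : ∀ j, |(n : ℝ) ^ (posn L j).card * pr (q j) (posn L j) (wsrc L f) (wtgt L f) - 1|
      ≤ δ := by
    intro j
    have h1 := pr_acyclic hn (hq j) (hsum j) (hc j) hB0 (hB j) (wsrc L f) (wtgt L f) _ (posn L j)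
      rfl le_rfl
      (fun i hi i' hi' h => wsrc_inj L f hf hred
        (((mem_posn L j i).1 hi).trans ((mem_posn L j i').1 hi').symm) h)
      (fun i hi i' hi' h => wtgt_inj L f hf hred
        (((mem_posn L j i).1 hi).trans ((mem_posn L j i').1 hi').symm) h)
      (fun J hJ hJn => walk_acyclic L f hf j (hall j) J hJn fun i hi => (mem_posn L j i).1 (hJ hi))
    refine h1.trans ?_
    have hle : ((posn L j).card : ℝ) ≤ r := by
      have := Finset.single_le_sum (f := fun j => (posn L j).card) (fun _ _ => Nat.zero_le _)
        (Finset.mem_univ j)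
      rw [sum_card_posn] at this
      exact_mod_cast this
    rw [hδ]
    gcongr
  have heq : (n : ℝ) ^ r * walkPr q L f =
      ∏ j, ((n : ℝ) ^ (posn L j).card * pr (q j) (posn L j) (wsrc L f) (wtgt L f)) := by
    rw [Finset.prod_mul_distrib, Finset.prod_pow_eq_pow_sum, sum_card_posn]
    rfl
  rw [heq]
  constructor
  · calc (1 - δ) ^ k = ∏ j : Fin k, (1 - δ) := by simp
      _ ≤ _ := Finset.prod_le_prod (fun _ _ => by linarith) fun j _ => by
          have := (abs_le.1 (hfac j)).1
          linarith
  · calc _ ≤ ∏ j : Fin k, (1 + δ) := Finset.prod_le_prod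
          (fun j _ => mul_nonneg (by positivity) (pr_nonneg (hq j) _ _ _)) fun j _ => by
          have := (abs_le.1 (hfac j)).2
          linarith
      _ = _ := by simp

/-- Two-sided bound for the expected number of fixed points, with `δ = O(1 / n)`: the injective walks
give the main term, the non-injective ones the error term `O(1 / n)`. -/
lemma expectation_bounds {r k n : ℕ} [NeZero r] (hn : 0 < n)
    {q : Fin k → Equiv.Perm (Fin n) → ℝ} (hq : ∀ j σ, 0 ≤ q j σ) (hsum : ∀ j, ∑ σ, q j σ = 1)
    (hc : ∀ j τ σ, q j (τ⁻¹ * σ * τ) = q j σ) (L : ZMod r → Fin k × Bool)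
    (hred : ∀ i, L (i + 1) ≠ invL (L i)) (hall : ∀ j, ∃ i, (L i).1 ≠ j)
    (hprim : ∀ d : ZMod r, d ≠ 0 → ∃ i, L (i + d) ≠ L i)
    {B : ℝ} (hB0 : 0 ≤ B)
    (hB : ∀ j (S : Finset (Fin n)) (σ₀ : Equiv.Perm (Fin n)), S.card ≤ (posn L j).card →
      (n : ℝ) ^ S.card * pr (q j) S id σ₀ ≤ B) {δ : ℝ} (hδ : δ = r * (2 * r * B / n))
    (hδ1 : δ ≤ 1) :
    (n.descFactorial r : ℝ) / n ^ r * (1 - δ) ^ k ≤ ∑ f, walkPr q L f ∧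
      ∑ f, walkPr q L f ≤
        (n.descFactorial r : ℝ) / n ^ r * (1 + δ) ^ k + B ^ k / n * ((r + 1) * r ^ r) := by
  classical
  have hn' : (0 : ℝ) < n := by exact_mod_cast hn
  have hinj : (Finset.univ.filter fun f : ZMod r → Fin n => Function.Injective f).card =
      n.descFactorial r := by
    rw [← Fintype.card_subtype, Fintype.card_congr (Equiv.subtypeInjectiveEquivEmbedding _ _),
      Fintype.card_embedding_eq, Fintype.card_fin, ZMod.card]
  have hb := fun f hf => walkPr_injective hn hq hsum hc L hred hall hB0 hB hδ hδ1 f hf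
  rw [← Finset.sum_filter_add_sum_filter_not Finset.univ
    (fun f : ZMod r → Fin n => Function.Injective f)]
  constructor
  · have h2 : 0 ≤ ∑ f : ZMod r → Fin n with ¬ Function.Injective f, walkPr q L f :=
      Finset.sum_nonneg fun f _ => walkPr_nonneg hq L f
    have h1 : (n.descFactorial r : ℝ) / n ^ r * (1 - δ) ^ k ≤
        ∑ f : ZMod r → Fin n with Function.Injective f, walkPr q L f := by
      calc _ = ∑ f : ZMod r → Fin n with Function.Injective f, (1 - δ) ^ k / n ^ r := by
            rw [Finset.sum_const, hinj, nsmul_eq_mul]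
            ring
        _ ≤ _ := Finset.sum_le_sum fun f hf => by
            rw [div_le_iff₀ (by positivity), mul_comm]
            exact (hb f (Finset.mem_filter.1 hf).2).1
    linarith
  · apply add_le_add
    · calc _ ≤ ∑ f : ZMod r → Fin n with Function.Injective f, (1 + δ) ^ k / n ^ r :=
          Finset.sum_le_sum fun f hf => by
            rw [le_div_iff₀ (by positivity), mul_comm]
            exact (hb f (Finset.mem_filter.1 hf).2).2
        _ = _ := by
            rw [Finset.sum_const, hinj, nsmul_eq_mul]
            ring
    · calc _ ≤ ∑ f : ZMod r → Fin n with ¬ Function.Injective f,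
              B ^ k / n * ((n : ℝ) ^ (Finset.univ.image f).card)⁻¹ :=
            Finset.sum_le_sum fun f hf =>
              walkPr_noninjective_le hn hq L hred hprim hB0 hB f (Finset.mem_filter.1 hf).2
        _ ≤ ∑ f : ZMod r → Fin n, B ^ k / n * ((n : ℝ) ^ (Finset.univ.image f).card)⁻¹ :=
            Finset.sum_le_sum_of_subset_of_nonneg (Finset.subset_univ _) fun _ _ _ => by positivity
        _ ≤ _ := by
            rw [← Finset.mul_sum]
            gcongr
            exact sum_inv_card_image_le hn

/-! ### Passage to the limit -/

/-- Only finitely many tuples of positive integers have sum at most `R`, so the moment hypotheses give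
one bound, valid for all of them, from some `n` on. -/
lemma exists_momentBound (p : (n : ℕ) → Equiv.Perm (Fin n) → ℝ) (R : ℕ)
    (hmom : ∀ (m : ℕ) (c : Fin m → ℕ), (∀ i, 1 ≤ c i) → (∑ i, c i) ≤ R →
      ∃ C : ℝ, ∀ᶠ n in atTop,
        (∑ σ : Equiv.Perm (Fin n), p n σ * ∏ i, (cycCount σ (c i) : ℝ)) ≤ C) :
    ∃ K : ℝ, ∀ᶠ n in atTop, MomentBound (p n) R K := by
  have h1 : ∀ a : (m : Fin (R + 1)) × (Fin m → Fin (R + 1)), ∃ C : ℝ, ∀ᶠ n in atTop,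
      (∀ i, 1 ≤ (a.2 i : ℕ)) → (∑ i, (a.2 i : ℕ)) ≤ R →
        (∑ σ : Equiv.Perm (Fin n), p n σ * ∏ i, (cycCount σ (a.2 i) : ℝ)) ≤ C := by
    intro a
    by_cases h : (∀ i, 1 ≤ (a.2 i : ℕ)) ∧ (∑ i, (a.2 i : ℕ)) ≤ R
    · obtain ⟨C, hC⟩ := hmom _ (fun i => (a.2 i : ℕ)) h.1 h.2
      exact ⟨C, hC.mono fun n hn _ _ => hn⟩
    · exact ⟨0, Eventually.of_forall fun n h2 h3 => absurd ⟨h2, h3⟩ h⟩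
  choose C hC using h1
  refine ⟨∑ a, |C a|, ?_⟩
  filter_upwards [eventually_all.2 hC] with n hn
  intro m c hc hcR
  have hm : m < R + 1 := by
    have : ∑ i : Fin m, 1 ≤ ∑ i, c i := Finset.sum_le_sum fun i _ => hc i
    simp at this
    omega
  have hci : ∀ i, c i < R + 1 := by
    intro i
    have := Finset.single_le_sum (f := c) (fun _ _ => Nat.zero_le _) (Finset.mem_univ i)
    omega
  refine (hn ⟨⟨m, hm⟩, fun i => ⟨c i, hci i⟩⟩ hc hcR).trans ?_
  exact (le_abs_self _).trans
    (Finset.single_le_sum (f := fun a => |C a|) (fun _ _ => abs_nonneg _) (Finset.mem_univ _))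

/-- If `w ∈ F_k` is not a proper power, nontrivial, with first and last letters of its
reduced form using different generators, and `σ_{1,n},…,σ_{k,n}` are independent
conjugation-invariant random permutations with finite limsup of the small-cycle joint
moments (for `∑ c_i ≤ r_j`), then `E(#_1(w(σ_{1,n},…,σ_{k,n}))) → 1`. -/
theorem word_fixed_point_expectation_not_power
    {k : ℕ} (w : FreeGroup (Fin k))
    (hw : w ≠ 1)
    (hpow : ¬ ∃ (Ω' : FreeGroup (Fin k)) (e : ℕ), 2 ≤ e ∧ w = Ω' ^ e)
    (hends : ∀ a b : Fin k × Bool, w.toWord.head? = some a →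
      w.toWord.getLast? = some b → a.1 ≠ b.1)
    (p : (n : ℕ) → Fin k → Equiv.Perm (Fin n) → ℝ)
    (hpos : ∀ n j σ, 0 ≤ p n j σ)
    (hsum : ∀ n j, ∑ σ, p n j σ = 1)
    (hconj : ∀ n (j : Fin k) (τ σ : Equiv.Perm (Fin n)), p n j (τ⁻¹ * σ * τ) = p n j σ)
    (hmom : ∀ j : Fin k, ∀ (m : ℕ) (c : Fin m → ℕ), (∀ i, 1 ≤ c i) →
      (∑ i, c i) ≤ (w.toWord.map Prod.fst).count j →
      ∃ C : ℝ, ∀ᶠ n in atTop,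
        (∑ σ : Equiv.Perm (Fin n), p n j σ * ∏ i, (cycCount σ (c i) : ℝ)) ≤ C) :
    Tendsto (fun n => ∑ σ : Fin k → Equiv.Perm (Fin n),
        (∏ j, p n j (σ j)) * (cycCount ((FreeGroup.lift σ) w) 1 : ℝ))
      atTop (nhds 1) := by
  have hlen : w.toWord.length ≠ 0 := by
    rw [Ne, List.length_eq_zero_iff, FreeGroup.toWord_eq_nil_iff]
    exact hw
  have : NeZero w.toWord.length := ⟨hlen⟩
  set r := w.toWord.length with hr
  set L : ZMod r → Fin k × Bool := cyc w.toWord with hL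
  have hred : ∀ i, L (i + 1) ≠ invL (L i) := cyc_reduced w hends
  have hall : ∀ j, ∃ i, (L i).1 ≠ j := cyc_not_all w hends
  have hprim : ∀ d : ZMod r, d ≠ 0 → ∃ i, L (i + d) ≠ L i := cyc_primitive w hpow
  have hcount : ∀ j, (w.toWord.map Prod.fst).count j = (posn L j).card :=
    count_eq_card_cyc w.toWord
  have hposr : ∀ j, (posn L j).card ≤ r := by
    intro j
    have := Finset.single_le_sum (f := fun j => (posn L j).card) (fun _ _ => Nat.zero_le _)
      (Finset.mem_univ j)
    rwa [sum_card_posn] at this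
  choose K hK using fun j => exists_momentBound (fun n => p n j) (posn L j).card
    (fun m c h1 h2 => hmom j m c h1 (by rw [hcount]; exact h2))
  -- one constant for all generators; absolute values because the moment bounds `K j` are arbitrary reals
  set B : ℝ := ∑ j, 2 ^ r * (2 ^ r * |K j|) with hBdef
  have hB0 : 0 ≤ B := Finset.sum_nonneg fun j _ => by positivity
  set δ : ℕ → ℝ := fun n => r * (2 * r * B / n) with hδ
  have hδ0 : Tendsto δ atTop (nhds 0) := by
    have := (tendsto_const_div_atTop_nhds_zero_nat (2 * r * B)).const_mul (r : ℝ)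
    simpa using this
  have hδ1 : ∀ᶠ n in atTop, δ n ≤ 1 := hδ0.eventually_le_const one_pos
  have hbounds : ∀ᶠ n in atTop,
      (n.descFactorial r : ℝ) / n ^ r * (1 - δ n) ^ k ≤ ∑ f, walkPr (p n) L f ∧
      ∑ f, walkPr (p n) L f ≤ (n.descFactorial r : ℝ) / n ^ r * (1 + δ n) ^ k +
        B ^ k / n * ((r + 1) * r ^ r) := by
    filter_upwards [eventually_all.2 hK, hδ1, eventually_gt_atTop 0, eventually_ge_atTop (4 * r)]
      with n hKn hδn hn hn4
    refine expectation_bounds hn (hpos n) (hsum n) (hconj n) L hred hall hprim hB0 ?_ rfl hδn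
    intro j S σ₀ hS
    have hj := hposr j
    calc (n : ℝ) ^ S.card * pr (p n j) S id σ₀
        ≤ 2 ^ S.card * (2 ^ (posn L j).card * K j) :=
          pr_perm_le (hpos n j) (hconj n j) (hKn j) (by omega) σ₀ _ S rfl hS
      _ ≤ 2 ^ S.card * (2 ^ (posn L j).card * |K j|) := by
          gcongr
          exact le_abs_self _
      _ ≤ 2 ^ r * (2 ^ r * |K j|) :=
          mul_le_mul (pow_le_pow_right₀ one_le_two (hS.trans hj))
            (mul_le_mul_of_nonneg_right (pow_le_pow_right₀ one_le_two hj) (abs_nonneg _))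
            (by positivity) (by positivity)
      _ ≤ B := Finset.single_le_sum (f := fun j => (2 : ℝ) ^ r * (2 ^ r * |K j|))
          (fun _ _ => by positivity) (Finset.mem_univ j)
  have hdf : Tendsto (fun n : ℕ => (n.descFactorial r : ℝ) / n ^ r) atTop (nhds 1) := by
    refine (Asymptotics.isEquivalent_iff_tendsto_one ?_).1 (isEquivalent_descFactorial r)
    filter_upwards [eventually_gt_atTop 0] with n hn
    positivity
  have hlow : Tendsto (fun n : ℕ => (n.descFactorial r : ℝ) / n ^ r * (1 - δ n) ^ k) atTop
      (nhds 1) := by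
    have := hdf.mul ((hδ0.const_sub 1).pow k)
    simpa using this
  have hupp : Tendsto (fun n : ℕ => (n.descFactorial r : ℝ) / n ^ r * (1 + δ n) ^ k +
      B ^ k / n * ((r + 1) * r ^ r)) atTop (nhds 1) := by
    have := (hdf.mul ((hδ0.const_add 1).pow k)).add
      ((tendsto_const_div_atTop_nhds_zero_nat (B ^ k)).mul_const (((r : ℝ) + 1) * r ^ r))
    simpa using this
  simp only [expectation_eq]
  exact tendsto_of_tendsto_of_tendsto_of_le_of_le' hlow hupp
    (hbounds.mono fun n h => h.1) (hbounds.mono fun n h => h.2)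
end
end
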